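/- Let (u, π, v, θ) be a smooth solution of the 3D stationary tropical climate model on ℝ³. Suppose p ∈ [3, 9/2], q, r ∈ [1, 6], α ∈ [0, 3/p − 2/3], β ∈ [0, 3/q − 1/2], γ ∈ [0, 3/r − 1/2]. Assume there exists a strictly increasing sequence R_j → +∞ such that X_{α,p,R_j} → 0 as j → ∞ and the sequences (Y_{β,q,R_j})_j and (Z̄_{γ,r,R_j})_j are bounded. Assume moreover that (with p' = p/(p−1)) one of the following nine conditions holds: (A1) q, r ∈ [1,2), α + ((4p−6)q)/((6−q)p)·β ≤ 1, α + ((4p−6)r)/((6−r)p)·γ ≤ 1, (2q/(6−q))β + (2r/(6−r))γ ≤ 1; (A2) q ∈ [1,2), r ∈ [2, 2p'), α + ((4p−6)q)/((6−q)p)·β ≤ 1, α + ((4p−6)r)/((6−r)p)·γ ≤ 1, (2q/(6−q))β + γ ≤ (6−r)/(2r); (A3) q ∈ [1,2), r ∈ [2p', 6], α + ((4p−6)q)/((6−q)p)·β ≤ 1, α + 2γ ≤ 3/p + 6/r − 2, (2q/(6−q))β + γ ≤ (6−r)/(2r); (A4) q ∈ [2, 2p'), r ∈ [1,2), α + ((4p−6)q)/((6−q)p)·β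 ≤ 1, α + ((4p−6)r)/((6−r)p)·γ ≤ 1, β + (2r/(6−r))γ ≤ (6−q)/(2q); (A5) q, r ∈ [2, 2p'), α + ((4p−6)q)/((6−q)p)·β ≤ 1, α + ((4p−6)r)/((6−r)p)·γ ≤ 1, β + γ < 3/q + 3/r − 2; (A6) q ∈ [2, 2p'), r ∈ [2p', 6], α + ((4p−6)q)/((6−q)p)·β ≤ 1, α + 2γ ≤ 3/p + 6/r − 2, β + γ < 3/q + 3/r − 2; (A7) q ∈ [2p', 6], r ∈ [1,2), α + 2β ≤ 3/p + 6/q − 2, α + ((4p−6)r)/((6−r)p)·γ ≤ 1, β + (2r/(6−r))γ ≤ (6−q)/(2q); (A8) q ∈ [2p', 6], r ∈ [2, 2p'), α + 2β ≤ 3/p + 6/q − 2, α + ((4p−6)r)/((6−r)p)·γ ≤ 1, β + γ < 3/q + 3/r − 2; (A9) q, r ∈ [2p', 6], α + 2β ≤ 3/p + 6/q − 2, α + 2γ ≤ 3/p + 6/r − 2, β + γ < 3/q + 3/r − 2. Then u = 0 and v = 0 on ℝ³, and θ is a constant function. -/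

import Mathlib

/-!
The proof is a Caccioppoli-type argument on the annuli `B_{2R} \ B_R`. After the change of variables
`x ↦ R x` the solution, with `θ` replaced by `θ - θ̄_R`, solves the same system with viscosity `1/R`
(`NuSol`, `nuSol_scale`), and everything takes place on the fixed shells `At t = B_t \ B_1`,
`1.6 ≤ t ≤ 1.9`.

*Energy.* Multiplying the equations by `u`, `v`, `θ`, the coupling terms combine to the divergence of
`v (u · v + θ)`. Testing with a cutoff bounds the Dirichlet integral over `B_s` by norms over `At t`
(`energy_ineq`), provided the term `∫ π u · ∇φ` is controlled.

*Pressure.* Since `u · ∇φ` has mean zero and `-Δπ = ∂ᵢ∂ⱼ(uᵢuⱼ + vᵢvⱼ)`, that term is bounded by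
`‖u‖_p ‖|u|² + |v|²‖_{p'}` plus a viscous term (`press_est`). The test function is written as the
Laplacian of a compactly supported potential (`pot`, an average over dilations of a bump function)
plus a mollification. The Laplacian part needs the `L^p` boundedness of the double Riesz transforms
(`riesz_Lp`), which is obtained from monotonicity of a Bellman function along the heat flow
(`bell_hess`, `flow`, `riesz_bell`). In the mollified part the pressure is smooth, and its gradient is
bounded through the equation for `u` (`NuSol.press_moll_grad`).

*Interpolation and iteration.* The norms of `v` and `θ` in the energy inequality are interpolated
between the growth bounds and `L^6` (`nr_bound`); the exponent conditions, which all nine cases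
satisfy (`Exps`, `exps_of`), make every power of `R` nonpositive, with a sublinear power of the `L^6`
norm. The Sobolev inequality (`sobolev`) and the iteration lemma `iter` absorb it, so that `v` and
`θ - θ̄_R` are bounded in `L^6(B_{1.6 R})` uniformly along the sequence (`unif_bound`).

*Limit.* Hence `v` and `θ - c` are in `L^6(ℝ³)` for some constant `c`, and their `L^6` norms over the
annuli tend to zero. Every term on the right of the energy inequality then tends to zero: it contains
`X_{α,p,R}`, a positive power of such a norm, or a strictly negative power of `R`. So `u`, `v`, `θ`
are constant (`core`), and the growth conditions give `u = 0` and `v = 0`.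
-/

open MeasureTheory Metric Filter
open scoped ENNReal NNReal

noncomputable section

/-- Euclidean `ℝ³`. -/
abbrev E3 := EuclideanSpace ℝ (Fin 3)

/-- The annulus `B_{2R} \ B_R` centered at the origin. -/
def Ann (R : ℝ) : Set E3 := ball (0 : E3) (2 * R) \ ball (0 : E3) R

/-- Mean value of `θ` over the annulus `B_{2R} \ B_R`. -/
def thetaBar (θ : E3 → ℝ) (R : ℝ) : ℝ := ⨍ x in Ann R, θ x

/-- `L^p` norm (with real exponent `p`) of `f` over the set `s`, valued in `ℝ≥0∞`. -/
def LpS {F : Type*} [NormedAddCommGroup F] (f : E3 → F) (p : ℝ) (s : Set E3) : ℝ≥0∞ :=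
  eLpNorm f (ENNReal.ofReal p) (volume.restrict s)

/-- Partial derivative `∂_j f` of a scalar function on `ℝ³`. -/
def pd3 (j : Fin 3) (f : E3 → ℝ) (x : E3) : ℝ :=
  fderiv ℝ f x (EuclideanSpace.single j 1)

/-- Laplacian `Δ f = Σ_j ∂_j ∂_j f` of a scalar function on `ℝ³`. -/
def lap3 (f : E3 → ℝ) (x : E3) : ℝ := ∑ j : Fin 3, pd3 j (pd3 j f) x

/-- `(u, pr, v, θ)` is a smooth solution of the 3D stationary tropical climate model. -/
structure IsTCMSolution (u : E3 → E3) (pr : E3 → ℝ) (v : E3 → E3) (θ : E3 → ℝ) : Prop where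
  smooth_u : ContDiff ℝ (⊤ : ℕ∞) u
  smooth_pr : ContDiff ℝ (⊤ : ℕ∞) pr
  smooth_v : ContDiff ℝ (⊤ : ℕ∞) v
  smooth_θ : ContDiff ℝ (⊤ : ℕ∞) θ
  eq_u : ∀ x : E3, ∀ i : Fin 3,
    -lap3 (fun y => u y i) x + (∑ j : Fin 3, u x j * pd3 j (fun y => u y i) x)
      + pd3 i pr x + (∑ j : Fin 3, pd3 j (fun y => v y j * v y i) x) = 0
  eq_v : ∀ x : E3, ∀ i : Fin 3,
    -lap3 (fun y => v y i) x + (∑ j : Fin 3, u x j * pd3 j (fun y => v y i) x)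
      + pd3 i θ x + (∑ j : Fin 3, v x j * pd3 j (fun y => u y i) x) = 0
  eq_θ : ∀ x : E3,
    -lap3 θ x + (∑ j : Fin 3, u x j * pd3 j θ x) + (∑ j : Fin 3, pd3 j (fun y => v y j) x) = 0
  div_u : ∀ x : E3, ∑ j : Fin 3, pd3 j (fun y => u y j) x = 0

/-- `X_{α,p,R} = R^{-α} ‖u‖_{L^p(B_{2R} \ B_R)}`. -/
def Xn (u : E3 → E3) (α p R : ℝ) : ℝ≥0∞ := ENNReal.ofReal (R ^ (-α)) * LpS u p (Ann R)

/-- `Y_{β,q,R} = R^{-β} ‖v‖_{L^q(B_{2R} \ B_R)}`. -/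
def Yn (v : E3 → E3) (β q R : ℝ) : ℝ≥0∞ := ENNReal.ofReal (R ^ (-β)) * LpS v q (Ann R)

/-- `Z̄_{γ,r,R} = R^{-γ} ‖θ - θ̄_R‖_{L^r(B_{2R} \ B_R)}`. -/
def Zbarn (θ : E3 → ℝ) (γ r R : ℝ) : ℝ≥0∞ :=
  ENNReal.ofReal (R ^ (-γ)) * LpS (fun x => θ x - thetaBar θ R) r (Ann R)

/-- `Z'_{γ,λ,R} = R^{-γ} ‖∇θ‖_{L^λ(B_{2R} \ B_R)}`. -/
def Zgradn (θ : E3 → ℝ) (γ lam R : ℝ) : ℝ≥0∞ :=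
  ENNReal.ofReal (R ^ (-γ)) * LpS (gradient θ) lam (Ann R)

namespace TCM

/-! ### Calculus for scalar functions on `ℝ³` -/

/-- Smooth scalar functions on `ℝ³`. -/
abbrev Smooth (f : E3 → ℝ) : Prop := ContDiff ℝ (⊤ : ℕ∞) f

/-- Test functions: smooth with compact support. -/
structure Tst (f : E3 → ℝ) : Prop where
  smooth : Smooth f
  cpt : HasCompactSupport f

/-- The standard basis vector `e_j` of `ℝ³`. -/
abbrev ee (j : Fin 3) : E3 := EuclideanSpace.single j (1 : ℝ)

lemma Smooth.diff {f : E3 → ℝ} (hf : Smooth f) : Differentiable ℝ f :=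
  hf.differentiable (by simp)

lemma Smooth.diffAt {f : E3 → ℝ} (hf : Smooth f) (x : E3) : DifferentiableAt ℝ f x :=
  hf.diff x

lemma Smooth.cont {f : E3 → ℝ} (hf : Smooth f) : Continuous f := hf.continuous

lemma Smooth.fderiv {f : E3 → ℝ} (hf : Smooth f) : ContDiff ℝ (⊤ : ℕ∞) (fderiv ℝ f) :=
  ContDiff.fderiv_right hf (by norm_cast)

lemma Smooth.pd {f : E3 → ℝ} (hf : Smooth f) (j : Fin 3) : Smooth (pd3 j f) :=
  (Smooth.fderiv hf).clm_apply contDiff_const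

lemma Smooth.lap {f : E3 → ℝ} (hf : Smooth f) : Smooth (lap3 f) := by
  unfold lap3
  exact ContDiff.sum fun j _ => (hf.pd j).pd j

lemma pd3_cpt {f : E3 → ℝ} (hf : HasCompactSupport f) (j : Fin 3) :
    HasCompactSupport (pd3 j f) := hf.fderiv_apply ℝ (ee j)

lemma Tst.pd {f : E3 → ℝ} (hf : Tst f) (j : Fin 3) : Tst (pd3 j f) :=
  ⟨hf.1.pd j, pd3_cpt hf.2 j⟩

lemma Tst.add {f g : E3 → ℝ} (hf : Tst f) (hg : Tst g) : Tst (fun x => f x + g x) :=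
  ⟨hf.1.add hg.1, hf.2.add hg.2⟩

lemma Tst.mul_left {f g : E3 → ℝ} (hf : Tst f) (hg : Smooth g) : Tst (fun x => g x * f x) :=
  ⟨hg.mul hf.1, hf.2.mul_left⟩

lemma Tst.mul_right {f g : E3 → ℝ} (hf : Tst f) (hg : Smooth g) : Tst (fun x => f x * g x) :=
  ⟨hf.1.mul hg, hf.2.mul_right⟩

lemma Tst.sum {ι : Type*} (s : Finset ι) {f : ι → E3 → ℝ} (hf : ∀ i ∈ s, Tst (f i)) :
    Tst (fun x => ∑ i ∈ s, f i x) := by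
  classical
  induction s using Finset.induction_on with
  | empty =>
    exact ⟨by simpa using contDiff_const, by
      simpa using! (HasCompactSupport.zero : HasCompactSupport (0 : E3 → ℝ))⟩
  | insert a s ha ih =>
    have := (hf a (by simp)).add (ih fun i hi => hf i (by simp [hi]))
    simpa [Finset.sum_insert ha] using this

lemma Tst.lap {f : E3 → ℝ} (hf : Tst f) : Tst (lap3 f) :=
  Tst.sum _ fun j _ => (hf.pd j).pd j

lemma Tst.integrable {f : E3 → ℝ} (hf : Tst f) : Integrable f :=
  hf.1.cont.integrable_of_hasCompactSupport hf.2

lemma Tst.bdd {f : E3 → ℝ} (hf : Tst f) : ∃ C : ℝ, 0 ≤ C ∧ ∀ x, |f x| ≤ C := by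
  obtain ⟨C, hC⟩ := hf.2.exists_bound_of_continuous hf.1.cont
  exact ⟨C, (norm_nonneg _).trans (hC 0), hC⟩

lemma pd3_add {f g : E3 → ℝ} (j : Fin 3) {x : E3} (hf : DifferentiableAt ℝ f x)
    (hg : DifferentiableAt ℝ g x) :
    pd3 j (fun y => f y + g y) x = pd3 j f x + pd3 j g x := by
  simp [pd3, fderiv_fun_add hf hg]

lemma pd3_sub {f g : E3 → ℝ} (j : Fin 3) {x : E3} (hf : DifferentiableAt ℝ f x)
    (hg : DifferentiableAt ℝ g x) :
    pd3 j (fun y => f y - g y) x = pd3 j f x - pd3 j g x := by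
  simp [pd3, fderiv_fun_sub hf hg]

lemma pd3_mul {f g : E3 → ℝ} (j : Fin 3) {x : E3} (hf : DifferentiableAt ℝ f x)
    (hg : DifferentiableAt ℝ g x) :
    pd3 j (fun y => f y * g y) x = pd3 j f x * g x + f x * pd3 j g x := by
  simp [pd3, fderiv_fun_mul hf hg]; ring

lemma pd3_const_mul {f : E3 → ℝ} (j : Fin 3) {x : E3} (c : ℝ) (hf : DifferentiableAt ℝ f x) :
    pd3 j (fun y => c * f y) x = c * pd3 j f x := by
  simp [pd3, fderiv_const_mul hf]

lemma pd3_sum {ι : Type*} (s : Finset ι) {f : ι → E3 → ℝ} (j : Fin 3) {x : E3}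
    (hf : ∀ i ∈ s, DifferentiableAt ℝ (f i) x) :
    pd3 j (fun y => ∑ i ∈ s, f i y) x = ∑ i ∈ s, pd3 j (f i) x := by
  simp [pd3, fderiv_fun_sum hf]

lemma pd3_congr {f g : E3 → ℝ} (j : Fin 3) {x : E3} (h : f =ᶠ[nhds x] g) :
    pd3 j f x = pd3 j g x := by
  simp [pd3, h.fderiv_eq]

lemma pd3_congr_ev {f g : E3 → ℝ} (j : Fin 3) {x : E3} (h : f =ᶠ[nhds x] g) :
    pd3 j f =ᶠ[nhds x] pd3 j g := by
  filter_upwards [h.fderiv (𝕜 := ℝ)] with y hy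
  simp [pd3, hy]

lemma pd3_comm {f : E3 → ℝ} (hf : Smooth f) (i j : Fin 3) (x : E3) :
    pd3 i (pd3 j f) x = pd3 j (pd3 i f) x := by
  have h : ∀ a b : Fin 3, pd3 a (pd3 b f) x = fderiv ℝ (fderiv ℝ f) x (ee a) (ee b) := by
    intro a b
    unfold pd3
    rw [fderiv_clm_apply ((Smooth.fderiv hf).differentiable (by simp) x)
      (differentiableAt_const _)]
    simp
  rw [h, h]
  exact (hf.contDiffAt.isSymmSndFDerivAt
    (by simpa using WithTop.coe_le_coe.2 (le_top : (2 : ℕ∞) ≤ ⊤))) (ee i) (ee j)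

lemma pd3_comm' {f : E3 → ℝ} (hf : Smooth f) (i j : Fin 3) :
    pd3 i (pd3 j f) = pd3 j (pd3 i f) := funext (pd3_comm hf i j)

lemma fderiv_eq_sum (f : E3 → ℝ) (x w : E3) :
    fderiv ℝ f x w = ∑ j, w j * pd3 j f x := by
  conv_lhs => rw [← (EuclideanSpace.basisFun (Fin 3) ℝ).sum_repr w]
  simp [pd3, map_sum]

lemma fderiv_norm_le {f : E3 → ℝ} {x : E3} {C : ℝ} (h : ∀ j, |pd3 j f x| ≤ C) :
    ‖fderiv ℝ f x‖ ≤ 3 * C := by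
  have hC : 0 ≤ C := (abs_nonneg _).trans (h 0)
  refine ContinuousLinearMap.opNorm_le_bound _ (by positivity) fun w => ?_
  rw [fderiv_eq_sum, Real.norm_eq_abs]
  calc |∑ j, w j * pd3 j f x| ≤ ∑ j, |w j * pd3 j f x| := Finset.abs_sum_le_sum_abs _ _
    _ ≤ ∑ _j : Fin 3, ‖w‖ * C := by
        refine Finset.sum_le_sum fun j _ => ?_
        rw [abs_mul]
        have := PiLp.norm_apply_le w j
        rw [Real.norm_eq_abs] at this
        gcongr
        exact h j
    _ = 3 * C * ‖w‖ := by simp; ring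

/-- Integration by parts with the three integrability hypotheses that make it valid. -/
lemma ibp {f g : E3 → ℝ} (j : Fin 3) (hf : Differentiable ℝ f) (hg : Differentiable ℝ g)
    (h1 : Integrable fun x => pd3 j f x * g x) (h2 : Integrable fun x => f x * pd3 j g x)
    (h3 : Integrable fun x => f x * g x) :
    ∫ x, f x * pd3 j g x = -∫ x, pd3 j f x * g x :=
  integral_mul_fderiv_eq_neg_fderiv_mul_of_integrable h1 h2 h3 (fun x _ => hf x) (fun x _ => hg x)

lemma ibp_l {f g : E3 → ℝ} (j : Fin 3) (hf : Tst f) (hg : Smooth g) :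
    ∫ x, f x * pd3 j g x = -∫ x, pd3 j f x * g x :=
  ibp j hf.1.diff hg.diff ((hf.pd j).mul_right hg).integrable
    (hf.mul_right (hg.pd j)).integrable (hf.mul_right hg).integrable

lemma ibp_r {f g : E3 → ℝ} (j : Fin 3) (hf : Smooth f) (hg : Tst g) :
    ∫ x, f x * pd3 j g x = -∫ x, pd3 j f x * g x :=
  ibp j hf.diff hg.1.diff (hg.mul_left (hf.pd j)).integrable
    ((hg.pd j).mul_left hf).integrable (hg.mul_left hf).integrable

lemma int_pd3 {f : E3 → ℝ} (j : Fin 3) (hf : Tst f) : ∫ x, pd3 j f x = 0 := by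
  have := ibp_r (f := fun _ => (1 : ℝ)) j contDiff_const hf
  simpa [pd3] using this

lemma ibp_lap {f g : E3 → ℝ} (hf : Smooth f) (hg : Tst g) :
    ∫ x, f x * lap3 g x = ∫ x, lap3 f x * g x := by
  have h1 : ∀ x, f x * lap3 g x = ∑ j, f x * pd3 j (pd3 j g) x := fun x => by
    rw [lap3, Finset.mul_sum]
  have h2 : ∀ x, lap3 f x * g x = ∑ j, pd3 j (pd3 j f) x * g x := fun x => by
    rw [lap3, Finset.sum_mul]
  simp_rw [h1, h2]
  rw [integral_finsetSum _ fun j _ => (((hg.pd j).pd j).mul_left hf).integrable,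
    integral_finsetSum _ fun j _ => (hg.mul_left ((hf.pd j).pd j)).integrable]
  refine Finset.sum_congr rfl fun j _ => ?_
  rw [ibp_r j hf (hg.pd j), ibp_r j (hf.pd j) hg, neg_neg]

end TCM

namespace TCM

/-! ### A Bellman function -/

/-- The linear form `(x, y) ↦ a x + b y` on `ℝ²`. -/
abbrev lf (a b : ℝ) : ℝ × ℝ →L[ℝ] ℝ :=
  a • ContinuousLinearMap.fst ℝ ℝ ℝ + b • ContinuousLinearMap.snd ℝ ℝ ℝ

/-- `T` is a `C²` function of two real variables with first derivatives `T1, T2` and second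
derivatives `T11, T12, T22`. -/
structure C2 (T T1 T2 T11 T12 T22 : ℝ → ℝ → ℝ) : Prop where
  d0 : ∀ x y, HasFDerivAt (fun w : ℝ × ℝ => T w.1 w.2) (lf (T1 x y) (T2 x y)) (x, y)
  d1 : ∀ x y, HasFDerivAt (fun w : ℝ × ℝ => T1 w.1 w.2) (lf (T11 x y) (T12 x y)) (x, y)
  d2 : ∀ x y, HasFDerivAt (fun w : ℝ × ℝ => T2 w.1 w.2) (lf (T12 x y) (T22 x y)) (x, y)
  c11 : Continuous fun w : ℝ × ℝ => T11 w.1 w.2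
  c12 : Continuous fun w : ℝ × ℝ => T12 w.1 w.2
  c22 : Continuous fun w : ℝ × ℝ => T22 w.1 w.2

/-- `(1 + x²)^a`, a smooth substitute for `|x|^(2a)`. -/
def wt (a x : ℝ) : ℝ := (1 + x ^ 2) ^ a
/-- First derivative of `wt a`. -/
def wt1 (a x : ℝ) : ℝ := 2 * a * x * (1 + x ^ 2) ^ (a - 1)
/-- Second derivative of `wt a`. -/
def wt2 (a x : ℝ) : ℝ :=
  2 * a * (1 + x ^ 2) ^ (a - 1) + 4 * a * (a - 1) * x ^ 2 * (1 + x ^ 2) ^ (a - 2)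

lemma one_le_q (x : ℝ) : 1 ≤ 1 + x ^ 2 := by nlinarith [sq_nonneg x]

lemma wt_pos (a x : ℝ) : 0 < wt a x := Real.rpow_pos_of_pos (by nlinarith [one_le_q x]) _

lemma one_le_wt {a : ℝ} (ha : 0 ≤ a) (x : ℝ) : 1 ≤ wt a x :=
  Real.one_le_rpow (one_le_q x) ha

lemma hasDerivAt_base (a x : ℝ) :
    HasDerivAt (fun x : ℝ => (1 + x ^ 2) ^ a) (2 * a * x * (1 + x ^ 2) ^ (a - 1)) x := by
  have h1 : HasDerivAt (fun x : ℝ => 1 + x ^ 2) (2 * x) x := by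
    simpa using! (hasDerivAt_pow 2 x).const_add 1
  have := h1.rpow_const (p := a) (Or.inl (by nlinarith [one_le_q x]))
  convert! this using 1; ring

lemma wt_hasDerivAt (a x : ℝ) : HasDerivAt (wt a) (wt1 a x) x := hasDerivAt_base a x

lemma wt1_hasDerivAt (a x : ℝ) : HasDerivAt (wt1 a) (wt2 a x) x := by
  have h1 := hasDerivAt_base (a - 1) x
  have h2 : HasDerivAt (fun x : ℝ => 2 * a * x) (2 * a) x := by
    simpa using (hasDerivAt_id x).const_mul (2 * a)
  convert! h2.mul h1 using 1
  rw [wt2, show a - 1 - 1 = a - 2 by ring]; ring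

lemma wt_cont (a : ℝ) : Continuous (wt a) :=
  continuous_iff_continuousAt.2 fun x => (wt_hasDerivAt a x).continuousAt

lemma wt1_cont (a : ℝ) : Continuous (wt1 a) :=
  continuous_iff_continuousAt.2 fun x => (wt1_hasDerivAt a x).continuousAt

lemma wt2_cont (a : ℝ) : Continuous (wt2 a) := by
  unfold wt2
  have := wt_cont (a - 1)
  have h2 := wt_cont (a - 2)
  unfold wt at this h2
  fun_prop

/-- The Bellman function `x² S^e + K (1 + y²)^b` with `S = (1 + x²)^a + (1 + y²)^b`; it is used
with `a = p/2`, `b = p'/2`, `e = 1 - 2/p`. -/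
def bell (a b e K x y : ℝ) : ℝ := x ^ 2 * (wt a x + wt b y) ^ e + K * wt b y
/-- `∂₁` of `bell`. -/
def bell1 (a b e x y : ℝ) : ℝ :=
  2 * x * (wt a x + wt b y) ^ e + x ^ 2 * e * (wt a x + wt b y) ^ (e - 1) * wt1 a x
/-- `∂₂` of `bell`. -/
def bell2 (a b e K x y : ℝ) : ℝ :=
  x ^ 2 * e * (wt a x + wt b y) ^ (e - 1) * wt1 b y + K * wt1 b y
/-- `∂₁₁` of `bell`. -/
def bell11 (a b e x y : ℝ) : ℝ :=
  2 * (wt a x + wt b y) ^ e + 4 * x * e * (wt a x + wt b y) ^ (e - 1) * wt1 a x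
    + x ^ 2 * e * (e - 1) * (wt a x + wt b y) ^ (e - 2) * wt1 a x ^ 2
    + x ^ 2 * e * (wt a x + wt b y) ^ (e - 1) * wt2 a x
/-- `∂₁₂` of `bell`. -/
def bell12 (a b e x y : ℝ) : ℝ :=
  2 * x * e * (wt a x + wt b y) ^ (e - 1) * wt1 b y
    + x ^ 2 * e * (e - 1) * (wt a x + wt b y) ^ (e - 2) * wt1 a x * wt1 b y
/-- `∂₂₂` of `bell`. -/
def bell22 (a b e K x y : ℝ) : ℝ :=
  x ^ 2 * e * (e - 1) * (wt a x + wt b y) ^ (e - 2) * wt1 b y ^ 2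
    + x ^ 2 * e * (wt a x + wt b y) ^ (e - 1) * wt2 b y + K * wt2 b y

lemma S_pos (a b x y : ℝ) : 0 < wt a x + wt b y := add_pos (wt_pos _ _) (wt_pos _ _)

lemma S_hasFDerivAt (a b e x y : ℝ) :
    HasFDerivAt (fun w : ℝ × ℝ => (wt a w.1 + wt b w.2) ^ e)
      (lf (e * (wt a x + wt b y) ^ (e - 1) * wt1 a x) (e * (wt a x + wt b y) ^ (e - 1) * wt1 b y))
      (x, y) := by
  have hA := (wt_hasDerivAt a x).comp_hasFDerivAt (x, y)
    (f := Prod.fst) (hasFDerivAt_fst (𝕜 := ℝ) (p := (x, y)))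
  have hB := (wt_hasDerivAt b y).comp_hasFDerivAt (x, y)
    (f := Prod.snd) (hasFDerivAt_snd (𝕜 := ℝ) (p := (x, y)))
  have h := (hA.add hB).rpow_const (p := e) (Or.inl (S_pos a b x y).ne')
  convert! h using 1
  ext <;> simp [mul_assoc]

lemma bell_C2 (a b e K : ℝ) :
    C2 (bell a b e K) (bell1 a b e) (bell2 a b e K) (bell11 a b e) (bell12 a b e)
      (bell22 a b e K) := by
  have hx : ∀ x y : ℝ, HasFDerivAt (fun w : ℝ × ℝ => w.1) (lf 1 0) (x, y) := fun x y => by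
    simpa [lf] using (hasFDerivAt_fst (𝕜 := ℝ) (p := (x, y)))
  have hB0 : ∀ x y : ℝ, HasFDerivAt (fun w : ℝ × ℝ => wt b w.2) (lf 0 (wt1 b y)) (x, y) :=
    fun x y => by
      simpa [lf] using! (wt_hasDerivAt b y).comp_hasFDerivAt (x, y)
        (f := Prod.snd) (hasFDerivAt_snd (𝕜 := ℝ) (p := (x, y)))
  have hB1 : ∀ x y : ℝ, HasFDerivAt (fun w : ℝ × ℝ => wt1 b w.2) (lf 0 (wt2 b y)) (x, y) :=
    fun x y => by
      simpa [lf] using! (wt1_hasDerivAt b y).comp_hasFDerivAt (x, y)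
        (f := Prod.snd) (hasFDerivAt_snd (𝕜 := ℝ) (p := (x, y)))
  have hA1 : ∀ x y : ℝ, HasFDerivAt (fun w : ℝ × ℝ => wt1 a w.1) (lf (wt2 a x) 0) (x, y) :=
    fun x y => by
      simpa [lf] using! (wt1_hasDerivAt a x).comp_hasFDerivAt (x, y)
        (f := Prod.fst) (hasFDerivAt_fst (𝕜 := ℝ) (p := (x, y)))
  have hS := S_hasFDerivAt a b e
  have hS1 := S_hasFDerivAt a b (e - 1)
  rw [show e - 1 - 1 = e - 2 by ring] at hS1
  have hSc : ∀ e : ℝ, Continuous fun w : ℝ × ℝ => (wt a w.1 + wt b w.2) ^ e := fun e =>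
    continuous_iff_continuousAt.2 fun w => (S_hasFDerivAt a b e w.1 w.2).continuousAt
  have hSc0 := hSc e
  have hSc1 := hSc (e - 1)
  have hSc2 := hSc (e - 2)
  have c1 := wt1_cont a
  have c2 := wt2_cont a
  have c3 := wt1_cont b
  have c4 := wt2_cont b
  refine ⟨fun x y => ?_, fun x y => ?_, fun x y => ?_, ?_, ?_, ?_⟩
  · have := (((hx x y).pow 2).mul (hS x y)).add ((hB0 x y).const_mul K)
    convert! this using 1
    ext <;> simp [lf, bell1, bell2] <;> ring
  · have := (((hx x y).const_mul 2).mul (hS x y)).add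
      (((((hx x y).pow 2).mul_const e).mul (hS1 x y)).mul (hA1 x y))
    convert! this using 1
    ext <;> simp [lf, bell11, bell12] <;> ring
  · have := (((((hx x y).pow 2).mul_const e).mul (hS1 x y)).mul (hB1 x y)).add
      ((hB1 x y).const_mul K)
    convert! this using 1
    ext <;> simp [lf, bell12, bell22] <;> ring
  · unfold bell11; fun_prop
  · unfold bell12; fun_prop
  · unfold bell22; fun_prop

end TCM

namespace TCM

/-- The algebraic core of `bell_hess`: with `T = S^(e-2)` and `A, B` standing for the two weights, the
Hessian form of the Bellman function is bounded below by the diagonal form on the left. -/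
lemma hess_alg {p T S A A1 A2 B B1 B2 x e K D : ℝ} (hp : 3 ≤ p) (he : e = 1 - 2 / p)
    (hK : K = 2 + 17 * p) (hT : 0 < T) (hA : 0 < A) (hB : 0 < B) (hS : S = A + B)
    (hA2 : 0 ≤ A2) (hB2 : 0 ≤ B2) (hAA : (1 - e) * A1 ^ 2 ≤ A2 * A) (hBB : B1 ^ 2 ≤ p * B * B2)
    (hx : x ^ 2 * (T * S) ≤ 1) (hxA : 0 ≤ x * A1) (hxA' : (1 - e) * (x * A1) ≤ 2 * A)
    (hD : D ≤ p * B2) (s t : ℝ) :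
    T * S ^ 2 * s ^ 2 + D * t ^ 2 ≤
      (2 * (T * S ^ 2) + 4 * x * e * (T * S) * A1 + x ^ 2 * e * (e - 1) * T * A1 ^ 2
        + x ^ 2 * e * (T * S) * A2) * s ^ 2
      + 2 * (2 * x * e * (T * S) * B1 + x ^ 2 * e * (e - 1) * T * A1 * B1) * (s * t)
      + (x ^ 2 * e * (e - 1) * T * B1 ^ 2 + x ^ 2 * e * (T * S) * B2 + K * B2) * t ^ 2 := by
  have hp0 : 0 < p := by linarith
  have h2p : 2 / p ≤ 1 := by rw [div_le_one hp0]; linarith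
  have h2p0 : 0 < 2 / p := by positivity
  have he0 : 0 ≤ e := by rw [he]; linarith
  have he1 : e ≤ 1 := by rw [he]; linarith
  have hS0 : 0 < S := by rw [hS]; positivity
  have hAS : A ≤ S := by linarith
  have hBS : B ≤ S := by linarith
  have hpe : (1 - e) * p = 2 := by rw [he]; field_simp; ring
  have h11 : 2 * (T * S ^ 2) ≤ 2 * (T * S ^ 2) + 4 * x * e * (T * S) * A1
      + x ^ 2 * e * (e - 1) * T * A1 ^ 2 + x ^ 2 * e * (T * S) * A2 := by
    have e1 : 0 ≤ e * (T * S) * (x * A1) := by positivity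
    have e2 : 0 ≤ x ^ 2 * e * T * (S * A2 - (1 - e) * A1 ^ 2) := by
      have : (1 - e) * A1 ^ 2 ≤ S * A2 := hAA.trans (by nlinarith)
      have := sub_nonneg.2 this
      positivity
    nlinarith
  set M12 := 2 * x * e * (T * S) * B1 + x ^ 2 * e * (e - 1) * T * A1 * B1 with hM12
  have h12 : M12 ^ 2 ≤ 16 * p * (T * S ^ 2) * B2 := by
    have e1 : M12 = e * T * B1 * x * (2 * S - (1 - e) * (x * A1)) := by rw [hM12]; ring
    have e2 : (2 * S - (1 - e) * (x * A1)) ^ 2 ≤ (4 * S) ^ 2 := by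
      have : 0 ≤ (1 - e) * (x * A1) := mul_nonneg (by linarith) hxA
      apply sq_le_sq'
      · linarith
      · linarith
    have e3 : M12 ^ 2 ≤ e ^ 2 * (T ^ 2 * B1 ^ 2 * x ^ 2) * (4 * S) ^ 2 := by
      rw [e1]
      calc _ = e ^ 2 * (T ^ 2 * B1 ^ 2 * x ^ 2) * (2 * S - (1 - e) * (x * A1)) ^ 2 := by ring
        _ ≤ _ := by gcongr
    have e4 : e ^ 2 ≤ 1 := by nlinarith
    calc M12 ^ 2 ≤ e ^ 2 * (T ^ 2 * B1 ^ 2 * x ^ 2) * (4 * S) ^ 2 := e3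
      _ ≤ 1 * (T ^ 2 * B1 ^ 2 * x ^ 2) * (4 * S) ^ 2 := by gcongr
      _ = 16 * (x ^ 2 * (T * S)) * (T * S) * B1 ^ 2 := by ring
      _ ≤ 16 * 1 * (T * S) * (p * B * B2) := by gcongr
      _ = 16 * p * (T * S) * B2 * B := by ring
      _ ≤ 16 * p * (T * S) * B2 * S := by gcongr
      _ = _ := by ring
  have h22 : 17 * p * B2 ≤ x ^ 2 * e * (e - 1) * T * B1 ^ 2 + x ^ 2 * e * (T * S) * B2
      + K * B2 := by
    have e1 : 0 ≤ x ^ 2 * e * (T * S) * B2 := by positivity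
    have e2 : x ^ 2 * e * (1 - e) * T * B1 ^ 2 ≤ 2 * B2 := by
      have hne : 0 ≤ 1 - e := by linarith
      calc x ^ 2 * e * (1 - e) * T * B1 ^ 2 ≤ x ^ 2 * e * (1 - e) * T * (p * B * B2) := by gcongr
        _ = e * (x ^ 2 * (T * B)) * ((1 - e) * p) * B2 := by ring
        _ ≤ 1 * (x ^ 2 * (T * S)) * 2 * B2 := by rw [hpe]; gcongr
        _ ≤ 1 * 1 * 2 * B2 := by gcongr
        _ = 2 * B2 := by ring
    rw [hK]; nlinarith
  have hTS : 0 < T * S ^ 2 := by positivity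
  have key : 0 ≤ T * S ^ 2 * s ^ 2 + 2 * M12 * (s * t) + 16 * p * B2 * t ^ 2 := by
    have : 0 ≤ (T * S ^ 2) * (T * S ^ 2 * s ^ 2 + 2 * M12 * (s * t) + 16 * p * B2 * t ^ 2) := by
      have e1 : (T * S ^ 2) * (T * S ^ 2 * s ^ 2 + 2 * M12 * (s * t) + 16 * p * B2 * t ^ 2)
        = (T * S ^ 2 * s + M12 * t) ^ 2 + (16 * p * (T * S ^ 2) * B2 - M12 ^ 2) * t ^ 2 := by ring
      rw [e1]
      have := sub_nonneg.2 h12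
      positivity
    exact nonneg_of_mul_nonneg_right this hTS
  have f1 := mul_le_mul_of_nonneg_right h11 (sq_nonneg s)
  have f2 := mul_le_mul_of_nonneg_right h22 (sq_nonneg t)
  have f3 := mul_le_mul_of_nonneg_right hD (sq_nonneg t)
  linarith

lemma wt_facts (p x : ℝ) :
    wt (p / 2) x = (1 + x ^ 2) ^ (p / 2 - 2) * (1 + x ^ 2) ^ 2 ∧
    wt1 (p / 2) x = p * x * ((1 + x ^ 2) ^ (p / 2 - 2) * (1 + x ^ 2)) ∧
    wt2 (p / 2) x = (1 + x ^ 2) ^ (p / 2 - 2) * (p * (1 + (p - 1) * x ^ 2)) := by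
  have hx0 : 0 < 1 + x ^ 2 := by nlinarith [sq_nonneg x]
  refine ⟨?_, ?_, ?_⟩
  · rw [wt, pow_two (1 + x ^ 2), ← mul_assoc, ← Real.rpow_add_one hx0.ne',
      ← Real.rpow_add_one hx0.ne']
    congr 1; ring
  · rw [wt1, ← Real.rpow_add_one hx0.ne', show p / 2 - 2 + 1 = p / 2 - 1 by ring]; ring
  · rw [wt2, show p / 2 - 1 = (p / 2 - 2) + 1 by ring, Real.rpow_add_one hx0.ne']; ring

lemma wt_facts_A {p r w x : ℝ} (hp : 3 ≤ p) (hw : w = 1 + x ^ 2) (hr : 0 < r) :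
    2 / p * (p * x * (r * w)) ^ 2 ≤ r * (p * (1 + (p - 1) * x ^ 2)) * (r * w ^ 2) ∧
    0 ≤ x * (p * x * (r * w)) ∧ 2 / p * (x * (p * x * (r * w))) ≤ 2 * (r * w ^ 2) := by
  have hp0 : 0 < p := by linarith
  have hw0 : 0 < w := by rw [hw]; positivity
  refine ⟨?_, ?_, ?_⟩
  · have : 2 / p * (p * x * (r * w)) ^ 2 = r ^ 2 * w ^ 2 * p * (2 * x ^ 2) := by
      field_simp
    rw [this, show r * (p * (1 + (p - 1) * x ^ 2)) * (r * w ^ 2)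
      = r ^ 2 * w ^ 2 * p * (1 + (p - 1) * x ^ 2) by ring]
    gcongr
    nlinarith [sq_nonneg x]
  · rw [show x * (p * x * (r * w)) = p * x ^ 2 * (r * w) by ring]; positivity
  · have : 2 / p * (x * (p * x * (r * w))) = 2 * (r * (w * x ^ 2)) := by
      field_simp
    rw [this, pow_two w]
    gcongr
    linarith

lemma wt_facts_B {p q r w y : ℝ} (hp : 0 ≤ p) (hq : 0 ≤ q) (hpq : p * (q - 1) = q) :
    (q * y * (r * w)) ^ 2 ≤ p * (r * w ^ 2) * (r * (q * (1 + (q - 1) * y ^ 2))) := by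
  have : p * (r * w ^ 2) * (r * (q * (1 + (q - 1) * y ^ 2)))
    = (r * w) ^ 2 * q * (p + (p * (q - 1)) * y ^ 2) := by ring
  rw [this, hpq, show (q * y * (r * w)) ^ 2 = (r * w) ^ 2 * q * (q * y ^ 2) by ring]
  gcongr
  linarith

/-- The Hessian of the Bellman function dominates `w s² + w⁻¹ t²` with `w = S^e`; since
`w s² + w⁻¹ t² ≥ 2 |s t|`, it controls products of gradients. -/
lemma bell_hess {p q e K : ℝ} (hp : 3 ≤ p) (hq : q = p / (p - 1)) (he : e = 1 - 2 / p)
    (hK : K = 2 + 17 * p) (x y s t : ℝ) :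
    (wt (p / 2) x + wt (q / 2) y) ^ e * s ^ 2 + ((wt (p / 2) x + wt (q / 2) y) ^ e)⁻¹ * t ^ 2 ≤
      bell11 (p / 2) (q / 2) e x y * s ^ 2 + 2 * bell12 (p / 2) (q / 2) e x y * (s * t)
        + bell22 (p / 2) (q / 2) e K x y * t ^ 2 := by
  have hp0 : 0 < p := by linarith
  have hp1 : 0 < p - 1 := by linarith
  have hq1 : 1 < q := by rw [hq, lt_div_iff₀ hp1]; linarith
  have hq2 : q ≤ 2 := by rw [hq, div_le_iff₀ hp1]; linarith
  have hpq : p * (q - 1) = q := by rw [hq]; field_simp; ring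
  set S := wt (p / 2) x + wt (q / 2) y with hS
  have hSp : 0 < S := S_pos _ _ _ _
  have hS1 : S ^ (e - 1) = S ^ (e - 2) * S := by
    rw [← Real.rpow_add_one hSp.ne']; congr 1; ring
  have hS0 : S ^ e = S ^ (e - 2) * S ^ 2 := by
    rw [pow_two, ← mul_assoc, ← hS1, ← Real.rpow_add_one hSp.ne']; congr 1; ring
  have hwx := one_le_q x
  have hwy := one_le_q y
  have hx0 : 0 < 1 + x ^ 2 := by linarith
  have hy0 : 0 < 1 + y ^ 2 := by linarith
  obtain ⟨wA, wA1, wA2⟩ := wt_facts p x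
  obtain ⟨wB, wB1, wB2⟩ := wt_facts q y
  have rA : 0 < (1 + x ^ 2) ^ (p / 2 - 2) := Real.rpow_pos_of_pos hx0 _
  have rB : 0 < (1 + y ^ 2) ^ (q / 2 - 2) := Real.rpow_pos_of_pos hy0 _
  have fA := wt_facts_A (x := x) hp rfl rA
  have fB := wt_facts_B (r := (1 + y ^ 2) ^ (q / 2 - 2)) (w := 1 + y ^ 2) (y := y) hp0.le
    (by linarith) hpq
  have h1e : 1 - e = 2 / p := by rw [he]; ring
  have he0 : 0 ≤ e := by
    rw [he]; have : 2 / p ≤ 1 := by rw [div_le_one hp0]; linarith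
    linarith
  have hTS : x ^ 2 * (S ^ (e - 2) * S) ≤ 1 := by
    rw [← hS1, show e - 1 = -(2 / p) by rw [he]; ring, Real.rpow_neg hSp.le,
      ← div_eq_mul_inv, div_le_one (Real.rpow_pos_of_pos hSp _)]
    have : wt (p / 2) x ^ (2 / p) ≤ S ^ (2 / p) :=
      Real.rpow_le_rpow (wt_pos _ _).le (by linarith [wt_pos (q / 2) y]) (by positivity)
    rw [wt, ← Real.rpow_mul hx0.le, show p / 2 * (2 / p) = 1 by field_simp, Real.rpow_one] at this
    linarith
  have hD : (S ^ e)⁻¹ ≤ p * wt2 (q / 2) y := by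
    have h1 : wt (q / 2) y ^ e ≤ S ^ e :=
      Real.rpow_le_rpow (wt_pos _ _).le (by linarith [wt_pos (p / 2) x]) he0
    have h2 : (S ^ e)⁻¹ ≤ (wt (q / 2) y ^ e)⁻¹ :=
      inv_anti₀ (Real.rpow_pos_of_pos (wt_pos _ _) _) h1
    refine h2.trans ?_
    have h3 : (wt (q / 2) y ^ e)⁻¹ = (1 + y ^ 2) ^ (q / 2 - 2) * (1 + y ^ 2) := by
      rw [wt, ← Real.rpow_mul hy0.le, ← Real.rpow_neg hy0.le, ← Real.rpow_add_one hy0.ne']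
      congr 1
      rw [he, hq]; field_simp; ring
    rw [h3, wB2]
    have h4 : 1 + y ^ 2 ≤ p * (q * (1 + (q - 1) * y ^ 2)) := by
      have : p * (q * (1 + (q - 1) * y ^ 2)) = p * q + q * (p * (q - 1)) * y ^ 2 := by ring
      rw [this, hpq]
      have e1 : 1 ≤ p * q := one_le_mul_of_one_le_of_one_le (by linarith) hq1.le
      have e2 : 1 * y ^ 2 ≤ q * q * y ^ 2 := by
        gcongr; exact one_le_mul_of_one_le_of_one_le hq1.le hq1.le
      linarith
    calc _ ≤ (1 + y ^ 2) ^ (q / 2 - 2) * (p * (q * (1 + (q - 1) * y ^ 2))) := by gcongr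
      _ = _ := by ring
  have := hess_alg (p := p) (T := S ^ (e - 2)) (S := S) (A := wt (p / 2) x) (A1 := wt1 (p / 2) x)
    (A2 := wt2 (p / 2) x) (B := wt (q / 2) y) (B1 := wt1 (q / 2) y) (B2 := wt2 (q / 2) y)
    (x := x) (e := e) (K := K) (D := (S ^ e)⁻¹) hp he hK (Real.rpow_pos_of_pos hSp _)
    (wt_pos _ _) (wt_pos _ _) hS
    (by rw [wA2]; have : 0 ≤ (p - 1) * x ^ 2 := by positivity
        positivity)
    (by rw [wB2]; have : 0 ≤ (q - 1) * y ^ 2 := mul_nonneg (by linarith) (sq_nonneg y)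
        positivity)
    (by rw [wA, wA1, wA2, h1e]; exact fA.1)
    (by rw [wB, wB1, wB2]; exact fB)
    hTS
    (by rw [wA1]; exact fA.2.1)
    (by rw [h1e, wA, wA1]; exact fA.2.2)
    hD s t
  rw [bell11, bell12, bell22, ← hS, hS0, hS1]
  rw [hS0] at this
  exact this

lemma bell_lower {a b e K : ℝ} (hb : 0 ≤ b) (hK : 0 ≤ K) (x y : ℝ) : 0 ≤ bell a b e K x y - K := by
  have h1 := one_le_wt hb y
  have h2 : 0 ≤ x ^ 2 * (wt a x + wt b y) ^ e := by
    have := Real.rpow_pos_of_pos (S_pos a b x y) e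
    positivity
  rw [bell]; nlinarith

lemma rpow_sub_add {a b m : ℝ} (ha : 0 ≤ a) (hb : 0 ≤ b) (hm : 0 ≤ m) (hm1 : m ≤ 1) :
    (a + b) ^ m ≤ a ^ m + b ^ m := Real.rpow_add_le_add_rpow ha hb hm hm1

/-- Size of the Bellman function: up to a constant it is at most `x² + |x|^p + |y|^q`. -/
lemma bell_upper {p q e K : ℝ} (hp : 3 ≤ p) (hq : q = p / (p - 1)) (he : e = 1 - 2 / p)
    (hK : K = 2 + 17 * p) (x y : ℝ) :
    bell (p / 2) (q / 2) e K x y - K ≤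
      (2 ^ p + 2 + K) * (x ^ 2 + |x| ^ p + |y| ^ q) := by
  have hp0 : 0 < p := by linarith
  have hp1 : 0 < p - 1 := by linarith
  have hq1 : 1 < q := by rw [hq, lt_div_iff₀ hp1]; linarith
  have hq2 : q < 2 := by rw [hq, div_lt_iff₀ hp1]; linarith
  have hx0 : 0 < 1 + x ^ 2 := by nlinarith [sq_nonneg x]
  have hy0 : 0 < 1 + y ^ 2 := by nlinarith [sq_nonneg y]
  have he0 : 0 ≤ e := by
    rw [he]; have : 2 / p ≤ 1 := by rw [div_le_one hp0]; linarith
    linarith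
  have he1 : e ≤ 1 := by rw [he]; have : 0 < 2 / p := by positivity
                         linarith
  have hX : 0 ≤ |x| ^ p := by positivity
  have hY : 0 ≤ |y| ^ q := by positivity
  have pw : ∀ z : ℝ, ∀ m : ℝ, (z ^ 2) ^ m = |z| ^ (2 * m) := fun z m => by
    rw [← sq_abs, Real.rpow_mul (abs_nonneg z)]; norm_num
  -- `(1+y²)^{q/2} ≤ 1 + |y|^q`
  have h1 : wt (q / 2) y ≤ 1 + |y| ^ q := by
    have := rpow_sub_add (a := 1) (b := y ^ 2) (m := q / 2) zero_le_one (sq_nonneg y)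
      (by linarith) (by linarith)
    rwa [Real.one_rpow, pw, show 2 * (q / 2) = q by ring] at this
  have hS : (wt (p / 2) x + wt (q / 2) y) ^ e ≤ wt (p / 2) x ^ e + wt (q / 2) y ^ e :=
    rpow_sub_add (wt_pos _ _).le (wt_pos _ _).le he0 he1
  have h2 : x ^ 2 * wt (p / 2) x ^ e ≤ 2 ^ p * (x ^ 2 + |x| ^ p) := by
    have hpe : p / 2 * e = p / 2 - 1 := by rw [he]; field_simp
    rw [wt, ← Real.rpow_mul hx0.le, hpe]
    have hm : 0 ≤ p / 2 - 1 := by linarith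
    have h21 : (1 + x ^ 2) ^ (p / 2 - 1) ≤ 2 ^ (p / 2 - 1) * (1 + |x| ^ (p - 2)) := by
      rcases le_total (x ^ 2) 1 with hx | hx
      · calc (1 + x ^ 2) ^ (p / 2 - 1) ≤ 2 ^ (p / 2 - 1) :=
              Real.rpow_le_rpow hx0.le (by linarith) hm
          _ = 2 ^ (p / 2 - 1) * 1 := by ring
          _ ≤ _ := by gcongr; simp; positivity
      · calc (1 + x ^ 2) ^ (p / 2 - 1) ≤ (2 * x ^ 2) ^ (p / 2 - 1) :=
              Real.rpow_le_rpow hx0.le (by linarith) hm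
          _ = 2 ^ (p / 2 - 1) * |x| ^ (p - 2) := by
              rw [Real.mul_rpow (by norm_num) (sq_nonneg x), pw]; congr 2; ring
          _ ≤ _ := by gcongr; simp
    have h22 : (2 : ℝ) ^ (p / 2 - 1) ≤ 2 ^ p :=
      Real.rpow_le_rpow_of_exponent_le (by norm_num) (by linarith)
    have h23 : x ^ 2 * |x| ^ (p - 2) = |x| ^ p := by
      rcases eq_or_ne x 0 with rfl | hx
      · simp [Real.zero_rpow hp0.ne']
      · rw [← sq_abs, ← Real.rpow_natCast, ← Real.rpow_add (abs_pos.2 hx)]; congr 1; norm_num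
    calc x ^ 2 * (1 + x ^ 2) ^ (p / 2 - 1) ≤ x ^ 2 * (2 ^ p * (1 + |x| ^ (p - 2))) := by
          gcongr
          exact h21.trans (by gcongr)
      _ = 2 ^ p * (x ^ 2 + x ^ 2 * |x| ^ (p - 2)) := by ring
      _ = _ := by rw [h23]
  have h3 : x ^ 2 * wt (q / 2) y ^ e ≤ x ^ 2 + (|x| ^ p + |y| ^ q) := by
    have hqe : q / 2 * e = 1 - q / 2 := by rw [he, hq]; field_simp; ring
    rw [wt, ← Real.rpow_mul hy0.le, hqe]
    have h31 := rpow_sub_add (a := 1) (b := y ^ 2) (m := 1 - q / 2) zero_le_one (sq_nonneg y)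
      (by linarith) (by linarith)
    rw [Real.one_rpow, pw, show 2 * (1 - q / 2) = 2 - q by ring] at h31
    have hconj : (p / 2).HolderConjugate (q / (2 - q)) := by
      rw [Real.holderConjugate_iff]
      refine ⟨by linarith, ?_⟩
      have : 2 - q = (p - 2) / (p - 1) := by rw [hq]; field_simp; ring
      rw [this, hq]
      have : 0 < p - 2 := by linarith
      field_simp; ring
    have h32 := Real.young_inequality_of_nonneg (a := |x| ^ (2 : ℝ)) (b := |y| ^ (2 - q))
      (by positivity) (by positivity) hconj
    have h33 : (|x| ^ (2 : ℝ)) ^ (p / 2) = |x| ^ p := by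
      rw [← Real.rpow_mul (abs_nonneg x)]; congr 1; ring
    have h34 : (|y| ^ (2 - q)) ^ (q / (2 - q)) = |y| ^ q := by
      rw [← Real.rpow_mul (abs_nonneg y)]; congr 1
      have : 0 < 2 - q := by linarith
      field_simp
    rw [h33, h34, Real.rpow_two, sq_abs] at h32
    have h35 : |x| ^ p / (p / 2) ≤ |x| ^ p := div_le_self hX (by linarith)
    have h36 : |y| ^ q / (q / (2 - q)) ≤ |y| ^ q :=
      div_le_self hY (by rw [le_div_iff₀ (by linarith)]; linarith)
    calc x ^ 2 * (1 + y ^ 2) ^ (1 - q / 2) ≤ x ^ 2 * (1 + |y| ^ (2 - q)) := by gcongr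
      _ = x ^ 2 + x ^ 2 * |y| ^ (2 - q) := by ring
      _ ≤ _ := by linarith
  have hK0 : 0 ≤ K := by rw [hK]; positivity
  have h4 : x ^ 2 * (wt (p / 2) x + wt (q / 2) y) ^ e
      ≤ x ^ 2 * wt (p / 2) x ^ e + x ^ 2 * wt (q / 2) y ^ e := by
    rw [← mul_add]; gcongr
  have h5 : K * wt (q / 2) y ≤ K + K * |y| ^ q := by nlinarith
  have h6 : (1 : ℝ) ≤ 2 ^ p := Real.one_le_rpow (by norm_num) hp0.le
  rw [bell]
  nlinarith [sq_nonneg x, mul_nonneg hK0 (sq_nonneg x), mul_nonneg hK0 hX,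
    mul_nonneg (le_trans zero_le_one h6) hY]

end TCM

namespace TCM

/-! ### Averaging operators -/

section AV
variable {Ω : Type} [MeasurableSpace Ω] {m : Measure Ω} {W : Ω → ℝ} {Y : Ω → E3}
  {F : Type} [NormedAddCommGroup F] [NormedSpace ℝ F]

/-- The weighted average `∫ W(ω) f(x - Y(ω)) dm(ω)` of translates of `f`. Heat flow, mollification
and the localized Newtonian potential are all of this form. -/
def AV (m : Measure Ω) (W : Ω → ℝ) (Y : Ω → E3) (f : E3 → F) (x : E3) : F :=
  ∫ ω, W ω • f (x - Y ω) ∂m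

lemma AV_aesm (hW : Integrable W m) (hY : Measurable Y) {f : E3 → F} (hf : Continuous f) (x : E3) :
    AEStronglyMeasurable (fun ω => W ω • f (x - Y ω)) m := by
  refine hW.1.smul ?_
  exact (hf.comp_aestronglyMeasurable (measurable_const.sub hY).aestronglyMeasurable)

lemma AV_integrable (hW : Integrable W m) (hY : Measurable Y) {f : E3 → F} (hf : Continuous f)
    {C : ℝ} (hC : ∀ x, ‖f x‖ ≤ C) (x : E3) : Integrable (fun ω => W ω • f (x - Y ω)) m := by
  refine (hW.norm.mul_const C).mono' (AV_aesm hW hY hf x) (ae_of_all _ fun ω => ?_)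
  rw [norm_smul]; gcongr; exact hC _

lemma AV_norm_le (hW : Integrable W m) {f : E3 → F} {C : ℝ} (hC : ∀ x, ‖f x‖ ≤ C) (x : E3) :
    ‖AV m W Y f x‖ ≤ (∫ ω, ‖W ω‖ ∂m) * C := by
  rw [AV, ← integral_mul_const]
  refine norm_integral_le_of_norm_le (hW.norm.mul_const C) (ae_of_all _ fun ω => ?_)
  rw [norm_smul]; gcongr; exact hC _

lemma AV_hasFDerivAt (hW : Integrable W m) (hY : Measurable Y) {f : E3 → F}
    (hf : ContDiff ℝ 1 f) (hc : HasCompactSupport f) (x : E3) :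
    HasFDerivAt (AV m W Y f) (AV m W Y (fderiv ℝ f) x) x := by
  obtain ⟨C, hC⟩ := hc.exists_bound_of_continuous hf.continuous
  obtain ⟨C', hC'⟩ := (hc.fderiv (𝕜 := ℝ)).exists_bound_of_continuous
    (hf.continuous_fderiv (by simp))
  refine hasFDerivAt_integral_of_dominated_of_fderiv_le
    (F' := fun x ω => W ω • fderiv ℝ f (x - Y ω)) (bound := fun ω => ‖W ω‖ * C') univ_mem
    (Eventually.of_forall fun y => AV_aesm hW hY hf.continuous y)
    (AV_integrable hW hY hf.continuous hC x)
    (AV_aesm hW hY (hf.continuous_fderiv (by simp)) x) (ae_of_all _ fun ω y _ => ?_)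
    (hW.norm.mul_const C') (ae_of_all _ fun ω y _ => ?_)
  · rw [norm_smul]; gcongr; exact hC' _
  · have h1 : HasFDerivAt f (fderiv ℝ f (y - Y ω)) (y - Y ω) :=
      (hf.differentiable (by simp) _).hasFDerivAt
    have h2 : HasFDerivAt (fun y : E3 => y - Y ω) (ContinuousLinearMap.id ℝ E3) y :=
      (hasFDerivAt_id y).sub_const _
    simpa using! (h1.comp y h2).const_smul (W ω)

lemma AV_contDiff_nat (hW : Integrable W m) (hY : Measurable Y) (n : ℕ) :
    ∀ {F : Type} [NormedAddCommGroup F] [NormedSpace ℝ F] {f : E3 → F},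
    ContDiff ℝ (⊤ : ℕ∞) f → HasCompactSupport f → ContDiff ℝ n (AV m W Y f) := by
  induction n with
  | zero =>
    intro F _ _ f hf hc
    refine contDiff_zero.2 (continuous_iff_continuousAt.2 fun x => ?_)
    exact (AV_hasFDerivAt hW hY (hf.of_le (by norm_cast)) hc x).continuousAt
  | succ n ih =>
    intro F _ _ f hf hc
    have hd := AV_hasFDerivAt hW hY (hf.of_le (by norm_cast)) hc
    have he : fderiv ℝ (AV m W Y f) = AV m W Y (fderiv ℝ f) := funext fun x => (hd x).fderiv
    push_cast
    rw [contDiff_succ_iff_fderiv]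
    refine ⟨fun x => (hd x).differentiableAt, by simp, ?_⟩
    rw [he]
    exact ih (ContDiff.fderiv_right hf (by norm_cast)) (hc.fderiv (𝕜 := ℝ))

lemma AV_smooth (hW : Integrable W m) (hY : Measurable Y) {f : E3 → ℝ} (hf : Tst f) :
    Smooth (AV m W Y f) :=
  contDiff_infty.2 fun n => AV_contDiff_nat hW hY n hf.1 hf.2

lemma AV_pd3 (hW : Integrable W m) (hY : Measurable Y) {f : E3 → ℝ} (hf : Tst f) (j : Fin 3) :
    pd3 j (AV m W Y f) = AV m W Y (pd3 j f) := by
  funext x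
  have hf1 : ContDiff ℝ 1 f := hf.1.of_le (by norm_cast)
  obtain ⟨C', hC'⟩ := (hf.2.fderiv (𝕜 := ℝ)).exists_bound_of_continuous
    (hf1.continuous_fderiv (by simp))
  rw [pd3, (AV_hasFDerivAt hW hY hf1 hf.2 x).fderiv]
  rw [AV, ContinuousLinearMap.integral_apply
    (AV_integrable hW hY (hf1.continuous_fderiv (by simp)) hC' x)]
  rfl

lemma AV_lap3 (hW : Integrable W m) (hY : Measurable Y) {f : E3 → ℝ} (hf : Tst f) :
    lap3 (AV m W Y f) = AV m W Y (lap3 f) := by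
  funext x
  have : ∀ j, Integrable (fun ω => W ω • pd3 j (pd3 j f) (x - Y ω)) m := fun j => by
    obtain ⟨C, -, hC⟩ := ((hf.pd j).pd j).bdd
    exact AV_integrable hW hY ((hf.pd j).pd j).1.cont hC x
  simp only [lap3, AV_pd3 hW hY hf, AV_pd3 hW hY (hf.pd _)]
  simp only [AV, lap3, Finset.smul_sum]
  rw [integral_finsetSum _ fun j _ => this j]

/-- If all displacements have length at most `c`, averaging enlarges the support by at most `c`. -/
lemma AV_support {c : ℝ} {f : E3 → ℝ} (hc : ∀ ω, W ω ≠ 0 → ‖Y ω‖ ≤ c) {x : E3}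
    (hx : ∀ y, f y ≠ 0 → c < dist x y) : AV m W Y f x = 0 := by
  rw [AV]
  refine integral_eq_zero_of_ae (ae_of_all _ fun ω => ?_)
  by_contra h
  simp only [Pi.zero_apply, smul_eq_mul, mul_eq_zero, not_or] at h
  have h1 := hx _ h.2
  rw [dist_eq_norm, sub_sub_cancel] at h1
  exact absurd (hc ω h.1) (not_le.2 h1)

lemma AV_tst {c : ℝ} (hW : Integrable W m) (hY : Measurable Y) {f : E3 → ℝ} (hf : Tst f)
    (hc : ∀ ω, W ω ≠ 0 → ‖Y ω‖ ≤ c) : Tst (AV m W Y f) := by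
  refine ⟨AV_smooth hW hY hf, ?_⟩
  obtain ⟨r, hr⟩ := hf.2.isCompact.isBounded.subset_closedBall 0
  refine HasCompactSupport.intro (isCompact_closedBall (0 : E3) (r + c)) fun x hx => ?_
  refine AV_support hc fun y hy => ?_
  have h1 := hr (subset_tsupport _ (Function.mem_support.2 hy))
  simp only [mem_closedBall, dist_zero_right] at h1 hx
  rw [dist_eq_norm]
  have := norm_le_norm_add_norm_sub' x y
  linarith [not_le.1 hx]

lemma AV_integrable_prod [SFinite m] (hW : Integrable W m) (hY : Measurable Y) {f : E3 → ℝ}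
    (hf : Continuous f) (hfi : Integrable f) :
    Integrable (fun z : E3 × Ω => W z.2 * f (z.1 - Y z.2)) (volume.prod m) := by
  have hm : AEStronglyMeasurable (fun z : E3 × Ω => W z.2 * f (z.1 - Y z.2)) (volume.prod m) := by
    refine hW.1.comp_snd.mul ?_
    exact (hf.measurable.comp (measurable_fst.sub (hY.comp measurable_snd))).aestronglyMeasurable
  rw [integrable_prod_iff' hm]
  refine ⟨ae_of_all _ fun ω => (hfi.comp_sub_right (Y ω)).const_mul (W ω), ?_⟩
  have : (fun ω => ∫ x, ‖W ω * f (x - Y ω)‖) = fun ω => ‖W ω‖ * ∫ x, ‖f x‖ := by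
    funext ω
    simp_rw [norm_mul]
    rw [integral_const_mul, integral_sub_right_eq_self (fun x => ‖f x‖)]
  rw [this]
  exact hW.norm.mul_const _

lemma AV_int [SFinite m] (hW : Integrable W m) (hY : Measurable Y) {f : E3 → ℝ}
    (hf : Continuous f) (hfi : Integrable f) : Integrable (AV m W Y f) :=
  (AV_integrable_prod hW hY hf hfi).integral_prod_left

lemma AV_int_norm_le [SFinite m] (hW : Integrable W m) (hY : Measurable Y) {f : E3 → ℝ}
    (hf : Continuous f) (hfi : Integrable f) :
    ∫ x, ‖AV m W Y f x‖ ≤ (∫ ω, ‖W ω‖ ∂m) * ∫ x, ‖f x‖ := by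
  have h := AV_integrable_prod hW hY hf hfi
  calc ∫ x, ‖AV m W Y f x‖ ≤ ∫ x, ∫ ω, ‖W ω * f (x - Y ω)‖ ∂m := by
        refine integral_mono (AV_int hW hY hf hfi).norm h.norm.integral_prod_left fun x => ?_
        exact norm_integral_le_integral_norm _
    _ = ∫ ω, (∫ x, ‖W ω * f (x - Y ω)‖) ∂m := integral_integral_swap h.norm
    _ = ∫ ω, ‖W ω‖ * (∫ x, ‖f x‖) ∂m := by
        refine integral_congr_ae (ae_of_all _ fun ω => ?_)
        simp_rw [norm_mul]
        rw [integral_const_mul, integral_sub_right_eq_self (fun x => ‖f x‖)]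
    _ = _ := integral_mul_const _ _

end AV

end TCM

namespace TCM

lemma pd3_radial {φ : ℝ → ℝ} {φ' : ℝ} {z : E3} (h : HasDerivAt φ φ' (‖z‖ ^ 2)) (k : Fin 3) :
    pd3 k (fun y : E3 => φ (‖y‖ ^ 2)) z = 2 * z k * φ' := by
  have h1 := h.comp_hasFDerivAt z (f := fun y : E3 => ‖y‖ ^ 2)
    (hasStrictFDerivAt_norm_sq z).hasFDerivAt
  unfold pd3
  rw [show (fun y : E3 => φ (‖y‖ ^ 2)) = φ ∘ (fun y : E3 => ‖y‖ ^ 2) from rfl, h1.fderiv]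
  simp [EuclideanSpace.inner_single_right]
  ring

lemma pd3_shift {g : E3 → ℝ} (hg : Differentiable ℝ g) (k : Fin 3) (x : E3) (s : ℝ) (z : E3) :
    pd3 k (fun y => g (x - s • y)) z = -s * pd3 k g (x - s • z) := by
  have h2 : HasFDerivAt (fun y : E3 => x - s • y) (-(s • ContinuousLinearMap.id ℝ E3)) z :=
    ((hasFDerivAt_id z).const_smul s).const_sub x
  have h1 := (hg (x - s • z)).hasFDerivAt.comp z h2
  unfold pd3
  rw [show (fun y => g (x - s • y)) = g ∘ (fun y => x - s • y) from rfl, h1.fderiv]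
  simp

/-! ### Dilation averages -/

/-- The average `∫ w(z) f(x - s z) dz`. -/
def av (w : E3 → ℝ) (s : ℝ) (f : E3 → ℝ) : E3 → ℝ := AV volume w (fun z => s • z) f

lemma meas_smul (s : ℝ) : Measurable fun z : E3 => s • z := by fun_prop

lemma av_def (w : E3 → ℝ) (s : ℝ) (f : E3 → ℝ) (x : E3) :
    av w s f x = ∫ z, w z * f (x - s • z) := rfl

lemma av_zero (w : E3 → ℝ) (f : E3 → ℝ) (x : E3) : av w 0 f x = (∫ z, w z) * f x := by
  rw [av_def]; simp only [zero_smul, sub_zero]; rw [integral_mul_const]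

lemma av_cont {w : E3 → ℝ} (hw : Integrable w) {f : E3 → ℝ} (hf : Tst f) :
    Continuous fun q : ℝ × E3 => av w q.1 f q.2 := by
  obtain ⟨C, -, hC⟩ := hf.bdd
  have hfc := hf.1.cont
  refine continuous_of_dominated (bound := fun z => ‖w z‖ * C) (fun q => ?_)
    (fun q => ae_of_all _ fun z => ?_) (hw.norm.mul_const C) (ae_of_all _ fun z => ?_)
  · exact AV_aesm hw (meas_smul q.1) hfc q.2
  · rw [norm_smul]; gcongr; exact hC _
  · fun_prop

/-- A weight `w` together with the radial potential `w'` of `z ↦ -z w(z)`. For such pairs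
dilation averages satisfy a heat-type equation, see `Pair.hasDerivAt`. -/
structure Pair (w w' : E3 → ℝ) : Prop where
  int_w : Integrable w
  int_w' : Integrable w'
  int_m : Integrable fun z => ‖z‖ * w z
  diff : Differentiable ℝ w'
  eq : ∀ k z, pd3 k w' z = -(z k * w z)

lemma Pair.hasDerivAt {w w' : E3 → ℝ} (h : Pair w w') {f : E3 → ℝ} (hf : Tst f) (x : E3) (s : ℝ) :
    HasDerivAt (fun s => av w s f x) (s * av w' s (lap3 f) x) s := by
  obtain ⟨C, -, hC⟩ := hf.bdd
  have hfc := hf.1.cont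
  have hf1 : ContDiff ℝ 1 f := hf.1.of_le (by norm_cast)
  have hfd := hf1.continuous_fderiv (by simp)
  obtain ⟨C', hC'⟩ := (hf.2.fderiv (𝕜 := ℝ)).exists_bound_of_continuous hfd
  have hderiv : ∀ (z : E3) (s : ℝ), HasDerivAt (fun s : ℝ => f (x - s • z))
      (-(fderiv ℝ f (x - s • z) z)) s := by
    intro z s
    have h1 : HasDerivAt (fun s : ℝ => x - s • z) (-z) s := by
      simpa using! ((hasDerivAt_id s).smul_const z).const_sub x
    simpa using! (hf.1.diffAt _).hasFDerivAt.comp_hasDerivAt s h1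
  have key := hasDerivAt_integral_of_dominated_loc_of_deriv_le (𝕜 := ℝ) (μ := volume)
    (F := fun s z => w z * f (x - s • z)) (x₀ := s) (s := Set.univ)
    (F' := fun s z => w z * -(fderiv ℝ f (x - s • z) z)) (bound := fun z => ‖‖z‖ * w z‖ * C')
    univ_mem (Eventually.of_forall fun s => AV_aesm h.int_w (meas_smul s) hfc x)
    (AV_integrable h.int_w (meas_smul s) hfc hC x)
    (by
      refine h.int_w.1.mul ?_
      have : Continuous fun z : E3 => -(fderiv ℝ f (x - s • z) z) := by fun_prop
      exact this.aestronglyMeasurable)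
    (ae_of_all _ fun z s _ => by
      rw [norm_mul, norm_neg, norm_mul, norm_norm]
      calc ‖w z‖ * ‖fderiv ℝ f (x - s • z) z‖ ≤ ‖w z‖ * (‖fderiv ℝ f (x - s • z)‖ * ‖z‖) := by
            gcongr; exact ContinuousLinearMap.le_opNorm _ _
        _ ≤ ‖w z‖ * (C' * ‖z‖) := by gcongr; exact hC' _
        _ = _ := by ring)
    (h.int_m.norm.mul_const C')
    (ae_of_all _ fun z s _ => (hderiv z s).const_mul (w z))
  convert! key.2 using 1
  have hcomp : ∀ g : E3 → ℝ, Tst g → Integrable (fun z => w' z * g (x - s • z)) := fun g hg => by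
    obtain ⟨D, -, hD⟩ := hg.bdd
    exact AV_integrable h.int_w' (meas_smul s) hg.1.cont hD x
  have hpd : ∀ k, ∀ g : E3 → ℝ, Tst g → Integrable (fun z => pd3 k w' z * g (x - s • z)) := by
    intro k g hg
    obtain ⟨D, -, hD⟩ := hg.bdd
    refine AV_integrable (W := pd3 k w') ?_ (meas_smul s) hg.1.cont hD x
    have hk : (fun z => pd3 k w' z) = fun z => -(z k * w z) := funext (h.eq k)
    change Integrable (fun z => pd3 k w' z)
    rw [hk]
    refine Integrable.neg (h.int_m.mono ?_ (ae_of_all _ fun z => ?_))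
    · exact (Continuous.aestronglyMeasurable (by fun_prop)).mul h.int_w.1
    · rw [norm_mul, norm_mul, norm_norm]; gcongr; exact PiLp.norm_apply_le z k
  have e1 : ∀ z, w z * -(fderiv ℝ f (x - s • z) z)
      = ∑ k, pd3 k w' z * pd3 k f (x - s • z) := by
    intro z
    rw [fderiv_eq_sum, mul_neg, Finset.mul_sum, ← Finset.sum_neg_distrib]
    refine Finset.sum_congr rfl fun k _ => ?_
    rw [h.eq]; ring
  simp_rw [e1]
  rw [integral_finsetSum _ fun k _ => hpd k _ (hf.pd k)]
  have e2 : ∀ k, ∫ z, pd3 k w' z * pd3 k f (x - s • z)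
      = s * ∫ z, w' z * pd3 k (pd3 k f) (x - s • z) := by
    intro k
    have hps : ∀ z, pd3 k (fun y => pd3 k f (x - s • y)) z = -s * pd3 k (pd3 k f) (x - s • z) :=
      fun z => pd3_shift (hf.pd k).1.diff k x s z
    have hd : Differentiable ℝ fun y => pd3 k f (x - s • y) :=
      (hf.pd k).1.diff.comp (by fun_prop)
    have := ibp (f := w') (g := fun y => pd3 k f (x - s • y)) k h.diff hd
      (hpd k _ (hf.pd k))
      (by
        simp_rw [hps]
        have := (hcomp _ ((hf.pd k).pd k)).const_mul (-s)
        refine this.congr (ae_of_all _ fun z => ?_)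
        simp only; ring) (hcomp _ (hf.pd k))
    simp_rw [hps] at this
    rw [← neg_eq_iff_eq_neg] at this
    rw [← this, ← integral_neg, ← integral_const_mul]
    refine integral_congr_ae (ae_of_all _ fun z => ?_)
    simp only; ring
  simp_rw [e2]
  rw [← Finset.mul_sum, av_def, ← integral_finsetSum _ fun k _ => hcomp _ ((hf.pd k).pd k)]
  simp_rw [lap3, Finset.mul_sum]

/-! ### Heat flow -/

lemma int_gauss {b : ℝ} (hb : 0 < b) : Integrable fun z : E3 => Real.exp (-b * ‖z‖ ^ 2) := by
  have := (GaussianFourier.integrable_cexp_neg_mul_sq_norm_add (V := E3) (b := b)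
    (by simpa using hb) 0 0).norm
  refine this.congr (ae_of_all _ fun z => ?_)
  simp only [Complex.norm_exp]
  congr 1
  have : (-(b : ℂ) * (‖z‖ : ℂ) ^ 2) = ((-b * ‖z‖ ^ 2 : ℝ) : ℂ) := by push_cast; ring
  rw [this, zero_mul, add_zero, Complex.ofReal_re]

/-- The normalizing constant of `gau`. -/
def gauC : ℝ := ∫ z : E3, Real.exp (-(1 / 2) * ‖z‖ ^ 2)

/-- The standard Gaussian density on `ℝ³`. -/
def gau (z : E3) : ℝ := gauC⁻¹ * Real.exp (-(1 / 2) * ‖z‖ ^ 2)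

lemma gauC_pos : 0 < gauC :=
  integral_exp_pos (int_gauss (by norm_num))

lemma gau_pos (z : E3) : 0 < gau z := mul_pos (inv_pos.2 gauC_pos) (Real.exp_pos _)

lemma gau_int : Integrable gau := (int_gauss (by norm_num)).const_mul _

lemma gau_integral : ∫ z, gau z = 1 := by
  unfold gau
  rw [integral_const_mul]
  exact inv_mul_cancel₀ gauC_pos.ne'

lemma gau_norm_integral : ∫ z, ‖gau z‖ = 1 := by
  rw [← gau_integral]
  exact integral_congr_ae (ae_of_all _ fun z => Real.norm_of_nonneg (gau_pos z).le)

lemma gau_le (z : E3) : gau z ≤ gauC⁻¹ := by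
  unfold gau
  have : Real.exp (-(1 / 2) * ‖z‖ ^ 2) ≤ 1 := Real.exp_le_one_iff.2 (by nlinarith [sq_nonneg ‖z‖])
  have h := inv_pos.2 gauC_pos
  nlinarith

lemma gau_pair : Pair gau gau := by
  have hd : ∀ z : E3, HasDerivAt (fun t => gauC⁻¹ * Real.exp (-(1 / 2) * t))
      (gauC⁻¹ * (Real.exp (-(1 / 2) * ‖z‖ ^ 2) * -(1 / 2))) (‖z‖ ^ 2) := fun z => by
    have h1 : HasDerivAt (fun t : ℝ => -(1 / 2) * t) (-(1 / 2)) (‖z‖ ^ 2) := by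
      simpa using (hasDerivAt_id (‖z‖ ^ 2)).const_mul (-(1 / 2) : ℝ)
    exact (h1.exp).const_mul _
  refine ⟨gau_int, gau_int, ?_, ?_, fun k z => ?_⟩
  · have hm : Integrable fun z : E3 => gauC⁻¹ * Real.exp (-(1 / 4) * ‖z‖ ^ 2) :=
      (int_gauss (by norm_num)).const_mul _
    refine hm.mono' ?_ (ae_of_all _ fun z => ?_)
    · unfold gau; exact Continuous.aestronglyMeasurable (by fun_prop)
    · rw [norm_mul, norm_norm, Real.norm_of_nonneg (gau_pos z).le, gau]
      have h1 : ‖z‖ ≤ Real.exp (1 / 4 * ‖z‖ ^ 2) := by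
        have := Real.add_one_le_exp (1 / 4 * ‖z‖ ^ 2)
        nlinarith [sq_nonneg (‖z‖ / 2 - 1)]
      calc ‖z‖ * (gauC⁻¹ * Real.exp (-(1 / 2) * ‖z‖ ^ 2))
          ≤ Real.exp (1 / 4 * ‖z‖ ^ 2) * (gauC⁻¹ * Real.exp (-(1 / 2) * ‖z‖ ^ 2)) := by
            have := inv_pos.2 gauC_pos
            gcongr
        _ = gauC⁻¹ * (Real.exp (1 / 4 * ‖z‖ ^ 2) * Real.exp (-(1 / 2) * ‖z‖ ^ 2)) := by ring
        _ = _ := by rw [← Real.exp_add]; congr 2; ring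
  · unfold gau
    have : Differentiable ℝ fun z : E3 => ‖z‖ ^ 2 := differentiable_id.norm_sq ℝ
    fun_prop
  · have := pd3_radial (hd z) k
    unfold gau
    rw [this]; ring

/-- The heat flow at time `s²/2`. -/
def heat (s : ℝ) (f : E3 → ℝ) : E3 → ℝ := av gau s f

lemma heat_zero (f : E3 → ℝ) (x : E3) : heat 0 f x = f x := by
  rw [heat, av_zero, gau_integral, one_mul]

lemma heat_bdd {f : E3 → ℝ} {C : ℝ} (hC : ∀ x, |f x| ≤ C) (s : ℝ) (x : E3) : |heat s f x| ≤ C := by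
  have := AV_norm_le (m := volume) (Y := fun z => s • z) gau_int (f := f) hC x
  rwa [gau_norm_integral, one_mul] at this

lemma heat_smooth {f : E3 → ℝ} (hf : Tst f) (s : ℝ) : Smooth (heat s f) :=
  AV_smooth gau_int (meas_smul s) hf

lemma heat_pd {f : E3 → ℝ} (hf : Tst f) (s : ℝ) (j : Fin 3) :
    pd3 j (heat s f) = heat s (pd3 j f) := AV_pd3 gau_int (meas_smul s) hf j

lemma heat_lap {f : E3 → ℝ} (hf : Tst f) (s : ℝ) :
    lap3 (heat s f) = heat s (lap3 f) := AV_lap3 gau_int (meas_smul s) hf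

lemma heat_int {f : E3 → ℝ} (hf : Tst f) (s : ℝ) : Integrable (heat s f) :=
  AV_int gau_int (meas_smul s) hf.1.cont hf.integrable

lemma heat_int_le {f : E3 → ℝ} (hf : Tst f) (s : ℝ) : ∫ x, ‖heat s f x‖ ≤ ∫ x, ‖f x‖ := by
  have := AV_int_norm_le gau_int (meas_smul s) hf.1.cont hf.integrable
  rwa [gau_norm_integral, one_mul] at this

lemma heat_hasDerivAt {f : E3 → ℝ} (hf : Tst f) (x : E3) (s : ℝ) :
    HasDerivAt (fun s => heat s f x) (s * heat s (lap3 f) x) s := gau_pair.hasDerivAt hf x s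

lemma heat_cont {f : E3 → ℝ} (hf : Tst f) : Continuous fun q : ℝ × E3 => heat q.1 f q.2 :=
  av_cont gau_int hf

lemma heat_decay {f : E3 → ℝ} (hf : Tst f) {s : ℝ} (hs : 0 < s) (x : E3) :
    |heat s f x| ≤ gauC⁻¹ * (s ^ 3)⁻¹ * ∫ y, ‖f y‖ := by
  have hi : Integrable fun z : E3 => ‖f (x - s • z)‖ := by
    have h1 : Integrable fun y => ‖f (x - y)‖ := hf.integrable.norm.comp_sub_left x
    exact h1.comp_smul hs.ne'
  calc |heat s f x| = ‖∫ z, gau z * f (x - s • z)‖ := rfl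
    _ ≤ ∫ z, gauC⁻¹ * ‖f (x - s • z)‖ := by
        refine norm_integral_le_of_norm_le (hi.const_mul _) (ae_of_all _ fun z => ?_)
        rw [norm_mul, Real.norm_of_nonneg (gau_pos z).le]
        gcongr; exact gau_le z
    _ = gauC⁻¹ * ((s ^ 3)⁻¹ * ∫ y, ‖f y‖) := by
        rw [integral_const_mul, Measure.integral_comp_smul volume (fun y => ‖f (x - y)‖) s,
          integral_sub_left_eq_self (fun y => ‖f y‖) volume x]
        have : 0 < (s ^ 3)⁻¹ := by positivity
        simp [abs_of_pos hs]
    _ = _ := by ring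

lemma heat_int_prod {f : E3 → ℝ} (hf : Tst f) (T : ℝ) :
    Integrable (fun q : ℝ × E3 => heat q.1 f q.2)
      ((volume.restrict (Set.Ioc 0 T)).prod volume) := by
  have hm : AEStronglyMeasurable (fun q : ℝ × E3 => heat q.1 f q.2)
      ((volume.restrict (Set.Ioc 0 T)).prod volume) := (heat_cont hf).aestronglyMeasurable
  rw [integrable_prod_iff hm]
  refine ⟨ae_of_all _ fun s => heat_int hf s, ?_⟩
  refine (integrable_const (∫ x, ‖f x‖)).mono' hm.norm.integral_prod_right' ?_
  refine ae_of_all _ fun s => ?_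
  rw [Real.norm_of_nonneg (integral_nonneg fun x => norm_nonneg _)]
  exact heat_int_le hf s

end TCM

namespace TCM

/-! ### The Bellman flow identity -/

lemma bdd_comp {D : ℝ → ℝ → ℝ} (hD : Continuous fun w : ℝ × ℝ => D w.1 w.2) (a b : ℝ) :
    ∃ C, ∀ x y, |x| ≤ a → |y| ≤ b → ‖D x y‖ ≤ C := by
  obtain ⟨C, hC⟩ := ((isCompact_Icc (a := -a) (b := a)).prod
    (isCompact_Icc (a := -b) (b := b))).exists_bound_of_continuousOn hD.continuousOn
  exact ⟨C, fun x y hx hy => hC (x, y) ⟨abs_le.1 hx, abs_le.1 hy⟩⟩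

lemma C2.c1 {T T1 T2 T11 T12 T22 : ℝ → ℝ → ℝ} (h : C2 T T1 T2 T11 T12 T22) :
    Continuous fun w : ℝ × ℝ => T1 w.1 w.2 :=
  continuous_iff_continuousAt.2 fun w => (h.d1 w.1 w.2).continuousAt

lemma C2.c2 {T T1 T2 T11 T12 T22 : ℝ → ℝ → ℝ} (h : C2 T T1 T2 T11 T12 T22) :
    Continuous fun w : ℝ × ℝ => T2 w.1 w.2 :=
  continuous_iff_continuousAt.2 fun w => (h.d2 w.1 w.2).continuousAt

lemma C2.c0 {T T1 T2 T11 T12 T22 : ℝ → ℝ → ℝ} (h : C2 T T1 T2 T11 T12 T22) :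
    Continuous fun w : ℝ × ℝ => T w.1 w.2 :=
  continuous_iff_continuousAt.2 fun w => (h.d0 w.1 w.2).continuousAt

lemma flow_cont {f g : E3 → ℝ} (hf : Tst f) (hg : Tst g) {D : ℝ → ℝ → ℝ}
    (hD : Continuous fun w : ℝ × ℝ => D w.1 w.2) :
    Continuous fun q : ℝ × E3 => D (heat q.1 f q.2) (heat q.1 g q.2) :=
  hD.comp ((heat_cont hf).prodMk (heat_cont hg))

lemma flow_int {f g k : E3 → ℝ} (hf : Tst f) (hg : Tst g) (hk : Tst k) {D : ℝ → ℝ → ℝ}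
    (hD : Continuous fun w : ℝ × ℝ => D w.1 w.2) (s : ℝ) :
    Integrable fun x => D (heat s f x) (heat s g x) * heat s k x := by
  obtain ⟨a, -, ha⟩ := hf.bdd
  obtain ⟨b, -, hb⟩ := hg.bdd
  obtain ⟨C, hC⟩ := bdd_comp hD a b
  refine (heat_int hk s).bdd_mul (c := C) ?_ (ae_of_all _ fun x => ?_)
  · exact ((flow_cont hf hg hD).comp (Continuous.prodMk_right s)).aestronglyMeasurable
  · exact hC _ _ (heat_bdd ha _ _) (heat_bdd hb _ _)

lemma flow_int_prod {f g k : E3 → ℝ} (hf : Tst f) (hg : Tst g) (hk : Tst k) {D : ℝ → ℝ → ℝ}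
    (hD : Continuous fun w : ℝ × ℝ => D w.1 w.2) (T : ℝ) :
    Integrable (fun q : ℝ × E3 => q.1 * (D (heat q.1 f q.2) (heat q.1 g q.2) * heat q.1 k q.2))
      ((volume.restrict (Set.Ioc 0 T)).prod volume) := by
  obtain ⟨a, -, ha⟩ := hf.bdd
  obtain ⟨b, -, hb⟩ := hg.bdd
  obtain ⟨C, hC⟩ := bdd_comp hD a b
  have h1 : Integrable (fun q : ℝ × E3 => D (heat q.1 f q.2) (heat q.1 g q.2) * heat q.1 k q.2)
      ((volume.restrict (Set.Ioc 0 T)).prod volume) := by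
    refine (heat_int_prod hk T).bdd_mul (c := C) ?_ (ae_of_all _ fun x => ?_)
    · exact (flow_cont hf hg hD).aestronglyMeasurable
    · exact hC _ _ (heat_bdd ha _ _) (heat_bdd hb _ _)
  have hae : ∀ᵐ q : ℝ × E3 ∂((volume.restrict (Set.Ioc 0 T)).prod volume), q.1 ∈ Set.Ioc 0 T :=
    Measure.quasiMeasurePreserving_fst.ae (ae_restrict_mem measurableSet_Ioc)
  refine h1.bdd_mul (c := T) continuous_fst.aestronglyMeasurable ?_
  filter_upwards [hae] with q hq
  rw [Real.norm_of_nonneg hq.1.le]; exact hq.2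

/-- The Hessian form of `Θ` evaluated on `(∇ heat f, ∇ heat g)`, in the direction `k`. -/
def hessQ (T11 T12 T22 : ℝ → ℝ → ℝ) (f g : E3 → ℝ) (k : Fin 3) (s : ℝ) (x : E3) : ℝ :=
  T11 (heat s f x) (heat s g x) * heat s (pd3 k f) x ^ 2
    + 2 * T12 (heat s f x) (heat s g x) * (heat s (pd3 k f) x * heat s (pd3 k g) x)
    + T22 (heat s f x) (heat s g x) * heat s (pd3 k g) x ^ 2

lemma flow_pd {T T1 T2 : ℝ → ℝ → ℝ}
    (h : ∀ x y, HasFDerivAt (fun w : ℝ × ℝ => T w.1 w.2) (lf (T1 x y) (T2 x y)) (x, y))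
    {f g : E3 → ℝ} (hf : Tst f) (hg : Tst g) (k : Fin 3) (s : ℝ) (x : E3) :
    HasFDerivAt (fun x => T (heat s f x) (heat s g x))
      ((T1 (heat s f x) (heat s g x)) • fderiv ℝ (heat s f) x
        + (T2 (heat s f x) (heat s g x)) • fderiv ℝ (heat s g) x) x ∧
    pd3 k (fun x => T (heat s f x) (heat s g x)) x =
      T1 (heat s f x) (heat s g x) * heat s (pd3 k f) x
        + T2 (heat s f x) (heat s g x) * heat s (pd3 k g) x := by
  have h1 : HasFDerivAt (fun x => T (heat s f x) (heat s g x))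
      ((T1 (heat s f x) (heat s g x)) • fderiv ℝ (heat s f) x
        + (T2 (heat s f x) (heat s g x)) • fderiv ℝ (heat s g) x) x := by
    have := (h (heat s f x) (heat s g x)).comp x
      (((heat_smooth hf s).diffAt x).hasFDerivAt.prodMk ((heat_smooth hg s).diffAt x).hasFDerivAt)
    refine HasFDerivAt.congr_fderiv this ?_
    ext w
    simp [lf]
  refine ⟨h1, ?_⟩
  rw [← heat_pd hf, ← heat_pd hg]
  unfold pd3
  rw [h1.fderiv]
  simp

lemma mul_int {f g : E3 → ℝ} {C : ℝ} (hg : Integrable g) (hf : Continuous f)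
    (hC : ∀ x, |f x| ≤ C) : Integrable fun x => g x * f x :=
  hg.mul_bdd (c := C) hf.aestronglyMeasurable (ae_of_all _ hC)

lemma flow_ibp {T T1 T2 T11 T12 T22 : ℝ → ℝ → ℝ} (h : C2 T T1 T2 T11 T12 T22)
    {f g : E3 → ℝ} (hf : Tst f) (hg : Tst g) (s : ℝ) :
    ∫ x, (T1 (heat s f x) (heat s g x) * heat s (lap3 f) x
        + T2 (heat s f x) (heat s g x) * heat s (lap3 g) x)
      = -∫ x, ∑ k, hessQ T11 T12 T22 f g k s x := by
  have bd : ∀ (k : E3 → ℝ), Tst k → ∃ C, ∀ x, |heat s k x| ≤ C := fun k hk => by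
    obtain ⟨C, -, hC⟩ := hk.bdd
    exact ⟨C, heat_bdd hC s⟩
  have hcs : ∀ (k : E3 → ℝ), Tst k → Continuous (heat s k) := fun k hk => (heat_smooth hk s).cont
  have step : ∀ k, ∫ x, (T1 (heat s f x) (heat s g x) * heat s (pd3 k (pd3 k f)) x
        + T2 (heat s f x) (heat s g x) * heat s (pd3 k (pd3 k g)) x)
      = -∫ x, hessQ T11 T12 T22 f g k s x := by
    intro k
    obtain ⟨Cf, hCf⟩ := bd _ (hf.pd k)
    obtain ⟨Cg, hCg⟩ := bd _ (hg.pd k)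
    have i1 := flow_int hf hg ((hf.pd k).pd k) h.c1 s
    have i2 := flow_int hf hg ((hg.pd k).pd k) h.c2 s
    have j11 := mul_int (flow_int hf hg (hf.pd k) h.c11 s) (hcs _ (hf.pd k)) hCf
    have j12 := mul_int (flow_int hf hg (hg.pd k) h.c12 s) (hcs _ (hf.pd k)) hCf
    have j21 := mul_int (flow_int hf hg (hf.pd k) h.c12 s) (hcs _ (hg.pd k)) hCg
    have j22 := mul_int (flow_int hf hg (hg.pd k) h.c22 s) (hcs _ (hg.pd k)) hCg
    have e1 : ∫ x, T1 (heat s f x) (heat s g x) * heat s (pd3 k (pd3 k f)) x = -∫ x,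
        (T11 (heat s f x) (heat s g x) * heat s (pd3 k f) x
        + T12 (heat s f x) (heat s g x) * heat s (pd3 k g) x) * heat s (pd3 k f) x := by
      have := ibp (f := fun x => T1 (heat s f x) (heat s g x)) (g := heat s (pd3 k f)) k
        (fun x => (flow_pd h.d1 hf hg k s x).1.differentiableAt) (heat_smooth (hf.pd k) s).diff
        ?_ (by rw [heat_pd (hf.pd k)]; exact i1) (flow_int hf hg (hf.pd k) h.c1 s)
      · rw [heat_pd (hf.pd k)] at this
        rw [this]
        simp_rw [fun x => (flow_pd h.d1 hf hg k s x).2]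
      · simp_rw [fun x => (flow_pd h.d1 hf hg k s x).2, add_mul]
        exact j11.add j12
    have e2 : ∫ x, T2 (heat s f x) (heat s g x) * heat s (pd3 k (pd3 k g)) x = -∫ x,
        (T12 (heat s f x) (heat s g x) * heat s (pd3 k f) x
        + T22 (heat s f x) (heat s g x) * heat s (pd3 k g) x) * heat s (pd3 k g) x := by
      have := ibp (f := fun x => T2 (heat s f x) (heat s g x)) (g := heat s (pd3 k g)) k
        (fun x => (flow_pd h.d2 hf hg k s x).1.differentiableAt) (heat_smooth (hg.pd k) s).diff
        ?_ (by rw [heat_pd (hg.pd k)]; exact i2) (flow_int hf hg (hg.pd k) h.c2 s)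
      · rw [heat_pd (hg.pd k)] at this
        rw [this]
        simp_rw [fun x => (flow_pd h.d2 hf hg k s x).2]
      · simp_rw [fun x => (flow_pd h.d2 hf hg k s x).2, add_mul]
        exact j21.add j22
    rw [integral_add i1 i2, e1, e2, ← neg_add, ← integral_add]
    · congr 1
      refine integral_congr_ae (ae_of_all _ fun x => ?_)
      simp only [hessQ]; ring
    · simp_rw [add_mul]; exact j11.add j12
    · simp_rw [add_mul]; exact j21.add j22
  have hlapf : ∀ x, heat s (lap3 f) x = ∑ k, heat s (pd3 k (pd3 k f)) x := fun x => by
    rw [← heat_lap hf, lap3]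
    simp_rw [heat_pd hf, fun k => heat_pd (hf.pd k)]
  have hlapg : ∀ x, heat s (lap3 g) x = ∑ k, heat s (pd3 k (pd3 k g)) x := fun x => by
    rw [← heat_lap hg, lap3]
    simp_rw [heat_pd hg, fun k => heat_pd (hg.pd k)]
  simp_rw [hlapf, hlapg, Finset.mul_sum, ← Finset.sum_add_distrib]
  rw [integral_finsetSum, integral_finsetSum, ← Finset.sum_neg_distrib]
  · exact Finset.sum_congr rfl fun k _ => step k
  · intro k _
    obtain ⟨Cf, hCf⟩ := bd _ (hf.pd k)
    obtain ⟨Cg, hCg⟩ := bd _ (hg.pd k)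
    have j11 := mul_int (flow_int hf hg (hf.pd k) h.c11 s) (hcs _ (hf.pd k)) hCf
    have j21 := mul_int (flow_int hf hg (hf.pd k) h.c12 s) (hcs _ (hg.pd k)) hCg
    have j22 := mul_int (flow_int hf hg (hg.pd k) h.c22 s) (hcs _ (hg.pd k)) hCg
    refine ((j11.add (j21.const_mul 2)).add j22).congr (ae_of_all _ fun x => ?_)
    simp only [hessQ, Pi.add_apply]; ring
  · exact fun k _ => (flow_int hf hg ((hf.pd k).pd k) h.c1 s).add
      (flow_int hf hg ((hg.pd k).pd k) h.c2 s)

/-- Along the heat flow the functional `∫ Θ(f, g)` decreases at the rate given by the Hessian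
of `Θ`. -/
lemma flow {T T1 T2 T11 T12 T22 : ℝ → ℝ → ℝ} (h : C2 T T1 T2 T11 T12 T22)
    {f g : E3 → ℝ} (hf : Tst f) (hg : Tst g) {t : ℝ} (ht : 0 ≤ t) :
    Integrable (fun x => T (f x) (g x) - T (heat t f x) (heat t g x)) ∧
    IntegrableOn (fun s => s * ∫ x, ∑ k, hessQ T11 T12 T22 f g k s x) (Set.Ioc 0 t) ∧
    ∫ x, (T (f x) (g x) - T (heat t f x) (heat t g x))
      = ∫ s in Set.Ioc 0 t, s * ∫ x, ∑ k, hessQ T11 T12 T22 f g k s x := by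
  set D : ℝ × E3 → ℝ := fun q =>
    q.1 * (T1 (heat q.1 f q.2) (heat q.1 g q.2) * heat q.1 (lap3 f) q.2)
    + q.1 * (T2 (heat q.1 f q.2) (heat q.1 g q.2) * heat q.1 (lap3 g) q.2) with hD
  have hDi : Integrable D ((volume.restrict (Set.Ioc 0 t)).prod volume) :=
    (flow_int_prod hf hg hf.lap h.c1 t).add (flow_int_prod hf hg hg.lap h.c2 t)
  have hDc : Continuous D := by
    have a1 := flow_cont hf hg h.c1
    have a2 := flow_cont hf hg h.c2
    have a3 := heat_cont hf.lap
    have a4 := heat_cont hg.lap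
    exact (continuous_fst.mul (a1.mul a3)).add (continuous_fst.mul (a2.mul a4))
  have hpt : ∀ x, T (f x) (g x) - T (heat t f x) (heat t g x) = -∫ s in Set.Ioc 0 t, D (s, x) := by
    intro x
    have hd : ∀ s ∈ Set.uIcc 0 t, HasDerivAt (fun s => T (heat s f x) (heat s g x)) (D (s, x)) s := by
      intro s _
      have := (h.d0 (heat s f x) (heat s g x)).comp_hasDerivAt s
        ((heat_hasDerivAt hf x s).prodMk (heat_hasDerivAt hg x s))
      convert! this using 1
      simp [lf, hD]; ring
    have := intervalIntegral.integral_eq_sub_of_hasDerivAt hd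
      ((hDc.comp (Continuous.prodMk_left x)).intervalIntegrable 0 t)
    rw [intervalIntegral.integral_of_le ht] at this
    rw [this, heat_zero, heat_zero]; ring
  have hs : ∀ s, ∫ x, D (s, x) = -(s * ∫ x, ∑ k, hessQ T11 T12 T22 f g k s x) := by
    intro s
    rw [← mul_neg, ← flow_ibp h hf hg s, ← integral_const_mul]
    refine integral_congr_ae (ae_of_all _ fun x => ?_)
    simp only [hD]; ring
  refine ⟨?_, ?_, ?_⟩
  · simp_rw [hpt]
    exact hDi.integral_prod_right.neg
  · have := hDi.integral_prod_left.neg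
    refine Integrable.congr this (ae_of_all _ fun s => ?_)
    simp [hs]
  · simp_rw [hpt]
    rw [integral_neg, ← integral_integral_swap (f := fun s x => D (s, x)) hDi, ← integral_neg]
    simp_rw [hs, neg_neg]

lemma C2_mul : C2 (fun x y => x * y) (fun _ y => y) (fun x _ => x) (fun _ _ => 0) (fun _ _ => 1)
    (fun _ _ => 0) := by
  have hx : ∀ x y : ℝ, HasFDerivAt (fun w : ℝ × ℝ => w.1) (lf 1 0) (x, y) := fun x y => by
    simpa [lf] using (hasFDerivAt_fst (𝕜 := ℝ) (p := (x, y)))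
  have hy : ∀ x y : ℝ, HasFDerivAt (fun w : ℝ × ℝ => w.2) (lf 0 1) (x, y) := fun x y => by
    simpa [lf] using (hasFDerivAt_snd (𝕜 := ℝ) (p := (x, y)))
  refine ⟨fun x y => ?_, fun x y => hy x y, fun x y => hx x y, continuous_const, continuous_const,
    continuous_const⟩
  refine ((hx x y).mul (hy x y)).congr_fderiv ?_
  ext <;> simp [lf]

lemma heat_pd_int {f g : E3 → ℝ} (hf : Tst f) (hg : Tst g) (s : ℝ) :
    Integrable fun x => heat s f x * heat s g x := by
  obtain ⟨C, -, hC⟩ := hg.bdd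
  exact mul_int (heat_int hf s) (heat_smooth hg s).cont (heat_bdd hC s)

lemma heat_ibp {f g : E3 → ℝ} (hf : Tst f) (hg : Tst g) (s : ℝ) (k : Fin 3) :
    ∫ x, heat s f x * heat s (pd3 k g) x = -∫ x, heat s (pd3 k f) x * heat s g x := by
  rw [← heat_pd hg, ← heat_pd hf]
  refine ibp k (heat_smooth hf s).diff (heat_smooth hg s).diff ?_ ?_ (heat_pd_int hf hg s)
  · rw [heat_pd hf]; exact heat_pd_int (hf.pd k) hg s
  · rw [heat_pd hg]; exact heat_pd_int hf (hg.pd k) s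

/-- Moving derivatives: `∑ₖ ∫ ∂ₖ∂ᵢ∂ⱼΨ ∂ₖg = ∫ ∂ⱼΔΨ ∂ᵢg`, along the heat flow. -/
lemma riesz_shift {Ψ g : E3 → ℝ} (hΨ : Tst Ψ) (hg : Tst g) (i j : Fin 3) (s : ℝ) :
    ∑ k, ∫ x, heat s (pd3 k (pd3 i (pd3 j Ψ))) x * heat s (pd3 k g) x
      = ∫ x, heat s (pd3 j (lap3 Ψ)) x * heat s (pd3 i g) x := by
  have e : ∀ k, ∫ x, heat s (pd3 k (pd3 i (pd3 j Ψ))) x * heat s (pd3 k g) x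
      = ∫ x, heat s (pd3 j (pd3 k (pd3 k Ψ))) x * heat s (pd3 i g) x := by
    intro k
    have t1 : Tst (pd3 i (pd3 j Ψ)) := (hΨ.pd j).pd i
    have t2 : Tst (pd3 k (pd3 k (pd3 j Ψ))) := ((hΨ.pd j).pd k).pd k
    rw [heat_ibp (t1.pd k) hg s k]
    have c1 : pd3 k (pd3 k (pd3 i (pd3 j Ψ))) = pd3 i (pd3 j (pd3 k (pd3 k Ψ))) := by
      rw [pd3_comm' (hΨ.pd j).1 k i, pd3_comm' ((hΨ.pd j).pd k).1 k i, pd3_comm' hΨ.1 k j,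
        pd3_comm' (hΨ.pd k).1 k j]
    rw [c1, heat_ibp (((hΨ.pd k).pd k).pd j) hg s i]
  simp_rw [e]
  rw [← integral_finsetSum _ fun k _ => heat_pd_int (((hΨ.pd k).pd k).pd j) (hg.pd i) s]
  refine integral_congr_ae (ae_of_all _ fun x => ?_)
  simp only
  rw [← Finset.sum_mul]
  congr 1
  rw [← heat_pd hΨ.lap, ← heat_lap hΨ, show lap3 (heat s Ψ) = fun x => ∑ k, pd3 k (pd3 k (heat s Ψ)) x
    from rfl, pd3_sum _ _ fun k _ => ((((heat_smooth hΨ s).pd k).pd k).diffAt x)]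
  simp_rw [heat_pd hΨ, fun k => heat_pd (hΨ.pd k), fun k => heat_pd ((hΨ.pd k).pd k)]

lemma hessQ_int {T T1 T2 T11 T12 T22 : ℝ → ℝ → ℝ} (h : C2 T T1 T2 T11 T12 T22)
    {f g : E3 → ℝ} (hf : Tst f) (hg : Tst g) (k : Fin 3) (s : ℝ) :
    Integrable fun x => hessQ T11 T12 T22 f g k s x := by
  obtain ⟨Cf, -, hCf⟩ := (hf.pd k).bdd
  obtain ⟨Cg, -, hCg⟩ := (hg.pd k).bdd
  have hcs : ∀ (k : E3 → ℝ), Tst k → Continuous (heat s k) := fun k hk => (heat_smooth hk s).cont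
  have j11 := mul_int (flow_int hf hg (hf.pd k) h.c11 s) (hcs _ (hf.pd k)) (heat_bdd hCf s)
  have j21 := mul_int (flow_int hf hg (hf.pd k) h.c12 s) (hcs _ (hg.pd k)) (heat_bdd hCg s)
  have j22 := mul_int (flow_int hf hg (hg.pd k) h.c22 s) (hcs _ (hg.pd k)) (heat_bdd hCg s)
  refine ((j11.add (j21.const_mul 2)).add j22).congr (ae_of_all _ fun x => ?_)
  simp only [hessQ, Pi.add_apply]; ring

/-- The pairing of `∂ᵢ∂ⱼΨ` with `g` is an integral over all times of products of gradients along the heat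
flow (`flow` for the product function, then `riesz_shift`). Its integrand is dominated by the Hessian
of the Bellman function, hence by the decrease of `∫ bell` along the flow of `(ΔΨ, g)`. -/
lemma riesz_bell {p q e K : ℝ} (hp : 3 ≤ p) (hq : q = p / (p - 1)) (he : e = 1 - 2 / p)
    (hK : K = 2 + 17 * p) {Ψ g : E3 → ℝ} (hΨ : Tst Ψ) (hg : Tst g) (i j : Fin 3) :
    |∫ x, pd3 i (pd3 j Ψ) x * g x| ≤
      ∫ x, (bell (p / 2) (q / 2) e K (lap3 Ψ x) (g x) - K) := by
  set a := pd3 i (pd3 j Ψ) with ha_def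
  have ha : Tst a := (hΨ.pd j).pd i
  have hh := hΨ.lap
  set B := bell (p / 2) (q / 2) e K with hB
  have hC := bell_C2 (p / 2) (q / 2) e K
  have hp0 : 0 < p := by linarith
  have hp1 : 0 < p - 1 := by linarith
  have hq0 : 0 ≤ q / 2 := by rw [hq]; positivity
  have hK0 : 0 ≤ K := by rw [hK]; positivity
  have hBi : Integrable fun x => B (lap3 Ψ x) (g x) - K := by
    refine Continuous.integrable_of_hasCompactSupport ?_ ?_
    · exact (hC.c0.comp (hh.1.cont.prodMk hg.1.cont)).sub continuous_const
    · obtain ⟨r1, h1⟩ := hh.2.isCompact.isBounded.subset_closedBall 0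
      obtain ⟨r2, h2⟩ := hg.2.isCompact.isBounded.subset_closedBall 0
      refine HasCompactSupport.intro (isCompact_closedBall (0 : E3) (max r1 r2)) fun x hx => ?_
      have z1 : lap3 Ψ x = 0 := image_eq_zero_of_notMem_tsupport fun hm =>
        hx (closedBall_subset_closedBall (le_max_left _ _) (h1 hm))
      have z2 : g x = 0 := image_eq_zero_of_notMem_tsupport fun hm =>
        hx (closedBall_subset_closedBall (le_max_right _ _) (h2 hm))
      simp [z1, z2, hB, bell, wt]
  have main : ∀ t : ℝ, 0 ≤ t → |∫ x, (a x * g x - heat t a x * heat t g x)| ≤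
      ∫ x, (B (lap3 Ψ x) (g x) - K) := by
    intro t ht
    obtain ⟨-, i1, e1⟩ := flow C2_mul ha hg ht
    obtain ⟨k2, i2, e2⟩ := flow hC hh hg ht
    rw [e1]
    calc |∫ s in Set.Ioc 0 t, s * ∫ x, ∑ k,
          hessQ (fun _ _ => 0) (fun _ _ => 1) (fun _ _ => 0) a g k s x|
        ≤ ∫ s in Set.Ioc 0 t, s * ∫ x, ∑ k, hessQ (bell11 (p / 2) (q / 2) e)
            (bell12 (p / 2) (q / 2) e) (bell22 (p / 2) (q / 2) e K) (lap3 Ψ) g k s x := by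
          rw [← Real.norm_eq_abs]
          refine norm_integral_le_of_norm_le i2 ?_
          filter_upwards [ae_restrict_mem measurableSet_Ioc] with s hs
          rw [norm_mul, Real.norm_of_nonneg hs.1.le]
          refine mul_le_mul_of_nonneg_left ?_ hs.1.le
          have e3 : ∫ x, ∑ k, hessQ (fun _ _ => 0) (fun _ _ => 1) (fun _ _ => 0) a g k s x
              = ∫ x, 2 * (heat s (pd3 j (lap3 Ψ)) x * heat s (pd3 i g) x) := by
            rw [integral_finsetSum _ fun k _ => hessQ_int C2_mul ha hg k s, integral_const_mul,
              ← riesz_shift hΨ hg i j s, Finset.mul_sum]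
            refine Finset.sum_congr rfl fun k _ => ?_
            rw [← integral_const_mul]
            refine integral_congr_ae (ae_of_all _ fun x => ?_)
            simp only [hessQ, ha_def]; ring
          rw [e3]
          refine norm_integral_le_of_norm_le
            (integrable_finsetSum _ fun k _ => hessQ_int hC hh hg k s) (ae_of_all _ fun x => ?_)
          set S := (wt (p / 2) (heat s (lap3 Ψ) x) + wt (q / 2) (heat s g x)) ^ e with hS
          have hS0 : 0 < S := Real.rpow_pos_of_pos (S_pos _ _ _ _) _
          have hk : ∀ k : Fin 3, S * heat s (pd3 k (lap3 Ψ)) x ^ 2 + S⁻¹ * heat s (pd3 k g) x ^ 2 ≤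
              hessQ (bell11 (p / 2) (q / 2) e) (bell12 (p / 2) (q / 2) e)
                (bell22 (p / 2) (q / 2) e K) (lap3 Ψ) g k s x := fun k =>
            bell_hess hp hq he hK _ _ _ _
          refine le_trans ?_ (Finset.sum_le_sum fun k _ => hk k)
          rw [Finset.sum_add_distrib]
          have s1 : S * heat s (pd3 j (lap3 Ψ)) x ^ 2 ≤
              ∑ k, S * heat s (pd3 k (lap3 Ψ)) x ^ 2 :=
            Finset.single_le_sum (f := fun k => S * heat s (pd3 k (lap3 Ψ)) x ^ 2)
              (fun k _ => by positivity) (Finset.mem_univ j)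
          have s2 : S⁻¹ * heat s (pd3 i g) x ^ 2 ≤ ∑ k, S⁻¹ * heat s (pd3 k g) x ^ 2 :=
            Finset.single_le_sum (f := fun k => S⁻¹ * heat s (pd3 k g) x ^ 2)
              (fun k _ => by positivity) (Finset.mem_univ i)
          refine le_trans ?_ (add_le_add s1 s2)
          generalize heat s (pd3 j (lap3 Ψ)) x = X
          generalize heat s (pd3 i g) x = Y
          have hi : S⁻¹ * S = 1 := inv_mul_cancel₀ hS0.ne'
          have q1 : S * X ^ 2 + S⁻¹ * Y ^ 2 - 2 * (X * Y) = S⁻¹ * (S * X - Y) ^ 2 := by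
            field_simp
            ring
          have q2 : S * X ^ 2 + S⁻¹ * Y ^ 2 + 2 * (X * Y) = S⁻¹ * (S * X + Y) ^ 2 := by
            field_simp
            ring
          have p1 : 0 ≤ S⁻¹ * (S * X - Y) ^ 2 := by positivity
          have p2 : 0 ≤ S⁻¹ * (S * X + Y) ^ 2 := by positivity
          rw [Real.norm_eq_abs, abs_le]
          constructor <;> linarith
      _ = ∫ x, (B (lap3 Ψ x) (g x) - B (heat t (lap3 Ψ) x) (heat t g x)) := e2.symm
      _ ≤ _ := by
          refine integral_mono k2 hBi fun x => ?_
          have := bell_lower (a := p / 2) (e := e) hq0 hK0 (heat t (lap3 Ψ) x) (heat t g x)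
          simp only
          linarith
  -- let the time tend to infinity
  have hlim : Tendsto (fun t : ℝ => (∫ x, (B (lap3 Ψ x) (g x) - K))
      + gauC⁻¹ * (t ^ 3)⁻¹ * (∫ y, ‖a y‖) * ∫ y, ‖g y‖) atTop
      (nhds ((∫ x, (B (lap3 Ψ x) (g x) - K)) + gauC⁻¹ * 0 * (∫ y, ‖a y‖) * ∫ y, ‖g y‖)) := by
    refine tendsto_const_nhds.add (((Tendsto.const_mul _ ?_).mul_const _).mul_const _)
    exact (tendsto_pow_atTop (by norm_num)).inv_tendsto_atTop
  rw [mul_zero, zero_mul, zero_mul, add_zero] at hlim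
  refine ge_of_tendsto hlim ?_
  filter_upwards [eventually_gt_atTop 0] with t ht
  have h1 := main t ht.le
  rw [integral_sub (ha.mul_right hg.1).integrable (heat_pd_int ha hg t)] at h1
  have h2 : |∫ x, heat t a x * heat t g x| ≤ gauC⁻¹ * (t ^ 3)⁻¹ * (∫ y, ‖a y‖) * ∫ y, ‖g y‖ := by
    have hc : 0 ≤ gauC⁻¹ * (t ^ 3)⁻¹ * (∫ y, ‖a y‖) := by
      have := gauC_pos
      have : 0 ≤ ∫ y, ‖a y‖ := integral_nonneg fun _ => norm_nonneg _
      positivity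
    calc |∫ x, heat t a x * heat t g x|
        ≤ ∫ x, (gauC⁻¹ * (t ^ 3)⁻¹ * (∫ y, ‖a y‖)) * ‖heat t g x‖ := by
          rw [← Real.norm_eq_abs]
          refine norm_integral_le_of_norm_le ((heat_int hg t).norm.const_mul _)
            (ae_of_all _ fun x => ?_)
          rw [norm_mul]
          exact mul_le_mul_of_nonneg_right (heat_decay ha ht x) (norm_nonneg _)
      _ ≤ _ := by
          rw [integral_const_mul]
          exact mul_le_mul_of_nonneg_left (heat_int_le hg t) hc
  have := abs_sub_abs_le_abs_sub (∫ x, a x * g x) (∫ x, heat t a x * heat t g x)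
  linarith

end TCM

namespace TCM

lemma Tst.const_mul {f : E3 → ℝ} (hf : Tst f) (c : ℝ) : Tst (fun x => c * f x) :=
  hf.mul_left contDiff_const

lemma pd3_const_mul' {f : E3 → ℝ} (j : Fin 3) (c : ℝ) (hf : Smooth f) :
    pd3 j (fun y => c * f y) = fun y => c * pd3 j f y :=
  funext fun _ => pd3_const_mul j c (hf.diffAt _)

lemma lap3_const_mul {f : E3 → ℝ} (c : ℝ) (hf : Smooth f) :
    lap3 (fun y => c * f y) = fun y => c * lap3 f y := by
  funext x
  unfold lap3
  simp_rw [pd3_const_mul' _ c hf, fun j => pd3_const_mul' j c (hf.pd j), Finset.mul_sum]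

lemma Tst.rpow_int {f : E3 → ℝ} (hf : Tst f) {p : ℝ} (hp : 0 < p) :
    Integrable fun x => |f x| ^ p := by
  refine Continuous.integrable_of_hasCompactSupport ?_ ?_
  · exact (hf.1.cont.abs).rpow_const fun x => Or.inr hp.le
  · exact hf.2.comp_left (g := fun y => |y| ^ p) (by simp [hp.ne'])

/-- Boundedness of the double Riesz transforms on `L^p`, in dual form and for test functions. -/
lemma riesz_Lp {p q : ℝ} (hp : 3 ≤ p) (hq : q = p / (p - 1)) {Ψ g : E3 → ℝ} (hΨ : Tst Ψ)
    (hg : Tst g) (i j : Fin 3) :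
    |∫ x, pd3 i (pd3 j Ψ) x * g x| ≤ 2 * (2 ^ p + 4 + 17 * p) *
      ((∫ x, |lap3 Ψ x| ^ p) ^ (1 / p) * (∫ x, |g x| ^ q) ^ (1 / q)) := by
  have hp0 : 0 < p := by linarith
  have hp1 : 0 < p - 1 := by linarith
  have hq1 : 1 < q := by rw [hq, lt_div_iff₀ hp1]; linarith
  have hq0 : 0 < q := by linarith
  set C : ℝ := 2 ^ p + 4 + 17 * p with hCdef
  have hC0 : 0 < C := by positivity
  set I := |∫ x, pd3 i (pd3 j Ψ) x * g x| with hI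
  set A := ∫ x, |lap3 Ψ x| ^ p with hA
  set B := ∫ x, |g x| ^ q with hB
  set H := ∫ x, lap3 Ψ x ^ 2 with hH
  have hA0 : 0 ≤ A := integral_nonneg fun x => by positivity
  have hB0 : 0 ≤ B := integral_nonneg fun x => by positivity
  have h2i : Integrable fun x => lap3 Ψ x ^ 2 := by
    simpa only [pow_two] using (hΨ.lap.mul_right hΨ.lap.1).integrable
  -- the scaled inequality
  have sc : ∀ l m : ℝ, 0 < l → 0 < m → l * m * I ≤ C * (l ^ 2 * H + l ^ p * A + m ^ q * B) := by
    intro l m hl hm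
    have h1 := riesz_bell hp hq rfl rfl (hΨ.const_mul l) (hg.const_mul m) i j
    rw [pd3_const_mul' j l hΨ.1, pd3_const_mul' i l (hΨ.pd j).1, lap3_const_mul l hΨ.1] at h1
    have e1 : ∫ x, l * pd3 i (pd3 j Ψ) x * (m * g x) = l * m * ∫ x, pd3 i (pd3 j Ψ) x * g x := by
      rw [← integral_const_mul]
      refine integral_congr_ae (ae_of_all _ fun x => ?_)
      simp only; ring
    rw [e1, abs_mul, abs_of_pos (mul_pos hl hm)] at h1
    have ia := (hΨ.lap.rpow_int hp0).const_mul (l ^ p)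
    have ib := (hg.rpow_int hq0).const_mul (m ^ q)
    have i2 := h2i.const_mul (l ^ 2)
    refine h1.trans ?_
    have hb : ∀ x, bell (p / 2) (q / 2) (1 - 2 / p) (2 + 17 * p) (l * lap3 Ψ x) (m * g x)
        - (2 + 17 * p) ≤ C * (l ^ 2 * lap3 Ψ x ^ 2 + l ^ p * |lap3 Ψ x| ^ p + m ^ q * |g x| ^ q) := by
      intro x
      have := bell_upper hp hq rfl rfl (l * lap3 Ψ x) (m * g x)
      rw [mul_pow, abs_mul, abs_mul, abs_of_pos hl, abs_of_pos hm,
        Real.mul_rpow hl.le (abs_nonneg _), Real.mul_rpow hm.le (abs_nonneg _)] at this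
      refine this.trans (le_of_eq ?_)
      rw [hCdef]; ring
    refine (integral_mono_of_nonneg (ae_of_all _ fun x => ?_)
      (((i2.add ia).add ib).const_mul C) (ae_of_all _ hb)).trans (le_of_eq ?_)
    · exact bell_lower (by positivity) (by positivity) _ _
    · simp only [Pi.add_apply]
      have i3 : Integrable fun x => l ^ 2 * lap3 Ψ x ^ 2 + l ^ p * |lap3 Ψ x| ^ p := i2.add ia
      rw [integral_const_mul, integral_add i3 ib, integral_add i2 ia, integral_const_mul,
        integral_const_mul, integral_const_mul]
  -- choose the scaling parameters
  have key : ∀ a b : ℝ, A < a → B < b → I ≤ 2 * C * (a ^ (1 / p) * b ^ (1 / q)) := by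
    intro a b ha hb
    have ha0 : 0 < a := hA0.trans_lt ha
    have hb0 : 0 < b := hB0.trans_lt hb
    have hpa : 0 < a ^ (1 / p) := Real.rpow_pos_of_pos ha0 _
    have hpb : 0 < b ^ (1 / q) := Real.rpow_pos_of_pos hb0 _
    have hL : ∀ L : ℝ, 1 ≤ L → I ≤ 2 * C * (a ^ (1 / p) * b ^ (1 / q))
        + C * (a ^ (1 / p) * b ^ (1 / q)) * ((a ^ (1 / p))⁻¹ ^ 2 * H) * L⁻¹ := by
      intro L hL1
      have hL0 : 0 < L := by linarith
      have h1 := sc (L * (a ^ (1 / p))⁻¹) (L ^ (p - 1) * (b ^ (1 / q))⁻¹) (by positivity)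
        (by positivity)
      have e1 : (L * (a ^ (1 / p))⁻¹) ^ p = L ^ p * a⁻¹ := by
        rw [Real.mul_rpow hL0.le (by positivity), Real.inv_rpow (by positivity),
          ← Real.rpow_mul ha0.le, one_div_mul_cancel hp0.ne', Real.rpow_one]
      have e2 : (L ^ (p - 1) * (b ^ (1 / q))⁻¹) ^ q = L ^ p * b⁻¹ := by
        rw [Real.mul_rpow (by positivity) (by positivity), Real.inv_rpow (by positivity),
          ← Real.rpow_mul hb0.le, one_div_mul_cancel hq0.ne', Real.rpow_one, ← Real.rpow_mul hL0.le,
          hq, mul_div_cancel₀ _ hp1.ne']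
      have e3 : L * L ^ (p - 1) = L ^ p := by
        rw [Real.rpow_sub_one hL0.ne']; field_simp
      have hLp : 0 < L ^ p := by positivity
      have e4 : L ^ 2 ≤ L ^ p * L⁻¹ := by
        rw [← div_eq_mul_inv, ← Real.rpow_sub_one hL0.ne', ← Real.rpow_natCast]
        exact Real.rpow_le_rpow_of_exponent_le hL1 (by push_cast; linarith)
      rw [e1, e2] at h1
      have hH0 : 0 ≤ H := integral_nonneg fun x => by positivity
      have s1 : L ^ p * a⁻¹ * A ≤ L ^ p := by
        rw [mul_assoc]
        refine mul_le_of_le_one_right hLp.le ?_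
        rw [inv_mul_le_one₀ ha0]; exact ha.le
      have s2 : L ^ p * b⁻¹ * B ≤ L ^ p := by
        rw [mul_assoc]
        refine mul_le_of_le_one_right hLp.le ?_
        rw [inv_mul_le_one₀ hb0]; exact hb.le
      have s3 : (L * (a ^ (1 / p))⁻¹) ^ 2 * H ≤ L ^ p * (L⁻¹ * ((a ^ (1 / p))⁻¹ ^ 2 * H)) := by
        rw [mul_pow, ← mul_assoc (L ^ p), mul_assoc]
        exact mul_le_mul_of_nonneg_right e4 (by positivity)
      have h2 : L ^ p * ((a ^ (1 / p))⁻¹ * (b ^ (1 / q))⁻¹ * I) ≤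
          L ^ p * (C * (L⁻¹ * ((a ^ (1 / p))⁻¹ ^ 2 * H) + 2)) := by
        calc L ^ p * ((a ^ (1 / p))⁻¹ * (b ^ (1 / q))⁻¹ * I)
            = L * (a ^ (1 / p))⁻¹ * (L ^ (p - 1) * (b ^ (1 / q))⁻¹) * I := by rw [← e3]; ring
          _ ≤ _ := h1
          _ ≤ C * (L ^ p * (L⁻¹ * ((a ^ (1 / p))⁻¹ ^ 2 * H)) + L ^ p + L ^ p) := by gcongr
          _ = _ := by ring
      have h3 := le_of_mul_le_mul_left h2 hLp
      calc I = a ^ (1 / p) * b ^ (1 / q) * ((a ^ (1 / p))⁻¹ * (b ^ (1 / q))⁻¹ * I) := by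
            field_simp
        _ ≤ a ^ (1 / p) * b ^ (1 / q) * (C * (L⁻¹ * ((a ^ (1 / p))⁻¹ ^ 2 * H) + 2)) := by gcongr
        _ = _ := by ring
    have hlim : Tendsto (fun L : ℝ => 2 * C * (a ^ (1 / p) * b ^ (1 / q))
        + C * (a ^ (1 / p) * b ^ (1 / q)) * ((a ^ (1 / p))⁻¹ ^ 2 * H) * L⁻¹) atTop
        (nhds (2 * C * (a ^ (1 / p) * b ^ (1 / q))
        + C * (a ^ (1 / p) * b ^ (1 / q)) * ((a ^ (1 / p))⁻¹ ^ 2 * H) * 0)) :=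
      tendsto_const_nhds.add (tendsto_inv_atTop_zero.const_mul _)
    rw [mul_zero, add_zero] at hlim
    refine ge_of_tendsto hlim ?_
    filter_upwards [eventually_ge_atTop 1] with L hL1 using hL L hL1
  have hlim : Tendsto (fun e : ℝ => 2 * C * ((A + e) ^ (1 / p) * (B + e) ^ (1 / q)))
      (nhdsWithin 0 (Set.Ioi 0)) (nhds (2 * C * ((A + 0) ^ (1 / p) * (B + 0) ^ (1 / q)))) := by
    have hc : Continuous fun e : ℝ => 2 * C * ((A + e) ^ (1 / p) * (B + e) ^ (1 / q)) := by
      refine continuous_const.mul (Continuous.mul ?_ ?_)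
      · exact (continuous_const.add continuous_id).rpow_const fun _ => Or.inr (by positivity)
      · exact (continuous_const.add continuous_id).rpow_const fun _ => Or.inr (by positivity)
    exact (hc.tendsto 0).mono_left nhdsWithin_le_nhds
  rw [add_zero, add_zero] at hlim
  refine ge_of_tendsto hlim ?_
  filter_upwards [self_mem_nhdsWithin] with e he
  exact key _ _ (lt_add_of_pos_right _ he) (lt_add_of_pos_right _ he)

/-! ### Real-valued `L^p` norms of continuous functions on bounded sets -/

section norms
variable {F : Type} [NormedAddCommGroup F]

/-- The `L^p` norm over `S`, as a real number. -/
def nr (p : ℝ) (S : Set E3) (f : E3 → F) : ℝ := (∫ x in S, ‖f x‖ ^ p) ^ (1 / p)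

lemma nr_nonneg (p : ℝ) (S : Set E3) (f : E3 → F) : 0 ≤ nr p S f :=
  Real.rpow_nonneg (integral_nonneg fun x => by positivity) _

lemma nr_norm (p : ℝ) (S : Set E3) (f : E3 → F) : nr p S (fun x => ‖f x‖) = nr p S f := by
  simp [nr]

/-- An upper bound `≥ 1` for the volume of `B_2`. -/
def V2 : ℝ := 1 + (volume (ball (0 : E3) 2)).toReal

lemma one_le_V2 : 1 ≤ V2 := by unfold V2; linarith [ENNReal.toReal_nonneg (a := volume (ball (0 : E3) 2))]

lemma vol_le {S : Set E3} (hS : S ⊆ ball 0 2) : volume S ≤ ENNReal.ofReal V2 := by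
  have h : volume (ball (0 : E3) 2) ≠ ⊤ := measure_ball_lt_top.ne
  calc volume S ≤ volume (ball (0 : E3) 2) := measure_mono hS
    _ = ENNReal.ofReal (volume (ball (0 : E3) 2)).toReal := (ENNReal.ofReal_toReal h).symm
    _ ≤ _ := ENNReal.ofReal_le_ofReal (by unfold V2; linarith)

lemma fin_restrict {S : Set E3} (hS : S ⊆ ball 0 2) : IsFiniteMeasure (volume.restrict S) :=
  ⟨by rw [Measure.restrict_apply_univ]; exact (vol_le hS).trans_lt ENNReal.ofReal_lt_top⟩

lemma memLp_S {S : Set E3} (hS : S ⊆ ball 0 2) (hm : MeasurableSet S) {f : E3 → F}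
    (hf : Continuous f) (p : ℝ≥0∞) : MemLp f p (volume.restrict S) := by
  obtain ⟨C, hC⟩ := (isCompact_closedBall (0 : E3) 2).exists_bound_of_continuousOn hf.continuousOn
  have := fin_restrict hS
  refine MemLp.of_bound hf.aestronglyMeasurable C ?_
  filter_upwards [ae_restrict_mem hm] with x hx
  exact hC x (ball_subset_closedBall (hS hx))

lemma int_S {S : Set E3} (hS : S ⊆ ball 0 2) (hm : MeasurableSet S) {f : E3 → ℝ}
    (hf : Continuous f) : IntegrableOn f S :=
  memLp_one_iff_integrable.1 (memLp_S hS hm hf 1)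

lemma rpow_cont {f : E3 → F} (hf : Continuous f) {p : ℝ} (hp : 0 ≤ p) :
    Continuous fun x => ‖f x‖ ^ p := hf.norm.rpow_const fun _ => Or.inr hp

lemma nr_eq {S : Set E3} (hS : S ⊆ ball 0 2) (hm : MeasurableSet S) {f : E3 → F}
    (hf : Continuous f) {p : ℝ} (hp : 0 < p) : LpS f p S = ENNReal.ofReal (nr p S f) := by
  unfold LpS nr
  rw [(memLp_S hS hm hf _).eLpNorm_eq_integral_rpow_norm (by simpa using hp) ENNReal.ofReal_ne_top,
    ENNReal.toReal_ofReal hp.le, one_div]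

lemma nr_pow (S : Set E3) (f : E3 → F) {p : ℝ} (hp : 0 < p) :
    nr p S f ^ p = ∫ x in S, ‖f x‖ ^ p := by
  unfold nr
  rw [← Real.rpow_mul (integral_nonneg fun x => by positivity), one_div_mul_cancel hp.ne',
    Real.rpow_one]

lemma nr_le_of {S : Set E3} (hS : S ⊆ ball 0 2) (hm : MeasurableSet S) {f : E3 → F}
    {G : Type} [NormedAddCommGroup G] {g : E3 → G} (hg : Continuous g)
    {p : ℝ} (hp : 0 < p) (h : ∀ x ∈ S, ‖f x‖ ≤ ‖g x‖) : nr p S f ≤ nr p S g := by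
  refine Real.rpow_le_rpow (integral_nonneg fun x => by positivity) ?_ (by positivity)
  refine integral_mono_of_nonneg (ae_of_all _ fun x => by positivity)
    (int_S hS hm (rpow_cont hg hp.le)) ?_
  filter_upwards [ae_restrict_mem hm] with x hx
  exact Real.rpow_le_rpow (norm_nonneg _) (h x hx) hp.le

lemma nr_mono_set {S S' : Set E3} (hS : S' ⊆ ball 0 2) (hm : MeasurableSet S') {f : E3 → F}
    (hf : Continuous f) {p : ℝ} (hp : 0 < p) (h : S ⊆ S') : nr p S f ≤ nr p S' f := by
  refine Real.rpow_le_rpow (integral_nonneg fun x => by positivity) ?_ (by positivity)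
  exact setIntegral_mono_set (int_S hS hm (rpow_cont hf hp.le))
    (ae_of_all _ fun x => by positivity) (LE.le.eventuallyLE h)

lemma nr_add {S : Set E3} (hS : S ⊆ ball 0 2) (hm : MeasurableSet S) {f g : E3 → F}
    (hf : Continuous f) (hg : Continuous g) {p : ℝ} (hp : 1 ≤ p) :
    nr p S (fun x => f x + g x) ≤ nr p S f + nr p S g := by
  have h := eLpNorm_add_le (p := ENNReal.ofReal p) (μ := volume.restrict S)
    hf.aestronglyMeasurable hg.aestronglyMeasurable (by simpa using hp)
  have hp0 : 0 < p := by linarith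
  change LpS (fun x => f x + g x) p S ≤ LpS f p S + LpS g p S at h
  rw [nr_eq hS hm hf hp0, nr_eq hS hm hg hp0, nr_eq hS hm (f := fun x => f x + g x) (hf.add hg) hp0,
    ← ENNReal.ofReal_add (nr_nonneg _ _ _) (nr_nonneg _ _ _)] at h
  exact (ENNReal.ofReal_le_ofReal_iff (add_nonneg (nr_nonneg _ _ _) (nr_nonneg _ _ _))).1 h

lemma nr_exp {S : Set E3} (hS : S ⊆ ball 0 2) (hm : MeasurableSet S) {f : E3 → F}
    (hf : Continuous f) {p q : ℝ} (hp : 1 ≤ p) (hpq : p ≤ q) :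
    nr p S f ≤ V2 * nr q S f := by
  have hp0 : 0 < p := by linarith
  have hq0 : 0 < q := by linarith
  have h := eLpNorm_le_eLpNorm_mul_rpow_measure_univ (μ := volume.restrict S)
    (ENNReal.ofReal_le_ofReal hpq) hf.aestronglyMeasurable
  change LpS f p S ≤ LpS f q S * _ at h
  have hv : (volume.restrict S) Set.univ ^ (1 / (ENNReal.ofReal p).toReal
      - 1 / (ENNReal.ofReal q).toReal) ≤ ENNReal.ofReal V2 := by
    rw [Measure.restrict_apply_univ, ENNReal.toReal_ofReal hp0.le, ENNReal.toReal_ofReal hq0.le]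
    have h1 : 1 / q ≤ 1 / p := one_div_le_one_div_of_le hp0 hpq
    have h2 : 1 / p ≤ 1 := by rw [div_le_one hp0]; exact hp
    have h3 : 0 < 1 / q := by positivity
    calc volume S ^ (1 / p - 1 / q) ≤ ENNReal.ofReal V2 ^ (1 / p - 1 / q) :=
          ENNReal.rpow_le_rpow (vol_le hS) (by linarith)
      _ ≤ ENNReal.ofReal V2 ^ (1 : ℝ) :=
          ENNReal.rpow_le_rpow_of_exponent_le (by simpa using one_le_V2) (by linarith)
      _ = _ := ENNReal.rpow_one _
  have h4 := h.trans (mul_le_mul_right hv _)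
  rw [nr_eq hS hm hf hp0, nr_eq hS hm hf hq0, ← ENNReal.ofReal_mul (nr_nonneg _ _ _)] at h4
  have := one_le_V2
  rw [mul_comm]
  exact (ENNReal.ofReal_le_ofReal_iff (mul_nonneg (nr_nonneg _ _ _) (by linarith))).1 h4

lemma nr_holder {S : Set E3} (hS : S ⊆ ball 0 2) (hm : MeasurableSet S) {f : E3 → F}
    {G : Type} [NormedAddCommGroup G] {g : E3 → G} (hf : Continuous f) (hg : Continuous g)
    {p q : ℝ} (hpq : p.HolderConjugate q) :
    ∫ x in S, ‖f x‖ * ‖g x‖ ≤ nr p S f * nr q S g :=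
  integral_mul_le_Lp_mul_Lq_of_nonneg hpq (ae_of_all _ fun _ => norm_nonneg _)
    (ae_of_all _ fun _ => norm_nonneg _) (memLp_S hS hm hf.norm _) (memLp_S hS hm hg.norm _)

lemma nr_sq (S : Set E3) (f : E3 → F) {p : ℝ} (hp : 0 < p) :
    nr p S (fun x => ‖f x‖ ^ 2) = nr (2 * p) S f ^ 2 := by
  unfold nr
  have : ∀ x, ‖‖f x‖ ^ 2‖ ^ p = ‖f x‖ ^ (2 * p) := fun x => by
    rw [Real.norm_of_nonneg (by positivity), ← Real.rpow_natCast, ← Real.rpow_mul (norm_nonneg _)]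
    norm_num
  simp_rw [this]
  rw [← Real.rpow_natCast _ 2, ← Real.rpow_mul (integral_nonneg fun x => by positivity)]
  congr 1
  push_cast
  field_simp

lemma nr_one (S : Set E3) (f : E3 → F) : nr 1 S f = ∫ x in S, ‖f x‖ := by
  simp [nr]

end norms

end TCM

namespace TCM

/-! ### Radial cutoff functions -/

/-- Radial cutoff: `1` for `‖x‖² ≤ a`, `0` for `‖x‖² ≥ b`. -/
def cut (a b : ℝ) (x : E3) : ℝ := Real.smoothTransition ((b - ‖x‖ ^ 2) / (b - a))

lemma cut_nonneg (a b : ℝ) (x : E3) : 0 ≤ cut a b x := Real.smoothTransition.nonneg _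
lemma cut_le_one (a b : ℝ) (x : E3) : cut a b x ≤ 1 := Real.smoothTransition.le_one _

lemma cut_one {a b : ℝ} (h : a < b) {x : E3} (hx : ‖x‖ ^ 2 ≤ a) : cut a b x = 1 :=
  Real.smoothTransition.one_of_one_le (by rw [le_div_iff₀ (by linarith)]; linarith)

lemma cut_zero {a b : ℝ} (h : a < b) {x : E3} (hx : b ≤ ‖x‖ ^ 2) : cut a b x = 0 :=
  Real.smoothTransition.zero_of_nonpos (div_nonpos_of_nonpos_of_nonneg (by linarith) (by linarith))

lemma cut_smooth (a b : ℝ) : Smooth (cut a b) := by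
  have h1 : ContDiff ℝ (⊤ : ℕ∞) fun x : E3 => (b - ‖x‖ ^ 2) / (b - a) :=
    (contDiff_const.sub (contDiff_norm_sq ℝ)).div_const _
  exact Real.smoothTransition.contDiff.comp h1

lemma cut_tst {a b : ℝ} (h : a < b) : Tst (cut a b) := by
  refine ⟨cut_smooth a b, HasCompactSupport.intro (isCompact_closedBall (0 : E3) (|b| + 1)) ?_⟩
  intro x hx
  refine cut_zero h ?_
  have : |b| + 1 < ‖x‖ := by simpa using hx
  nlinarith [le_abs_self b, abs_nonneg b]

/-- The derivative of `Real.smoothTransition`. -/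
def stD : ℝ → ℝ := deriv Real.smoothTransition

lemma st_smooth : ContDiff ℝ (⊤ : ℕ∞) Real.smoothTransition := Real.smoothTransition.contDiff

lemma stD_smooth : ContDiff ℝ (⊤ : ℕ∞) stD :=
  (contDiff_infty_iff_deriv.1 st_smooth).2

lemma st_hasDerivAt (t : ℝ) : HasDerivAt Real.smoothTransition (stD t) t :=
  ((st_smooth.differentiable (by simp)) t).hasDerivAt

lemma stD_hasDerivAt (t : ℝ) : HasDerivAt stD (deriv stD t) t :=
  ((stD_smooth.differentiable (by simp)) t).hasDerivAt

lemma stD_zero_of_neg {t : ℝ} (ht : t < 0) : stD t = 0 := by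
  have : Real.smoothTransition =ᶠ[nhds t] fun _ => 0 := by
    filter_upwards [Iio_mem_nhds ht] with y hy
    exact Real.smoothTransition.zero_of_nonpos (le_of_lt hy)
  rw [stD, this.deriv_eq, deriv_const]

lemma stD_zero_of_gt {t : ℝ} (ht : 1 < t) : stD t = 0 := by
  have : Real.smoothTransition =ᶠ[nhds t] fun _ => 1 := by
    filter_upwards [Ioi_mem_nhds ht] with y hy
    exact Real.smoothTransition.one_of_one_le (le_of_lt hy)
  rw [stD, this.deriv_eq, deriv_const]

lemma stD_cpt : HasCompactSupport stD := by
  refine HasCompactSupport.intro (isCompact_Icc (a := (0 : ℝ)) (b := 1)) fun t ht => ?_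
  rw [Set.mem_Icc, not_and_or, not_le, not_le] at ht
  exact ht.elim stD_zero_of_neg stD_zero_of_gt

lemma stD_nonneg (t : ℝ) : 0 ≤ stD t := Real.smoothTransition.monotone.deriv_nonneg

lemma dstD_zero_of_neg {t : ℝ} (ht : t < 0) : deriv stD t = 0 := by
  have : stD =ᶠ[nhds t] fun _ => 0 := by
    filter_upwards [Iio_mem_nhds ht] with y hy using stD_zero_of_neg hy
  rw [this.deriv_eq, deriv_const]

lemma cut_pd (a b : ℝ) (k : Fin 3) (x : E3) :
    pd3 k (cut a b) x = 2 * x k * (stD ((b - ‖x‖ ^ 2) / (b - a)) * (-1 / (b - a))) := by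
  refine pd3_radial (φ := fun t => Real.smoothTransition ((b - t) / (b - a))) ?_ k
  have h1 : HasDerivAt (fun t : ℝ => (b - t) / (b - a)) (-1 / (b - a)) (‖x‖ ^ 2) :=
    ((hasDerivAt_id _).const_sub b).div_const _
  exact (st_hasDerivAt _).comp _ h1

lemma pd3_coord (k : Fin 3) (x : E3) : pd3 k (fun y : E3 => y k) x = 1 := by
  have : HasFDerivAt (fun y : E3 => y k) (EuclideanSpace.proj k : E3 →L[ℝ] ℝ) x :=
    (EuclideanSpace.proj k : E3 →L[ℝ] ℝ).hasFDerivAt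
  rw [pd3, this.fderiv]; simp

lemma cut_pd_pd (a b : ℝ) (k : Fin 3) (x : E3) :
    pd3 k (pd3 k (cut a b)) x = 2 * (stD ((b - ‖x‖ ^ 2) / (b - a)) * (-1 / (b - a)))
      + 4 * x k ^ 2 * (deriv stD ((b - ‖x‖ ^ 2) / (b - a)) * (-1 / (b - a)) ^ 2) := by
  have e : pd3 k (cut a b) = fun y => y k *
      (fun y : E3 => (2 * (-1 / (b - a))) * stD ((b - ‖y‖ ^ 2) / (b - a))) y := by
    funext y; rw [cut_pd]; ring
  have h1 : HasDerivAt (fun t : ℝ => (b - t) / (b - a)) (-1 / (b - a)) (‖x‖ ^ 2) :=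
    ((hasDerivAt_id _).const_sub b).div_const _
  have h2 := ((stD_hasDerivAt _).comp _ h1).const_mul (2 * (-1 / (b - a)))
  have hd : DifferentiableAt ℝ (fun y : E3 => (2 * (-1 / (b - a))) * stD ((b - ‖y‖ ^ 2) / (b - a))) x :=
    h2.differentiableAt.comp x (f := fun y : E3 => ‖y‖ ^ 2)
      (hasStrictFDerivAt_norm_sq x).hasFDerivAt.differentiableAt
  rw [e, pd3_mul k (by fun_prop) hd, pd3_coord]
  have := pd3_radial (z := x) h2 k
  simp only [Function.comp_def] at this
  rw [this]; ring

lemma cut_bounds : ∃ C : ℝ, 0 < C ∧ ∀ a b : ℝ, a < b → b ≤ 4 → b - a ≤ 4 → ∀ x,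
    (∀ k, |pd3 k (cut a b) x| ≤ C / (b - a)) ∧ |lap3 (cut a b) x| ≤ C / (b - a) ^ 2 := by
  obtain ⟨M, hM⟩ := stD_cpt.exists_bound_of_continuous stD_smooth.continuous
  obtain ⟨N, hN⟩ := (stD_cpt.deriv).exists_bound_of_continuous
    (stD_smooth.continuous_deriv (by norm_cast))
  have hM0 : 0 ≤ M := (norm_nonneg _).trans (hM 0)
  have hN0 : 0 ≤ N := (norm_nonneg _).trans (hN 0)
  refine ⟨24 * M + 48 * N + 1, by positivity, fun a b hab hb hba x => ?_⟩
  have hd : 0 < b - a := by linarith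
  have hd' : |-1 / (b - a)| = 1 / (b - a) := by rw [abs_div, abs_neg, abs_one, abs_of_pos hd]
  have hk : ∀ k, |x k| ≤ ‖x‖ := fun k => PiLp.norm_apply_le x k
  set τ := (b - ‖x‖ ^ 2) / (b - a) with hτ
  have hx : 0 ≤ τ → ‖x‖ ≤ 2 := fun h => by
    rw [hτ, le_div_iff₀ hd] at h
    nlinarith [norm_nonneg x]
  constructor
  · intro k
    rw [cut_pd]
    rcases lt_or_ge τ 0 with h | h
    · rw [stD_zero_of_neg h]; simp; positivity
    · rw [abs_mul, abs_mul, abs_mul, hd', abs_two]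
      have h1 := (hk k).trans (hx h)
      have h2 := hM τ
      rw [Real.norm_eq_abs] at h2
      calc 2 * |x k| * (|stD τ| * (1 / (b - a))) ≤ 2 * 2 * (M * (1 / (b - a))) := by gcongr
        _ = 4 * M / (b - a) := by ring
        _ ≤ _ := by gcongr; linarith
  · have h3 : ∀ k, |pd3 k (pd3 k (cut a b)) x| ≤ (8 * M + 16 * N) / (b - a) ^ 2 := by
      intro k
      rw [cut_pd_pd]
      rcases lt_or_ge τ 0 with h | h
      · rw [stD_zero_of_neg h, dstD_zero_of_neg h]; simp; positivity
      · have h1 := (hk k).trans (hx h)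
        have h2 := hM τ
        have h2' := hN τ
        rw [Real.norm_eq_abs] at h2 h2'
        have h4 : 1 / (b - a) ≤ 4 * (1 / (b - a)) ^ 2 := by
          rw [div_pow, one_pow, mul_one_div, div_le_div_iff₀ hd (by positivity)]
          nlinarith
        calc _ ≤ |2 * (stD τ * (-1 / (b - a)))| + |4 * x k ^ 2 * (deriv stD τ * (-1 / (b - a)) ^ 2)| :=
              abs_add_le _ _
          _ = 2 * (|stD τ| * (1 / (b - a))) + 4 * |x k| ^ 2 * (|deriv stD τ| * (1 / (b - a)) ^ 2) := by
              rw [abs_mul, abs_mul, hd', abs_two, abs_mul, abs_mul, abs_mul, abs_pow, abs_pow, hd']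
              norm_num
          _ ≤ 2 * (M * (4 * (1 / (b - a)) ^ 2)) + 4 * 2 ^ 2 * (N * (1 / (b - a)) ^ 2) := by gcongr
          _ = _ := by field_simp; ring
    unfold lap3
    calc |∑ j, pd3 j (pd3 j (cut a b)) x| ≤ ∑ j : Fin 3, |pd3 j (pd3 j (cut a b)) x| :=
          Finset.abs_sum_le_sum_abs _ _
      _ ≤ ∑ j : Fin 3, (8 * M + 16 * N) / (b - a) ^ 2 := Finset.sum_le_sum fun j _ => h3 j
      _ = 3 * ((8 * M + 16 * N) / (b - a) ^ 2) := by simp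
      _ = (24 * M + 48 * N) / (b - a) ^ 2 := by ring
      _ ≤ _ := div_le_div_of_nonneg_right (by linarith) (by positivity)

/-! ### A compactly supported weight pair -/

/-- Unnormalized bump. -/
def wb (z : E3) : ℝ := 2 * stD (1 - ‖z‖ ^ 2)
/-- Unnormalized potential of `wb`. -/
def wbt (z : E3) : ℝ := Real.smoothTransition (1 - ‖z‖ ^ 2)

lemma wb_smooth : Smooth wb :=
  contDiff_const.mul (stD_smooth.comp (contDiff_const.sub (contDiff_norm_sq ℝ)))
lemma wbt_smooth : Smooth wbt := st_smooth.comp (contDiff_const.sub (contDiff_norm_sq ℝ))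

lemma wb_supp {z : E3} (h : wb z ≠ 0) : ‖z‖ ≤ 1 := by
  by_contra hz
  push Not at hz
  exact h (by rw [wb, stD_zero_of_neg (by nlinarith), mul_zero])

lemma wbt_supp {z : E3} (h : wbt z ≠ 0) : ‖z‖ ≤ 1 := by
  by_contra hz
  push Not at hz
  exact h (Real.smoothTransition.zero_of_nonpos (by nlinarith))

lemma tst_of_supp {f : E3 → ℝ} (hf : Smooth f) {r : ℝ} (h : ∀ z, f z ≠ 0 → ‖z‖ ≤ r) : Tst f := by
  refine ⟨hf, HasCompactSupport.intro (isCompact_closedBall (0 : E3) r) fun z hz => ?_⟩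
  by_contra hne
  exact hz (by simpa using h z hne)

lemma wb_tst : Tst wb := tst_of_supp wb_smooth fun _ => wb_supp
lemma wbt_tst : Tst wbt := tst_of_supp wbt_smooth fun _ => wbt_supp

lemma wb_int_pos : 0 < ∫ z, wb z := by
  obtain ⟨c, hc, hc'⟩ := exists_deriv_eq_slope Real.smoothTransition (zero_lt_one)
    Real.smoothTransition.continuous.continuousOn
    (st_smooth.differentiable (by simp)).differentiableOn
  have h1 : stD c = 1 := by rw [stD, hc']; simp
  have hz : wb (EuclideanSpace.single 0 (Real.sqrt (1 - c))) ≠ 0 := by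
    rw [wb, EuclideanSpace.norm_single, Real.norm_eq_abs, sq_abs,
      Real.sq_sqrt (by linarith [hc.2]), sub_sub_cancel, h1]
    norm_num
  exact wb_smooth.cont.integral_pos_of_hasCompactSupport_nonneg_nonzero wb_tst.2
    (fun z => by have := stD_nonneg (1 - ‖z‖ ^ 2); unfold wb; simp; exact this) hz

/-- Normalized bump supported in the unit ball. -/
def wk (z : E3) : ℝ := (∫ z, wb z)⁻¹ * wb z
/-- The potential of `wk`. -/
def wkt (z : E3) : ℝ := (∫ z, wb z)⁻¹ * wbt z

lemma wk_tst : Tst wk := wb_tst.const_mul _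
lemma wkt_tst : Tst wkt := wbt_tst.const_mul _
lemma wk_supp {z : E3} (h : wk z ≠ 0) : ‖z‖ ≤ 1 := wb_supp (right_ne_zero_of_mul h)
lemma wkt_supp {z : E3} (h : wkt z ≠ 0) : ‖z‖ ≤ 1 := wbt_supp (right_ne_zero_of_mul h)

lemma wk_integral : ∫ z, wk z = 1 := by
  unfold wk
  rw [integral_const_mul, inv_mul_cancel₀ wb_int_pos.ne']

lemma wk_pair : Pair wk wkt := by
  refine ⟨wk_tst.integrable, wkt_tst.integrable, ?_, wkt_tst.1.diff, fun k z => ?_⟩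
  · refine wk_tst.integrable.mono ?_ (ae_of_all _ fun z => ?_)
    · have := wk_tst.1.cont
      exact Continuous.aestronglyMeasurable (by fun_prop)
    · rw [norm_mul, norm_norm]
      by_cases h : wk z = 0
      · simp [h]
      · exact mul_le_of_le_one_left (norm_nonneg _) (wk_supp h)
  · have h1 : HasDerivAt (fun t : ℝ => 1 - t) (-1) (‖z‖ ^ 2) := (hasDerivAt_id _).const_sub 1
    have h2 := ((st_hasDerivAt _).comp _ h1).const_mul (∫ z, wb z)⁻¹
    have := pd3_radial (z := z) h2 k
    simp only [Function.comp_def] at this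
    have e : wkt = fun y => (∫ z, wb z)⁻¹ * Real.smoothTransition (1 - ‖y‖ ^ 2) := rfl
    rw [e, this, wk, wb]; ring

/-! ### The localized Newtonian potential -/

/-- A localized Newtonian potential of `f`: `Δ (pot c f) = f - av wk c f`. -/
def pot (c : ℝ) (f : E3 → ℝ) : E3 → ℝ :=
  AV ((volume.restrict (Set.Ioc 0 c)).prod volume)
    (fun q : ℝ × E3 => -((Set.Ioc 0 c).indicator id q.1) * wkt q.2) (fun q => q.1 • q.2) f

lemma pot_W_int (c : ℝ) : Integrable (fun q : ℝ × E3 => -((Set.Ioc 0 c).indicator id q.1) * wkt q.2)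
    ((volume.restrict (Set.Ioc 0 c)).prod volume) := by
  refine Integrable.mul_prod (f := fun s : ℝ => -((Set.Ioc 0 c).indicator id s)) ?_ wkt_tst.integrable
  refine Integrable.neg ?_
  have h : IntegrableOn (fun s : ℝ => s) (Set.Ioc 0 c) :=
    (continuous_id.integrableOn_Icc).mono_set Set.Ioc_subset_Icc_self
  exact (Integrable.indicator h measurableSet_Ioc)

lemma pot_Y_meas : Measurable fun q : ℝ × E3 => q.1 • q.2 := by fun_prop

lemma pot_supp (c : ℝ) (q : ℝ × E3) (h : -((Set.Ioc 0 c).indicator id q.1) * wkt q.2 ≠ 0) :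
    ‖q.1 • q.2‖ ≤ c := by
  have h1 := wkt_supp (right_ne_zero_of_mul h)
  have h2 : q.1 ∈ Set.Ioc 0 c := by
    by_contra hn
    exact h (by simp [Set.indicator_of_notMem hn])
  rw [norm_smul, Real.norm_of_nonneg h2.1.le]
  nlinarith [h2.1, h2.2, norm_nonneg q.2]

lemma pot_tst {f : E3 → ℝ} (hf : Tst f) (c : ℝ) : Tst (pot c f) :=
  AV_tst (pot_W_int c) pot_Y_meas hf (pot_supp c)

lemma pot_zero {f : E3 → ℝ} {c : ℝ} {x : E3} (hx : ∀ y, f y ≠ 0 → c < dist x y) :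
    pot c f x = 0 := AV_support (pot_supp c) hx

lemma pot_lap {f : E3 → ℝ} (hf : Tst f) {c : ℝ} (hc : 0 ≤ c) (x : E3) :
    lap3 (pot c f) x = f x - av wk c f x := by
  have h0 : lap3 (pot c f) x = ∫ q : ℝ × E3, -((Set.Ioc 0 c).indicator id q.1) * wkt q.2 *
      lap3 f (x - q.1 • q.2) ∂((volume.restrict (Set.Ioc 0 c)).prod volume) := by
    rw [pot, AV_lap3 (pot_W_int c) pot_Y_meas hf]; rfl
  obtain ⟨C, -, hC⟩ := hf.lap.bdd
  have hi := AV_integrable (pot_W_int c) pot_Y_meas hf.lap.1.cont hC x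
  simp only [smul_eq_mul] at hi
  have h1 : lap3 (pot c f) x = ∫ s in Set.Ioc 0 c, -(s * av wkt s (lap3 f) x) := by
    rw [h0]
    rw [integral_prod _ hi]
    refine setIntegral_congr_fun measurableSet_Ioc fun s hs => ?_
    simp only [Set.indicator_of_mem hs, id, smul_eq_mul]
    rw [av_def, ← neg_mul, ← integral_const_mul]
    refine integral_congr_ae (ae_of_all _ fun z => ?_)
    simp only; ring
  have hcont : Continuous fun s => s * av wkt s (lap3 f) x :=
    continuous_id.mul ((av_cont wkt_tst.integrable hf.lap).comp (Continuous.prodMk_left x))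
  have h2 := intervalIntegral.integral_eq_sub_of_hasDerivAt
    (fun s _ => wk_pair.hasDerivAt hf x s) (hcont.intervalIntegrable 0 c)
  rw [intervalIntegral.integral_of_le hc, av_zero, wk_integral, one_mul] at h2
  rw [h1, integral_neg, h2]; ring

/-! ### Adjoints, derivatives and pointwise bounds for averages -/

lemma av_smooth {w f : E3 → ℝ} (hw : Integrable w) (hf : Tst f) (s : ℝ) : Smooth (av w s f) :=
  AV_smooth hw (meas_smul s) hf

lemma av_pd {w f : E3 → ℝ} (hw : Integrable w) (hf : Tst f) (s : ℝ) (k : Fin 3) :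
    pd3 k (av w s f) = av w s (pd3 k f) := AV_pd3 hw (meas_smul s) hf k

lemma av_adj {w f g : E3 → ℝ} (hw : Integrable w) (hf : Tst f) (hg : Tst g) (s : ℝ) :
    ∫ x, g x * av w s f x = ∫ x, f x * av w (-s) g x := by
  have key : ∀ {f g : E3 → ℝ}, Tst f → Tst g → ∀ s : ℝ, ∫ x, g x * av w s f x =
      ∫ z, ∫ x, w z * (g x * f (x - s • z)) := by
    intro f g hf hg s
    obtain ⟨C, -, hC⟩ := hg.bdd
    have hi := AV_integrable_prod (m := volume) hw (meas_smul s) hf.1.cont hf.integrable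
    have hi2 : Integrable (fun q : E3 × E3 => g q.1 * (w q.2 * f (q.1 - s • q.2)))
        (volume.prod volume) := by
      refine hi.bdd_mul (c := C) ?_ (ae_of_all _ fun q => hC _)
      exact (hg.1.cont.comp continuous_fst).aestronglyMeasurable
    rw [← integral_integral_swap (f := fun x z => w z * (g x * f (x - s • z)))]
    · refine integral_congr_ae (ae_of_all _ fun x => ?_)
      simp only
      rw [av_def, ← integral_const_mul]
      refine integral_congr_ae (ae_of_all _ fun z => ?_)
      simp only; ring
    · refine hi2.congr (ae_of_all _ fun q => ?_)
      simp only [Function.uncurry]; ring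
  rw [key hf hg s, key hg hf (-s)]
  refine integral_congr_ae (ae_of_all _ fun z => ?_)
  simp only
  rw [← integral_add_right_eq_self (fun x => w z * (g x * f (x - s • z))) (s • z)]
  refine integral_congr_ae (ae_of_all _ fun x => ?_)
  simp only [add_sub_cancel_right, neg_smul, sub_neg_eq_add]; ring

lemma av_ibp {w f : E3 → ℝ} (hw : Tst w) (hf : Tst f) {s : ℝ} (hs : s ≠ 0) (k : Fin 3) (x : E3) :
    av w s (pd3 k f) x = s⁻¹ * av (pd3 k w) s f x := by
  have hsm : Smooth fun z => f (x - s • z) :=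
    hf.1.comp (contDiff_const.sub (contDiff_id.const_smul s))
  have := ibp_l k hw hsm
  simp_rw [pd3_shift hf.1.diff] at this
  rw [av_def, av_def]
  have e : ∫ z, w z * (-s * pd3 k f (x - s • z)) = -s * ∫ z, w z * pd3 k f (x - s • z) := by
    rw [← integral_const_mul]
    refine integral_congr_ae (ae_of_all _ fun z => ?_)
    simp only; ring
  rw [e] at this
  field_simp
  linarith

lemma av_bound {w f : E3 → ℝ} {C s : ℝ} (hC : ∀ z, |w z| ≤ C) (hw : ∀ z, w z ≠ 0 → ‖z‖ ≤ 1)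
    (hs : s ≠ 0) (hf : Tst f) (x : E3) {S : Set E3} (hSm : MeasurableSet S)
    (hS : closedBall x |s| ⊆ S) :
    |av w s f x| ≤ C * (|s| ^ 3)⁻¹ * ∫ y in S, |f y| := by
  have hi0 : Integrable fun y => S.indicator (fun y => |f y|) y :=
    hf.integrable.abs.indicator hSm
  have hi : Integrable fun z : E3 => S.indicator (fun y => |f y|) (x - s • z) := by
    have h1 : Integrable fun y => S.indicator (fun y => |f y|) (x - y) := hi0.comp_sub_left x
    exact h1.comp_smul hs
  calc |av w s f x| = ‖∫ z, w z * f (x - s • z)‖ := rfl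
    _ ≤ ∫ z, C * S.indicator (fun y => |f y|) (x - s • z) := by
        refine norm_integral_le_of_norm_le (hi.const_mul _) (ae_of_all _ fun z => ?_)
        rw [norm_mul]
        by_cases h : w z = 0
        · rw [h, norm_zero, zero_mul]
          exact mul_nonneg ((abs_nonneg _).trans (hC 0)) (Set.indicator_nonneg (fun _ _ => abs_nonneg _) _)
        · have hm : x - s • z ∈ S := hS (by
            rw [mem_closedBall, dist_eq_norm, sub_sub_cancel_left, norm_neg, norm_smul,
              Real.norm_eq_abs]
            exact mul_le_of_le_one_right (abs_nonneg _) (hw z h))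
          rw [Set.indicator_of_mem hm]
          exact mul_le_mul_of_nonneg_right (hC z) (abs_nonneg _)
    _ = C * ((|s| ^ 3)⁻¹ * ∫ y in S, |f y|) := by
        rw [integral_const_mul,
          Measure.integral_comp_smul volume (fun y => S.indicator (fun y => |f y|) (x - y)) s,
          integral_sub_left_eq_self (fun y => S.indicator (fun y => |f y|) y) volume x,
          integral_indicator hSm]
        simp [abs_inv, abs_pow]
    _ = _ := by ring

end TCM

namespace TCM

/-! ### The rescaled system and the pressure estimate -/

/-- Smooth solutions of the stationary system with viscosity `ν` in every equation; this is the
form the system takes after the dilation `x ↦ R x`, with `ν = 1 / R`. -/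
structure NuSol (ν : ℝ) (u : E3 → E3) (pr : E3 → ℝ) (v : E3 → E3) (θ : E3 → ℝ) : Prop where
  cu : Continuous u
  cv : Continuous v
  su : ∀ i, Smooth fun x => u x i
  sp : Smooth pr
  sv : ∀ i, Smooth fun x => v x i
  sθ : Smooth θ
  eq_u : ∀ x : E3, ∀ i : Fin 3,
    -(ν * lap3 (fun y => u y i) x) + (∑ j : Fin 3, u x j * pd3 j (fun y => u y i) x)
      + pd3 i pr x + (∑ j : Fin 3, pd3 j (fun y => v y j * v y i) x) = 0
  eq_v : ∀ x : E3, ∀ i : Fin 3,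
    -(ν * lap3 (fun y => v y i) x) + (∑ j : Fin 3, u x j * pd3 j (fun y => v y i) x)
      + pd3 i θ x + (∑ j : Fin 3, v x j * pd3 j (fun y => u y i) x) = 0
  eq_θ : ∀ x : E3,
    -(ν * lap3 θ x) + (∑ j : Fin 3, u x j * pd3 j θ x) + (∑ j : Fin 3, pd3 j (fun y => v y j) x) = 0
  div_u : ∀ x : E3, ∑ j : Fin 3, pd3 j (fun y => u y j) x = 0

/-- The stress `u ⊗ u + v ⊗ v`. -/
def GG (u v : E3 → E3) (j i : Fin 3) (x : E3) : ℝ := u x j * u x i + v x j * v x i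

/-- The pointwise bound `|u|² + |v|²` of the stress. -/
def Gm (u v : E3 → E3) (x : E3) : ℝ := ‖u x‖ ^ 2 + ‖v x‖ ^ 2

lemma coord_le (x : E3) (i : Fin 3) : |x i| ≤ ‖x‖ := by
  rw [← Real.norm_eq_abs]; exact PiLp.norm_apply_le x i

lemma GG_le (u v : E3 → E3) (j i : Fin 3) (x : E3) : |GG u v j i x| ≤ Gm u v x := by
  have h : ∀ a : E3, |a j * a i| ≤ ‖a‖ ^ 2 := fun a => by
    rw [abs_mul, sq]
    exact mul_le_mul (coord_le a j) (coord_le a i) (abs_nonneg _) (norm_nonneg _)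
  exact (abs_add_le _ _).trans (add_le_add (h _) (h _))

lemma Gm_nonneg (u v : E3 → E3) (x : E3) : 0 ≤ Gm u v x := by unfold Gm; positivity

section
variable {ν : ℝ} {u v : E3 → E3} {pr θ : E3 → ℝ}

lemma NuSol.sG (h : NuSol ν u pr v θ) (j i : Fin 3) : Smooth (GG u v j i) :=
  ((h.su j).mul (h.su i)).add ((h.sv j).mul (h.sv i))

lemma NuSol.cGm (h : NuSol ν u pr v θ) : Continuous (Gm u v) :=
  (h.cu.norm.pow 2).add (h.cv.norm.pow 2)

lemma NuSol.grad_pr (h : NuSol ν u pr v θ) (i : Fin 3) (x : E3) :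
    pd3 i pr x = ν * lap3 (fun y => u y i) x - ∑ j, pd3 j (GG u v j i) x := by
  have e : ∀ j, pd3 j (GG u v j i) x = pd3 j (fun y => u y j) x * u x i +
      u x j * pd3 j (fun y => u y i) x + pd3 j (fun y => v y j * v y i) x := fun j => by
    unfold GG
    rw [pd3_add j (Smooth.diffAt ((h.su j).mul (h.su i)) x)
      (Smooth.diffAt ((h.sv j).mul (h.sv i)) x),
      pd3_mul j ((h.su j).diffAt x) ((h.su i).diffAt x)]
  simp_rw [e, Finset.sum_add_distrib, ← Finset.sum_mul, h.div_u x, zero_mul, zero_add]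
  linarith [h.eq_u x i]

/-- The weak form of `-Δπ = ∂_j ∂_i G_{ji}`. -/
lemma NuSol.press_weak (h : NuSol ν u pr v θ) {Ψ : E3 → ℝ} (hΨ : Tst Ψ) :
    ∫ x, pr x * lap3 Ψ x = -∑ i, ∑ j, ∫ x, pd3 j (pd3 i Ψ) x * GG u v j i x := by
  have h1 : ∀ i, ∫ x, pr x * pd3 i (pd3 i Ψ) x = -(ν * ∫ x, u x i * pd3 i (lap3 Ψ) x) -
      ∑ j, ∫ x, pd3 j (pd3 i Ψ) x * GG u v j i x := by
    intro i
    rw [ibp_r i h.sp (hΨ.pd i)]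
    have e : ∀ x, pd3 i pr x * pd3 i Ψ x = ν * (lap3 (fun y => u y i) x * pd3 i Ψ x) -
        ∑ j, pd3 i Ψ x * pd3 j (GG u v j i) x := fun x => by
      rw [h.grad_pr, sub_mul, Finset.sum_mul]
      congr 1
      · ring
      · exact Finset.sum_congr rfl fun j _ => mul_comm _ _
    have i1 : Integrable fun x => ν * (lap3 (fun y => u y i) x * pd3 i Ψ x) :=
      ((hΨ.pd i).mul_left (h.su i).lap).integrable.const_mul ν
    have i2 : ∀ j, Integrable fun x => pd3 i Ψ x * pd3 j (GG u v j i) x := fun j =>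
      ((hΨ.pd i).mul_right ((h.sG j i).pd j)).integrable
    simp_rw [e]
    rw [integral_sub i1 (integrable_finsetSum _ fun j _ => i2 j),
      integral_finsetSum _ fun j _ => i2 j, integral_const_mul, ← ibp_lap (h.su i) (hΨ.pd i)]
    have e2 : lap3 (pd3 i Ψ) = pd3 i (lap3 Ψ) := by
      funext x
      unfold lap3
      rw [pd3_sum _ i fun j _ => ((hΨ.1.pd j).pd j).diffAt x]
      refine Finset.sum_congr rfl fun j _ => ?_
      rw [pd3_comm (hΨ.1.pd j), pd3_comm' hΨ.1 i j]
    rw [e2]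
    have e3 : ∀ j, ∫ x, pd3 i Ψ x * pd3 j (GG u v j i) x =
        -∫ x, pd3 j (pd3 i Ψ) x * GG u v j i x := fun j => ibp_l j (hΨ.pd i) (h.sG j i)
    simp_rw [e3, Finset.sum_neg_distrib]
    ring
  have h2 : ∑ i, ∫ x, u x i * pd3 i (lap3 Ψ) x = 0 := by
    have : ∀ i, ∫ x, u x i * pd3 i (lap3 Ψ) x = -∫ x, pd3 i (fun y => u y i) x * lap3 Ψ x :=
      fun i => ibp_r i (h.su i) hΨ.lap
    simp_rw [this, Finset.sum_neg_distrib]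
    rw [← integral_finsetSum _ fun i _ => (hΨ.lap.mul_left ((h.su i).pd i)).integrable]
    simp_rw [← Finset.sum_mul, h.div_u, zero_mul]
    simp
  calc ∫ x, pr x * lap3 Ψ x = ∑ i, ∫ x, pr x * pd3 i (pd3 i Ψ) x := by
        rw [← integral_finsetSum _ fun i _ => (((hΨ.pd i).pd i).mul_left h.sp).integrable]
        refine integral_congr_ae (ae_of_all _ fun x => ?_)
        simp only [lap3, Finset.mul_sum]
    _ = _ := by
        simp_rw [h1, Finset.sum_sub_distrib, Finset.sum_neg_distrib, ← Finset.mul_sum, h2]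
        simp
end

/-! #### Supports and shells -/

/-- The shell `B_t \ B_1`. -/
def At (t : ℝ) : Set E3 := ball 0 t \ ball 0 1

lemma At_meas (t : ℝ) : MeasurableSet (At t) := measurableSet_ball.diff measurableSet_ball

lemma mem_At {t : ℝ} {x : E3} : x ∈ At t ↔ ‖x‖ < t ∧ 1 ≤ ‖x‖ := by simp [At]

lemma At_sub {t : ℝ} (ht : t ≤ 2) : At t ⊆ ball 0 2 :=
  Set.sdiff_subset.trans (ball_subset_ball ht)

lemma pd3_supp {f : E3 → ℝ} {K : Set E3} (hK : IsClosed K) (h : ∀ x, f x ≠ 0 → x ∈ K)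
    (j : Fin 3) (x : E3) (hx : pd3 j f x ≠ 0) : x ∈ K := by
  by_contra hn
  apply hx
  have : f =ᶠ[nhds x] fun _ => 0 := by
    filter_upwards [hK.isOpen_compl.mem_nhds hn] with y hy
    by_contra h0
    exact hy (h y h0)
  rw [pd3_congr j this]; simp [pd3]

/-- The closed shell `a ≤ |x| ≤ b`. -/
def Sh (a b : ℝ) : Set E3 := {x | a ≤ ‖x‖ ∧ ‖x‖ ≤ b}

lemma Sh_closed (a b : ℝ) : IsClosed (Sh a b) :=
  (isClosed_le continuous_const continuous_norm).inter (isClosed_le continuous_norm continuous_const)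

lemma int_restrict {S : Set E3} {f : E3 → ℝ} (h : ∀ x, f x ≠ 0 → x ∈ S) :
    ∫ x, f x = ∫ x in S, f x :=
  (setIntegral_eq_integral_of_forall_compl_eq_zero fun x hx => by
    by_contra h0; exact hx (h x h0)).symm

lemma nr_glob {f : E3 → ℝ} {p : ℝ} (hp : 0 < p) {S : Set E3} (h : ∀ x, f x ≠ 0 → x ∈ S) :
    (∫ x, |f x| ^ p) ^ (1 / p) = nr p S f := by
  unfold nr
  rw [int_restrict (S := S)]
  · rfl
  · intro x hx
    refine h x fun h0 => hx ?_
    rw [h0, abs_zero, Real.zero_rpow hp.ne']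

lemma nr_const {S : Set E3} (hS : S ⊆ ball 0 2) {p : ℝ} (hp : 1 ≤ p) (c : ℝ) :
    nr p S (fun _ => c) ≤ V2 * |c| := by
  have hp0 : 0 < p := by linarith
  have hV := one_le_V2
  have h1 : (volume.real S) ≤ V2 := by
    have := ENNReal.toReal_mono ENNReal.ofReal_ne_top (vol_le hS)
    rwa [ENNReal.toReal_ofReal (by linarith)] at this
  unfold nr
  rw [setIntegral_const, smul_eq_mul, Real.mul_rpow measureReal_nonneg (by positivity),
    ← Real.rpow_mul (norm_nonneg _), mul_one_div_cancel hp0.ne', Real.rpow_one, Real.norm_eq_abs]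
  refine mul_le_mul_of_nonneg_right ?_ (abs_nonneg _)
  calc (volume.real S) ^ (1 / p) ≤ V2 ^ (1 / p) := Real.rpow_le_rpow measureReal_nonneg h1 (by positivity)
    _ ≤ V2 ^ (1 : ℝ) := Real.rpow_le_rpow_of_exponent_le hV (by rw [div_le_one hp0]; exact hp)
    _ = V2 := Real.rpow_one _

/-- Radial cutoff, `1` on `a ≤ |x|² ≤ b` and supported in `a' < |x|² < b'`. -/
def shc (a' a b b' : ℝ) (x : E3) : ℝ := cut b b' x * (1 - cut a' a x)

lemma shc_tst {a' a b b' : ℝ} (h : b < b') : Tst (shc a' a b b') :=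
  (cut_tst h).mul_right (contDiff_const.sub (cut_smooth _ _))

lemma shc_abs {a' a b b' : ℝ} (x : E3) : |shc a' a b b' x| ≤ 1 := by
  unfold shc
  rw [abs_mul, abs_of_nonneg (cut_nonneg _ _ _), abs_of_nonneg (by linarith [cut_le_one a' a x])]
  exact mul_le_one₀ (cut_le_one _ _ _) (by linarith [cut_le_one a' a x])
    (by linarith [cut_nonneg a' a x])

lemma shc_one {a' a b b' : ℝ} (h : b < b') (h' : a' < a) {x : E3} (h1 : a ≤ ‖x‖ ^ 2)
    (h2 : ‖x‖ ^ 2 ≤ b) : shc a' a b b' x = 1 := by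
  rw [shc, cut_one h h2, cut_zero h' h1]; norm_num

lemma shc_supp {a' a b b' : ℝ} (h : b < b') (h' : a' < a) {x : E3} (h0 : shc a' a b b' x ≠ 0) :
    a' < ‖x‖ ^ 2 ∧ ‖x‖ ^ 2 < b' := by
  constructor
  · by_contra hn
    push Not at hn
    exact h0 (by rw [shc, cut_one h' hn]; simp)
  · by_contra hn
    push Not at hn
    exact h0 (by rw [shc, cut_zero h hn]; simp)

section
variable {ν : ℝ} {u v : E3 → E3} {pr θ : E3 → ℝ}

/-- The part of the pressure pairing in which the test function is a Laplacian: by `press_weak` it equals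
the stress tested against second derivatives of `Ψ`, to which `riesz_Lp` applies. -/
lemma NuSol.press1 (h : NuSol ν u pr v θ) {p q s t : ℝ} (hp : 3 ≤ p) (hq : q = p / (p - 1))
    (hs : 1.6 ≤ s) (hst : s < t) (ht : t ≤ 1.9) {Ψ : E3 → ℝ} (hΨ : Tst Ψ)
    (hsupp : ∀ x, Ψ x ≠ 0 → x ∈ Sh 1.5 (s + 7 * (t - s) / 8)) :
    |∫ x, pr x * lap3 Ψ x| ≤ 18 * (2 ^ p + 4 + 17 * p) *
      (nr p (ball 0 2) (lap3 Ψ) * nr q (At t) (Gm u v)) := by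
  have hq0 : 0 < q := by rw [hq]; exact div_pos (by linarith) (by linarith)
  set K := Sh 1.5 (s + 7 * (t - s) / 8) with hK
  set r := s + 7 * (t - s) / 8 with hr
  have hrt : r ^ 2 < t ^ 2 := by nlinarith
  set χ := shc (1.2 ^ 2) (1.5 ^ 2) (r ^ 2) (t ^ 2) with hχ
  have h12 : (1.2 : ℝ) ^ 2 < 1.5 ^ 2 := by norm_num
  have hd : ∀ i j x, pd3 j (pd3 i Ψ) x ≠ 0 → x ∈ K := fun i j =>
    pd3_supp (Sh_closed _ _) (pd3_supp (Sh_closed _ _) hsupp i) j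
  have hχ1 : ∀ x ∈ K, χ x = 1 := fun x hx =>
    shc_one hrt h12 (pow_le_pow_left₀ (by norm_num) hx.1 2) (pow_le_pow_left₀ (norm_nonneg _) hx.2 2)
  have hχs : ∀ x, χ x ≠ 0 → x ∈ At t := fun x hx => by
    obtain ⟨h1, h2⟩ := shc_supp hrt h12 hx
    exact mem_At.2 ⟨lt_of_pow_lt_pow_left₀ 2 (by linarith) h2, by nlinarith [norm_nonneg x]⟩
  have hl : (∫ x, |lap3 Ψ x| ^ p) ^ (1 / p) = nr p (ball 0 2) (lap3 Ψ) := by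
    refine nr_glob (by linarith) fun x hx => ?_
    obtain ⟨j, -, hj⟩ := Finset.exists_ne_zero_of_sum_ne_zero hx
    have := (hd j j x hj).2
    rw [mem_ball_zero_iff]; linarith
  have key : ∀ i j, |∫ x, pd3 j (pd3 i Ψ) x * GG u v j i x| ≤ 2 * (2 ^ p + 4 + 17 * p) *
      (nr p (ball 0 2) (lap3 Ψ) * nr q (At t) (Gm u v)) := by
    intro i j
    have e : ∫ x, pd3 j (pd3 i Ψ) x * GG u v j i x =
        ∫ x, pd3 j (pd3 i Ψ) x * (χ x * GG u v j i x) := by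
      refine integral_congr_ae (ae_of_all _ fun x => ?_)
      simp only
      by_cases h0 : pd3 j (pd3 i Ψ) x = 0
      · rw [h0, zero_mul, zero_mul]
      · rw [hχ1 x (hd i j x h0), one_mul]
    have hg : Tst fun x => χ x * GG u v j i x := (shc_tst hrt).mul_right (h.sG j i)
    rw [e]
    refine (riesz_Lp hp hq hΨ hg j i).trans ?_
    rw [hl, nr_glob (S := At t) hq0 fun x hx => hχs x (left_ne_zero_of_mul hx)]
    have h4 : nr q (At t) (fun x => χ x * GG u v j i x) ≤ nr q (At t) (Gm u v) := by
      refine nr_le_of (At_sub (by linarith)) (At_meas t) h.cGm hq0 fun x _ => ?_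
      rw [norm_mul, Real.norm_eq_abs, Real.norm_eq_abs, Real.norm_eq_abs,
        abs_of_nonneg (Gm_nonneg u v x)]
      calc _ ≤ 1 * Gm u v x := mul_le_mul (shc_abs x) (GG_le u v j i x) (abs_nonneg _) zero_le_one
        _ = _ := one_mul _
    have : 0 ≤ nr p (ball 0 2) (lap3 Ψ) := nr_nonneg _ _ _
    have : (0:ℝ) ≤ 2 ^ p := by positivity
    gcongr
  rw [h.press_weak hΨ, abs_neg]
  calc _ ≤ ∑ i : Fin 3, ∑ j : Fin 3, |∫ x, pd3 j (pd3 i Ψ) x * GG u v j i x| :=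
        (Finset.abs_sum_le_sum_abs _ _).trans (Finset.sum_le_sum fun i _ =>
          Finset.abs_sum_le_sum_abs _ _)
    _ ≤ ∑ i : Fin 3, ∑ j : Fin 3, 2 * (2 ^ p + 4 + 17 * p) *
      (nr p (ball 0 2) (lap3 Ψ) * nr q (At t) (Gm u v)) :=
        Finset.sum_le_sum fun i _ => Finset.sum_le_sum fun j _ => key i j
    _ = _ := by simp; ring
end

end TCM

namespace TCM

lemma wk_C : ∃ C : ℝ, 0 < C ∧ (∀ z, |wk z| ≤ C) ∧ (∀ k z, |pd3 k wk z| ≤ C) ∧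
    ∀ k z, |pd3 k (pd3 k wk) z| ≤ C := by
  obtain ⟨a, ha, ha'⟩ := wk_tst.bdd
  choose b hb hb' using fun k => (wk_tst.pd k).bdd
  choose c hc hc' using fun k => ((wk_tst.pd k).pd k).bdd
  have hB : ∀ k, b k ≤ ∑ k, b k := fun k =>
    Finset.single_le_sum (f := b) (fun i _ => hb i) (Finset.mem_univ k)
  have hC : ∀ k, c k ≤ ∑ k, c k := fun k =>
    Finset.single_le_sum (f := c) (fun i _ => hc i) (Finset.mem_univ k)
  have hB0 : 0 ≤ ∑ k, b k := Finset.sum_nonneg fun i _ => hb i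
  have hC0 : 0 ≤ ∑ k, c k := Finset.sum_nonneg fun i _ => hc i
  refine ⟨1 + a + ∑ k, b k + ∑ k, c k, by linarith, fun z => ?_, fun k z => ?_, fun k z => ?_⟩
  · linarith [ha' z]
  · linarith [hb' k z, hB k]
  · linarith [hc' k z, hC k]

lemma wk_pd_supp (k : Fin 3) (z : E3) (h : pd3 k wk z ≠ 0) : ‖z‖ ≤ 1 := by
  have := pd3_supp (K := {z : E3 | ‖z‖ ≤ 1}) (isClosed_le continuous_norm continuous_const)
    (fun x hx => wk_supp hx) k z h
  exact this

lemma wk_pd2_supp (k : Fin 3) (z : E3) (h : pd3 k (pd3 k wk) z ≠ 0) : ‖z‖ ≤ 1 := by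
  have := pd3_supp (K := {z : E3 | ‖z‖ ≤ 1}) (isClosed_le continuous_norm continuous_const)
    (fun x hx => wk_pd_supp k x hx) k z h
  exact this

/-- Two points of a shell can be joined through a third point orthogonal to both of them. -/
lemma exists_orth (y : E3) {r : ℝ} (hr : 0 < r) :
    ∃ z : E3, ‖z‖ = r ∧ inner ℝ z y = 0 ∧ inner ℝ z (r • ee 0) = 0 := by
  obtain ⟨w, hw0, hw1, hw2⟩ : ∃ w : E3, w ≠ 0 ∧ inner ℝ w y = 0 ∧ w 0 = 0 := by
    by_cases h : y 1 = 0 ∧ y 2 = 0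
    · refine ⟨!₂[0, 1, 0], fun h0 => ?_, ?_, ?_⟩
      · have := congrArg (fun x : E3 => x 1) h0
        simp at this
      · simp [PiLp.inner_apply, Fin.sum_univ_three, h.1]
      · simp
    · refine ⟨!₂[0, -y 2, y 1], fun h0 => ?_, ?_, ?_⟩
      · have h1 := congrArg (fun x : E3 => x 1) h0
        have h2 := congrArg (fun x : E3 => x 2) h0
        simp at h1 h2
        exact h ⟨h2, h1⟩
      · simp [PiLp.inner_apply, Fin.sum_univ_three]; ring
      · simp
  have hn : 0 < ‖w‖ := norm_pos_iff.2 hw0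
  refine ⟨(r / ‖w‖) • w, ?_, ?_, ?_⟩
  · rw [norm_smul, Real.norm_eq_abs, abs_of_pos (by positivity)]; field_simp
  · rw [real_inner_smul_left, hw1, mul_zero]
  · rw [real_inner_smul_left, real_inner_smul_right]
    simp [EuclideanSpace.inner_single_right, hw2]

lemma seg_norm {a b x : E3} {r1 r2 : ℝ} (h0 : 0 ≤ r1) (hab : inner ℝ a b = 0) (ha : a ∈ Sh r1 r2)
    (hb : b ∈ Sh r1 r2) (hx : x ∈ segment ℝ a b) : r1 ^ 2 ≤ 2 * ‖x‖ ^ 2 ∧ ‖x‖ ≤ r2 := by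
  constructor
  · obtain ⟨m, n, hm, hn, hmn, rfl⟩ := hx
    have e : ‖m • a + n • b‖ ^ 2 = m ^ 2 * ‖a‖ ^ 2 + n ^ 2 * ‖b‖ ^ 2 := by
      rw [norm_add_sq_real, real_inner_smul_left, real_inner_smul_right, hab, norm_smul, norm_smul,
        mul_pow, mul_pow]
      simp
    rw [e]
    have h1 : r1 ^ 2 ≤ ‖a‖ ^ 2 := pow_le_pow_left₀ h0 ha.1 2
    have h2 : r1 ^ 2 ≤ ‖b‖ ^ 2 := pow_le_pow_left₀ h0 hb.1 2
    have h3 : m ^ 2 * r1 ^ 2 ≤ m ^ 2 * ‖a‖ ^ 2 := by gcongr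
    have h4 : n ^ 2 * r1 ^ 2 ≤ n ^ 2 * ‖b‖ ^ 2 := by gcongr
    have h5 : 1 ≤ 2 * (m ^ 2 + n ^ 2) := by nlinarith [sq_nonneg (m - n)]
    nlinarith [sq_nonneg r1]
  · have hc : Convex ℝ (closedBall (0 : E3) r2) := convex_closedBall _ _
    have := hc.segment_subset (by simpa using ha.2) (by simpa using hb.2) hx
    simpa using this

lemma osc_seg {Q : E3 → ℝ} (hQ : Smooth Q) {a b : E3} {r1 r2 B : ℝ} (h0 : 1.6 ≤ r1) (h2 : r2 ≤ 1.9)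
    (hB : ∀ k y, y ∈ Sh 1.13 r2 → |pd3 k Q y| ≤ B) (hB0 : 0 ≤ B)
    (hab : inner ℝ a b = 0) (ha : a ∈ Sh r1 r2) (hb : b ∈ Sh r1 r2) :
    |Q a - Q b| ≤ 12 * B := by
  have h := Convex.norm_image_sub_le_of_norm_fderiv_le (𝕜 := ℝ) (f := Q) (C := 3 * B) (s := segment ℝ b a)
    (fun x _ => hQ.diffAt x) (fun x hx => fderiv_norm_le fun j => hB j x ?_) (convex_segment _ _)
    (left_mem_segment ℝ b a) (right_mem_segment ℝ b a)
  · rw [Real.norm_eq_abs] at h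
    have h3 : ‖a - b‖ ≤ 4 := (norm_sub_le _ _).trans (by linarith [ha.2, hb.2])
    calc _ ≤ 3 * B * ‖a - b‖ := h
      _ ≤ 3 * B * 4 := by gcongr
      _ = _ := by ring
  · rw [segment_symm] at hx
    obtain ⟨h1, h2⟩ := seg_norm (by linarith) hab ha hb hx
    exact ⟨by nlinarith [norm_nonneg x], h2⟩

lemma osc_shell {Q : E3 → ℝ} (hQ : Smooth Q) {r1 r2 B : ℝ} (h0 : 1.6 ≤ r1) (h1 : r1 ≤ r2)
    (h2 : r2 ≤ 1.9) (hB : ∀ k y, y ∈ Sh 1.13 r2 → |pd3 k Q y| ≤ B) (hB0 : 0 ≤ B) {y : E3}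
    (hy : y ∈ Sh r1 r2) : |Q y - Q (r1 • ee 0)| ≤ 24 * B := by
  obtain ⟨z, hz, hzy, hz0⟩ := exists_orth y (r := r1) (by linarith)
  have hzm : z ∈ Sh r1 r2 := ⟨hz.ge, hz.le.trans h1⟩
  have hem : r1 • ee 0 ∈ Sh r1 r2 := by
    have : ‖r1 • ee 0‖ = r1 := by
      rw [norm_smul, Real.norm_eq_abs, abs_of_pos (by linarith)]; simp
    exact ⟨this.ge, this.le.trans h1⟩
  have e1 := osc_seg hQ h0 h2 hB hB0 hzy hzm hy
  have e2 := osc_seg hQ h0 h2 hB hB0 hz0 hzm hem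
  rw [abs_le] at *
  constructor <;> linarith [e1.1, e1.2, e2.1, e2.2]

lemma zero_compl {S : Set E3} {f : E3 → ℝ} (h : ∀ x, f x ≠ 0 → x ∈ S) {x : E3} (hx : x ∉ S) :
    f x = 0 := by
  by_contra h0; exact hx (h x h0)

section
variable {ν : ℝ} {u v : E3 → E3} {pr θ : E3 → ℝ}

/-- Gradient bound for the mollified pressure. -/
lemma NuSol.press_moll_grad (h : NuSol ν u pr v θ) (hν : 0 ≤ ν) {C c t ρ : ℝ} (hC : 0 < C)
    (hC0 : ∀ k z, |pd3 k wk z| ≤ C)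
    (hC1 : ∀ k z, |pd3 k (pd3 k wk) z| ≤ C) (hc : 0 < c) (hc1 : c ≤ 0.1) (hρ : ρ + c < t)
    (ht : t ≤ 1.9) (k : Fin 3) {y : E3} (hy : y ∈ Sh 1.13 ρ) :
    |pd3 k (av wk (-c) fun x => cut (1.95 ^ 2) (1.99 ^ 2) x * pr x) y| ≤
      3 * C * (c ^ 5)⁻¹ * (ν * nr 1 (At t) u + nr 1 (At t) (Gm u v)) := by
  set χ := cut (1.95 ^ 2) (1.99 ^ 2) with hχ
  have h12 : (1.95 : ℝ) ^ 2 < 1.99 ^ 2 := by norm_num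
  have hχt : Tst χ := cut_tst h12
  have hχ1 : ∀ x ∈ ball (0 : E3) 1.95, χ x = 1 := fun x hx => by
    rw [mem_ball_zero_iff] at hx
    exact cut_one h12 (pow_le_pow_left₀ (norm_nonneg _) hx.le 2)
  have hχ2 : ∀ (f : E3 → ℝ), ∀ x ∈ ball (0 : E3) 1.95, (fun y => χ y * f y) =ᶠ[nhds x] f :=
    fun f x hx => by
      filter_upwards [isOpen_ball.mem_nhds hx] with z hz
      rw [hχ1 z hz, one_mul]
  have hs0 : -c ≠ 0 := by linarith
  have hsub : closedBall y |-c| ⊆ At t := fun x hx => by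
    rw [abs_neg, abs_of_pos hc, mem_closedBall, dist_eq_norm] at hx
    have h1 := norm_sub_norm_le x y
    have h2 := norm_sub_norm_le y x
    rw [norm_sub_rev] at h2
    exact mem_At.2 ⟨by linarith [hy.2], by linarith [hy.1]⟩
  have hU : Tst fun x => χ x * u x k := hχt.mul_right (h.su k)
  have hG : ∀ j, Tst fun x => χ x * GG u v j k x := fun j => hχt.mul_right (h.sG j k)
  have hP : Tst fun x => χ x * pr x := hχt.mul_right h.sp
  have e1 : ∀ x ∈ ball (0 : E3) 1.95, pd3 k (fun x => χ x * pr x) x =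
      ν * ∑ m, pd3 m (pd3 m fun x => χ x * u x k) x - ∑ j, pd3 j (fun x => χ x * GG u v j k x) x := by
    intro x hx
    rw [pd3_congr k (hχ2 pr x hx), h.grad_pr, lap3]
    congr 1
    · congr 1
      refine Finset.sum_congr rfl fun m _ => ?_
      exact (pd3_congr m (pd3_congr_ev m (hχ2 (fun x => u x k) x hx))).symm
    · refine Finset.sum_congr rfl fun j _ => ?_
      exact (pd3_congr j (hχ2 (GG u v j k) x hx)).symm
  have sm : ∀ {f : E3 → ℝ}, Tst f → Smooth fun z => f (y - (-c) • z) := fun hf =>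
    hf.1.comp (contDiff_const.sub (contDiff_id.const_smul (-c)))
  have e2 : pd3 k (av wk (-c) fun x => χ x * pr x) y =
      ν * ∑ m, av wk (-c) (pd3 m (pd3 m fun x => χ x * u x k)) y -
        ∑ j, av wk (-c) (pd3 j (fun x => χ x * GG u v j k x)) y := by
    rw [av_pd wk_tst.integrable hP]
    simp_rw [av_def]
    rw [← integral_finsetSum _ fun m _ => (wk_tst.mul_right (sm ((hU.pd m).pd m))).integrable,
      ← integral_finsetSum _ fun j _ => (wk_tst.mul_right (sm ((hG j).pd j))).integrable,
      ← integral_const_mul, ← integral_sub]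
    · refine integral_congr_ae (ae_of_all _ fun z => ?_)
      simp only
      by_cases hz : wk z = 0
      · simp [hz]
      · have hz1 := wk_supp hz
        rw [e1, ← Finset.mul_sum, ← Finset.mul_sum]
        · ring
        · have : y - (-c) • z ∈ closedBall y |-c| := by
            rw [mem_closedBall, dist_eq_norm, sub_sub_cancel_left, norm_neg, norm_smul, Real.norm_eq_abs]
            exact mul_le_of_le_one_right (abs_nonneg _) hz1
          have := (mem_At.1 (hsub this)).1
          rw [mem_ball_zero_iff]; linarith
    · exact (integrable_finsetSum _ fun m _ =>
        (wk_tst.mul_right (sm ((hU.pd m).pd m))).integrable).const_mul _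
    · exact integrable_finsetSum _ fun j _ => (wk_tst.mul_right (sm ((hG j).pd j))).integrable
  have hc5 : (0:ℝ) < (c ^ 5)⁻¹ := by positivity
  have hAs : At t ⊆ ball 0 2 := At_sub (by linarith)
  have hχa : ∀ x, |χ x| ≤ 1 := fun x => by
    rw [abs_of_nonneg (cut_nonneg _ _ _)]; exact cut_le_one _ _ _
  have bU : ∫ x in At t, |χ x * u x k| ≤ nr 1 (At t) u := by
    rw [nr_one]
    refine setIntegral_mono_on (int_S hAs (At_meas t) hU.1.cont.abs)
      (int_S hAs (At_meas t) h.cu.norm) (At_meas t) fun x _ => ?_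
    rw [abs_mul]
    calc _ ≤ 1 * ‖u x‖ := mul_le_mul (hχa x) (coord_le _ _) (abs_nonneg _) zero_le_one
      _ = _ := one_mul _
  have bG : ∀ j, ∫ x in At t, |χ x * GG u v j k x| ≤ nr 1 (At t) (Gm u v) := by
    intro j
    rw [nr_one]
    refine setIntegral_mono_on (int_S hAs (At_meas t) (hG j).1.cont.abs)
      (int_S hAs (At_meas t) h.cGm.norm) (At_meas t) fun x _ => ?_
    rw [abs_mul, Real.norm_eq_abs, abs_of_nonneg (Gm_nonneg u v x)]
    calc _ ≤ 1 * Gm u v x := mul_le_mul (hχa x) (GG_le _ _ _ _ _) (abs_nonneg _) zero_le_one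
      _ = _ := one_mul _
  have f1 : ∀ m, |av wk (-c) (pd3 m (pd3 m fun x => χ x * u x k)) y| ≤
      C * (c ^ 5)⁻¹ * nr 1 (At t) u := by
    intro m
    rw [av_ibp wk_tst (hU.pd m) hs0, av_ibp (wk_tst.pd m) hU hs0, ← mul_assoc, abs_mul]
    have := av_bound (hC1 m) (wk_pd2_supp m) hs0 hU y (At_meas t) hsub
    have e : |(-c)⁻¹ * (-c)⁻¹| = (c ^ 2)⁻¹ := by
      rw [← sq, abs_of_nonneg (sq_nonneg _)]; rw [inv_pow]; ring_nf
    rw [e]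
    rw [abs_neg, abs_of_pos hc] at this
    calc _ ≤ (c ^ 2)⁻¹ * (C * (c ^ 3)⁻¹ * ∫ y in At t, |χ y * u y k|) := by gcongr
      _ ≤ (c ^ 2)⁻¹ * (C * (c ^ 3)⁻¹ * nr 1 (At t) u) := by gcongr
      _ = _ := by field_simp
  have f2 : ∀ j, |av wk (-c) (pd3 j (fun x => χ x * GG u v j k x)) y| ≤
      C * (c ^ 5)⁻¹ * nr 1 (At t) (Gm u v) := by
    intro j
    rw [av_ibp wk_tst (hG j) hs0, abs_mul]
    have := av_bound (hC0 j) (wk_pd_supp j) hs0 (hG j) y (At_meas t) hsub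
    rw [abs_neg, abs_of_pos hc] at this
    have e : |(-c)⁻¹| = c⁻¹ := by rw [abs_inv, abs_neg, abs_of_pos hc]
    rw [e]
    have h9 : 0 ≤ nr 1 (At t) (Gm u v) := nr_nonneg _ _ _
    have h8 : c⁻¹ * (c ^ 3)⁻¹ ≤ (c ^ 5)⁻¹ := by
      rw [← mul_inv, ← pow_succ']
      exact inv_anti₀ (by positivity) (pow_le_pow_of_le_one hc.le (by linarith) (by norm_num))
    calc _ ≤ c⁻¹ * (C * (c ^ 3)⁻¹ * ∫ y in At t, |χ y * GG u v j k y|) := by gcongr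
      _ ≤ c⁻¹ * (C * (c ^ 3)⁻¹ * nr 1 (At t) (Gm u v)) := by gcongr; exact bG j
      _ = C * (c⁻¹ * (c ^ 3)⁻¹) * nr 1 (At t) (Gm u v) := by ring
      _ ≤ _ := by gcongr
  rw [e2]
  refine (abs_sub _ _).trans ?_
  rw [abs_mul, abs_of_nonneg hν]
  have g1 : |∑ m, av wk (-c) (pd3 m (pd3 m fun x => χ x * u x k)) y| ≤
      3 * (C * (c ^ 5)⁻¹ * nr 1 (At t) u) :=
    (Finset.abs_sum_le_sum_abs _ _).trans ((Finset.sum_le_sum fun m _ => f1 m).trans (by simp))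
  have g2 : |∑ j, av wk (-c) (pd3 j (fun x => χ x * GG u v j k x)) y| ≤
      3 * (C * (c ^ 5)⁻¹ * nr 1 (At t) (Gm u v)) :=
    (Finset.abs_sum_le_sum_abs _ _).trans ((Finset.sum_le_sum fun m _ => f2 m).trans (by simp))
  calc _ ≤ ν * (3 * (C * (c ^ 5)⁻¹ * nr 1 (At t) u)) + 3 * (C * (c ^ 5)⁻¹ * nr 1 (At t) (Gm u v)) := by
        gcongr
    _ = _ := by ring
end

end TCM

namespace TCM

lemma av_supp {f : E3 → ℝ} {c : ℝ} (hc : 0 ≤ c) {x : E3} (h : av wk c f x ≠ 0) :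
    ∃ y, f y ≠ 0 ∧ dist x y ≤ c := by
  by_contra hn
  push Not at hn
  refine h (AV_support (c := c) (fun z hz => ?_) hn)
  rw [norm_smul, Real.norm_eq_abs, abs_of_nonneg hc]
  exact mul_le_of_le_one_right hc (wk_supp hz)

lemma Sh_thick {a b c : ℝ} {x y : E3} (hy : y ∈ Sh a b) (h : dist x y ≤ c) :
    x ∈ Sh (a - c) (b + c) := by
  rw [dist_eq_norm] at h
  have h1 := norm_sub_norm_le x y
  have h2 := norm_sub_norm_le y x
  rw [norm_sub_rev] at h2
  exact ⟨by linarith [hy.1], by linarith [hy.2]⟩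

lemma B2_meas : MeasurableSet (ball (0 : E3) 2) := measurableSet_ball

/-- The pressure estimate: `π` is controlled by the stress when tested against mean-zero functions
supported inside a shell. -/
lemma press_est {p : ℝ} (hp : 3 ≤ p) : ∃ K : ℝ, 0 < K ∧ ∀ (ν : ℝ) (u v : E3 → E3) (pr θ : E3 → ℝ),
    0 ≤ ν → NuSol ν u pr v θ → ∀ s t : ℝ, 1.6 ≤ s → s < t → t ≤ 1.9 → ∀ f : E3 → ℝ, Tst f →
    (∀ x, f x ≠ 0 → x ∈ Sh (s + (t - s) / 4) (s + 3 * (t - s) / 4)) → ∫ x, f x = 0 →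
    |∫ x, pr x * f x| ≤ K * (1 / (t - s)) ^ 5 * (nr p (ball 0 2) f *
      (nr (p / (p - 1)) (At t) (Gm u v) + ν * nr p (At t) u)) := by
  obtain ⟨C, hC, hCa, hCb, hCc⟩ := wk_C
  have hV := one_le_V2
  set L := 18 * (2 ^ p + 4 + 17 * p) with hL
  have hL0 : 0 < L := by positivity
  refine ⟨(L * (1 + V2 * (C * V2)) + 72 * C * V2 * V2) * 8 ^ 5, by positivity, ?_⟩
  intro ν u v pr θ hν h s t hs hst ht f hf hfs hf0
  set q := p / (p - 1) with hq
  have hq1 : 1 ≤ q := by rw [hq, le_div_iff₀ (by linarith)]; linarith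
  set c := (t - s) / 8 with hc
  have hc0 : 0 < c := by rw [hc]; linarith
  have hc1 : c ≤ 0.1 := by rw [hc]; linarith
  have hAs : At t ⊆ ball 0 2 := At_sub (by linarith)
  have hfs2 : ∀ x, f x ≠ 0 → x ∈ ball (0 : E3) 2 := fun x hx => by
    rw [mem_ball_zero_iff]; linarith [(hfs x hx).2]
  have hN : 0 ≤ nr p (ball 0 2) f := nr_nonneg _ _ _
  have hGn : 0 ≤ nr q (At t) (Gm u v) := nr_nonneg _ _ _
  have hun : 0 ≤ nr p (At t) u := nr_nonneg _ _ _
  have hc5 : 1 ≤ (c ^ 5)⁻¹ := by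
    rw [one_le_inv₀ (by positivity)]
    exact pow_le_one₀ hc0.le (by linarith)
  have hc35 : (c ^ 3)⁻¹ ≤ (c ^ 5)⁻¹ :=
    inv_anti₀ (by positivity) (pow_le_pow_of_le_one hc0.le (by linarith) (by norm_num))
  have hf1 : ∫ x, |f x| ≤ V2 * nr p (ball 0 2) f := by
    rw [int_restrict (S := ball 0 2) fun x hx => hfs2 x (abs_ne_zero.1 hx)]
    have := nr_exp subset_rfl B2_meas hf.1.cont (p := 1) (q := p) le_rfl (by linarith)
    rwa [nr_one] at this
  -- split `f` into a Laplacian and a mollification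
  have hsplit : ∀ x, pr x * f x = pr x * lap3 (pot c f) x + pr x * av wk c f x := fun x => by
    rw [pot_lap hf hc0.le]; ring
  have hΨ : Tst (pot c f) := pot_tst hf c
  have hcont : Continuous (av wk c f) := (av_smooth wk_tst.integrable hf c).cont
  have havs : ∀ x, av wk c f x ≠ 0 → x ∈ Sh 1.5 1.95 := fun x hx => by
    obtain ⟨y, hy, hxy⟩ := av_supp hc0.le hx
    have := Sh_thick (hfs y hy) hxy
    exact ⟨by linarith [this.1], by linarith [this.2]⟩
  have hav : Tst (av wk c f) := tst_of_supp (av_smooth wk_tst.integrable hf c)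
    fun z hz => (havs z hz).2
  have hsum : ∫ x, pr x * f x = (∫ x, pr x * lap3 (pot c f) x) + ∫ x, pr x * av wk c f x := by
    simp_rw [hsplit]
    exact integral_add (hΨ.lap.mul_left h.sp).integrable (hav.mul_left h.sp).integrable
  have hΨs : ∀ x, pot c f x ≠ 0 → x ∈ Sh 1.5 (s + 7 * (t - s) / 8) := fun x hx => by
    by_contra hn
    refine hx (pot_zero fun y hy => ?_)
    by_contra hd
    push Not at hd
    have := Sh_thick (hfs y hy) hd
    exact hn ⟨by linarith [this.1], by linarith [this.2]⟩
  have p1 := h.press1 hp hq hs hst ht hΨ hΨs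
  have hlap : nr p (ball 0 2) (lap3 (pot c f)) ≤
      (1 + V2 * (C * V2)) * (c ^ 5)⁻¹ * nr p (ball 0 2) f := by
    have e : lap3 (pot c f) = fun x => f x + (-1) * av wk c f x := by
      funext x; rw [pot_lap hf hc0.le]; ring
    have h1 := nr_add subset_rfl B2_meas hf.1.cont (g := fun x => (-1) * av wk c f x)
      (continuous_const.mul hcont) (p := p) (by linarith)
    rw [e]
    refine h1.trans ?_
    set m := C * (c ^ 3)⁻¹ * (V2 * nr p (ball 0 2) f) with hm
    have hm0 : 0 ≤ m := by positivity
    have h2 : nr p (ball 0 2) (fun x => (-1) * av wk c f x) ≤ nr p (ball 0 2) (fun _ => m) := by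
      refine nr_le_of subset_rfl B2_meas continuous_const (by linarith) fun x _ => ?_
      rw [norm_mul, norm_neg, norm_one, one_mul, Real.norm_eq_abs, Real.norm_eq_abs, abs_of_nonneg hm0]
      have := av_bound hCa (fun z => wk_supp) hc0.ne' hf x MeasurableSet.univ (Set.subset_univ _)
      rw [abs_of_pos hc0, setIntegral_univ] at this
      refine this.trans ?_
      rw [hm]
      gcongr
    have h3 := nr_const subset_rfl (p := p) (by linarith) m
    rw [abs_of_nonneg hm0] at h3
    calc _ ≤ nr p (ball 0 2) f + V2 * m := by linarith
      _ = nr p (ball 0 2) f * 1 + V2 * (C * V2) * (c ^ 3)⁻¹ * nr p (ball 0 2) f := by rw [hm]; ring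
      _ ≤ nr p (ball 0 2) f * (c ^ 5)⁻¹ + V2 * (C * V2) * (c ^ 5)⁻¹ * nr p (ball 0 2) f := by gcongr
      _ = _ := by ring
  set χ := cut (1.95 ^ 2) (1.99 ^ 2) with hχ
  have h12 : (1.95 : ℝ) ^ 2 < 1.99 ^ 2 := by norm_num
  have hP : Tst fun x => χ x * pr x := (cut_tst h12).mul_right h.sp
  set Q := av wk (-c) fun x => χ x * pr x with hQ
  have hQs : Smooth Q := av_smooth wk_tst.integrable hP _
  set B := 3 * C * (c ^ 5)⁻¹ * (ν * nr 1 (At t) u + nr 1 (At t) (Gm u v)) with hB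
  have hB0 : 0 ≤ B := by
    have := nr_nonneg 1 (At t) u
    have := nr_nonneg 1 (At t) (Gm u v)
    positivity
  have hBd : ∀ k y, y ∈ Sh 1.13 (s + 3 * (t - s) / 4) → |pd3 k Q y| ≤ B := fun k y hy =>
    h.press_moll_grad hν hC hCb hCc hc0 hc1 (by rw [hc]; linarith) ht k hy
  have hB1 : B ≤ 3 * C * (c ^ 5)⁻¹ * (V2 * (nr q (At t) (Gm u v) + ν * nr p (At t) u)) := by
    have h1 := nr_exp hAs (At_meas t) h.cu (p := 1) (q := p) le_rfl (by linarith)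
    have h2 := nr_exp hAs (At_meas t) h.cGm (p := 1) (q := q) le_rfl hq1
    rw [hB]
    calc _ ≤ 3 * C * (c ^ 5)⁻¹ * (ν * (V2 * nr p (At t) u) + V2 * nr q (At t) (Gm u v)) := by gcongr
      _ = _ := by ring
  have p2 : |∫ x, pr x * av wk c f x| ≤ 24 * B * (V2 * nr p (ball 0 2) f) := by
    have e1 : ∫ x, pr x * av wk c f x = ∫ x, (χ x * pr x) * av wk c f x := by
      refine integral_congr_ae (ae_of_all _ fun x => ?_)
      simp only
      by_cases h0 : av wk c f x = 0
      · rw [h0, mul_zero, mul_zero]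
      · rw [hχ, cut_one h12 (pow_le_pow_left₀ (norm_nonneg _) (havs x h0).2 2), one_mul]
    set Q0 := Q ((s + (t - s) / 4) • ee 0) with hQ0
    have e2 : ∫ x, f x * Q x = ∫ x, f x * (Q x - Q0) := by
      simp_rw [mul_sub]
      rw [integral_sub (hf.mul_right hQs).integrable (hf.integrable.mul_const _), integral_mul_const,
        hf0]
      ring
    rw [e1, av_adj wk_tst.integrable hf hP c, e2]
    calc |∫ x, f x * (Q x - Q0)| ≤ ∫ x, |f x| * (24 * B) := by
          rw [← Real.norm_eq_abs]
          refine norm_integral_le_of_norm_le (hf.integrable.abs.mul_const _) (ae_of_all _ fun x => ?_)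
          rw [norm_mul, Real.norm_eq_abs, Real.norm_eq_abs]
          by_cases h0 : f x = 0
          · rw [h0]; simp
          · have := osc_shell hQs (r1 := s + (t - s) / 4) (r2 := s + 3 * (t - s) / 4) (by linarith)
              (by linarith) (by linarith) hBd hB0 (hfs x h0)
            gcongr
      _ = 24 * B * ∫ x, |f x| := by rw [integral_mul_const]; ring
      _ ≤ _ := by gcongr
  have hc8 : (c ^ 5)⁻¹ = 8 ^ 5 * (1 / (t - s)) ^ 5 := by
    have : t - s ≠ 0 := by linarith
    rw [hc]; field_simp
  set Z := nr q (At t) (Gm u v) + ν * nr p (At t) u with hZ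
  have hZ0 : 0 ≤ Z := by positivity
  have hGZ : nr q (At t) (Gm u v) ≤ Z := by
    have : 0 ≤ ν * nr p (At t) u := by positivity
    linarith
  have e3 := abs_add_le (∫ x, pr x * lap3 (pot c f) x) (∫ x, pr x * av wk c f x)
  rw [← hsum] at e3
  calc _ ≤ L * (nr p (ball 0 2) (lap3 (pot c f)) * nr q (At t) (Gm u v)) +
        24 * B * (V2 * nr p (ball 0 2) f) := by linarith
    _ ≤ L * ((1 + V2 * (C * V2)) * (c ^ 5)⁻¹ * nr p (ball 0 2) f * Z) +
        24 * (3 * C * (c ^ 5)⁻¹ * (V2 * Z)) * (V2 * nr p (ball 0 2) f) := by gcongr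
    _ = (L * (1 + V2 * (C * V2)) + 72 * C * V2 * V2) * (c ^ 5)⁻¹ * (nr p (ball 0 2) f * Z) := by ring
    _ = _ := by rw [hc8]; ring

end TCM

namespace TCM

/-! ### The local energy identity -/

section quad
variable {ι : Type} [Fintype ι]

/-- Half the sum of squares of a family of functions. -/
def hsq (a : ι → E3 → ℝ) (x : E3) : ℝ := ∑ m, 1 / 2 * (a m x * a m x)

/-- The Dirichlet density of a family of functions. -/
def dens (a : ι → E3 → ℝ) (x : E3) : ℝ := ∑ m, ∑ k, pd3 k (a m) x ^ 2

lemma hsq_smooth {a : ι → E3 → ℝ} (ha : ∀ m, Smooth (a m)) : Smooth (hsq a) :=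
  ContDiff.sum fun m _ => contDiff_const.mul ((ha m).mul (ha m))

lemma hsq_nonneg (a : ι → E3 → ℝ) (x : E3) : 0 ≤ hsq a x :=
  Finset.sum_nonneg fun m _ => by nlinarith [mul_self_nonneg (a m x)]

lemma dens_nonneg (a : ι → E3 → ℝ) (x : E3) : 0 ≤ dens a x :=
  Finset.sum_nonneg fun _ _ => Finset.sum_nonneg fun _ _ => sq_nonneg _

lemma dens_smooth {a : ι → E3 → ℝ} (ha : ∀ m, Smooth (a m)) : Smooth (dens a) :=
  ContDiff.sum fun m _ => ContDiff.sum fun k _ => ((ha m).pd k).pow 2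

lemma hsq_pd {a : ι → E3 → ℝ} (ha : ∀ m, Smooth (a m)) (k : Fin 3) :
    pd3 k (hsq a) = fun x => ∑ m, a m x * pd3 k (a m) x := by
  funext x
  unfold hsq
  rw [pd3_sum _ k fun m _ => Smooth.diffAt (contDiff_const.mul ((ha m).mul (ha m))) x]
  refine Finset.sum_congr rfl fun m _ => ?_
  rw [pd3_const_mul k _ (Smooth.diffAt ((ha m).mul (ha m)) x),
    pd3_mul k ((ha m).diffAt x) ((ha m).diffAt x)]
  ring

lemma hsq_lap {a : ι → E3 → ℝ} (ha : ∀ m, Smooth (a m)) (x : E3) :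
    lap3 (hsq a) x = dens a x + ∑ m, a m x * lap3 (a m) x := by
  have h : ∀ k, pd3 k (pd3 k (hsq a)) x = (∑ m, pd3 k (a m) x ^ 2) +
      ∑ m, a m x * pd3 k (pd3 k (a m)) x := fun k => by
    rw [hsq_pd ha, pd3_sum _ k fun m _ => Smooth.diffAt ((ha m).mul ((ha m).pd k)) x,
      ← Finset.sum_add_distrib]
    refine Finset.sum_congr rfl fun m _ => ?_
    rw [pd3_mul k ((ha m).diffAt x) (((ha m).pd k).diffAt x)]
    ring
  simp only [lap3, h, dens, Finset.sum_add_distrib, Finset.mul_sum]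
  congr 1
  · exact Finset.sum_comm
  · exact Finset.sum_comm
end quad

/-- The seven scalar components of `(u, v, θ)`. -/
def cmp (u v : E3 → E3) (θ : E3 → ℝ) : Fin 3 ⊕ (Fin 3 ⊕ Unit) → E3 → ℝ
  | .inl i => fun x => u x i
  | .inr (.inl i) => fun x => v x i
  | .inr (.inr _) => θ

section
variable {ν : ℝ} {u v : E3 → E3} {pr θ : E3 → ℝ}

lemma NuSol.cmp_smooth (h : NuSol ν u pr v θ) (m) : Smooth (cmp u v θ m) := by
  rcases m with i | i | i
  · exact h.su i
  · exact h.sv i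
  · exact h.sθ

lemma hsq_cmp (u v : E3 → E3) (θ : E3 → ℝ) (x : E3) :
    hsq (cmp u v θ) x = 1 / 2 * (‖u x‖ ^ 2 + ‖v x‖ ^ 2 + ‖θ x‖ ^ 2) := by
  simp only [hsq, Fintype.sum_sum_type, cmp, EuclideanSpace.real_norm_sq_eq, Fin.sum_univ_three,
    Finset.univ_unique, Finset.sum_singleton, Real.norm_eq_abs, sq_abs]
  ring

/-- The flux `v (u · v + θ)`. -/
def flx (u v : E3 → E3) (θ : E3 → ℝ) (k : Fin 3) (x : E3) : ℝ :=
  v x k * ((∑ i, v x i * u x i) + θ x)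

lemma NuSol.flx_smooth (h : NuSol ν u pr v θ) (k : Fin 3) : Smooth (flx u v θ k) :=
  (h.sv k).mul ((ContDiff.sum fun i _ => (h.sv i).mul (h.su i)).add h.sθ)

/-- The energy balance before integration: the equations are multiplied by `u`, `v`, `θ` and added; the
coupling terms combine to the divergence of `flx`. -/
lemma NuSol.pointwise (h : NuSol ν u pr v θ) (x : E3) :
    ν * dens (cmp u v θ) x = ν * lap3 (hsq (cmp u v θ)) x -
      (∑ k, u x k * (pd3 k (hsq (cmp u v θ)) x + pd3 k pr x)) - ∑ k, pd3 k (flx u v θ k) x := by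
  have e : ∀ k, pd3 k (flx u v θ k) x = pd3 k (fun y => v y k) x * ((∑ i, v x i * u x i) + θ x) +
      v x k * ((∑ i, (pd3 k (fun y => v y i) x * u x i + v x i * pd3 k (fun y => u y i) x)) +
        pd3 k θ x) := fun k => by
    have s1 : Smooth fun y => ∑ i, v y i * u y i := ContDiff.sum fun i _ => (h.sv i).mul (h.su i)
    unfold flx
    rw [pd3_mul k ((h.sv k).diffAt x) (Smooth.diffAt (s1.add h.sθ) x),
      pd3_add k (s1.diffAt x) (h.sθ.diffAt x),
      pd3_sum _ k fun i _ => Smooth.diffAt ((h.sv i).mul (h.su i)) x]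
    simp_rw [pd3_mul k ((h.sv _).diffAt x) ((h.su _).diffAt x)]
  have hu := h.eq_u x
  have hv := h.eq_v x
  have hθ := h.eq_θ x
  simp_rw [pd3_mul _ ((h.sv _).diffAt x) ((h.sv _).diffAt x)] at hu
  rw [hsq_lap h.cmp_smooth]
  simp_rw [e, hsq_pd h.cmp_smooth]
  simp only [Fintype.sum_sum_type, cmp, Fin.sum_univ_three, Finset.univ_unique,
    Finset.sum_singleton] at *
  linear_combination u x 0 * hu 0 + u x 1 * hu 1 + u x 2 * hu 2 + v x 0 * hv 0 + v x 1 * hv 1 +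
    v x 2 * hv 2 + θ x * hθ

lemma NuSol.energy_id (h : NuSol ν u pr v θ) {φ : E3 → ℝ} (hφ : Tst φ) :
    ν * ∫ x, φ x * dens (cmp u v θ) x = ν * (∫ x, hsq (cmp u v θ) x * lap3 φ x) +
      (∫ x, (∑ k, u x k * pd3 k φ x) * hsq (cmp u v θ) x) +
      (∫ x, pr x * ∑ k, u x k * pd3 k φ x) + ∫ x, ∑ k, pd3 k φ x * flx u v θ k x := by
  set Q := hsq (cmp u v θ) with hQ
  have sQ : Smooth Q := hsq_smooth h.cmp_smooth
  have adv : ∀ {g : E3 → ℝ}, Smooth g → ∫ x, φ x * ∑ k, u x k * pd3 k g x =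
      -∫ x, g x * ∑ k, u x k * pd3 k φ x := by
    intro g hg
    have t1 : ∀ k, Tst fun x => φ x * u x k := fun k => hφ.mul_right (h.su k)
    have e1 : ∀ k, ∫ x, φ x * u x k * pd3 k g x = -∫ x, pd3 k (fun y => φ y * u y k) x * g x :=
      fun k => ibp_l k (t1 k) hg
    have e2 : ∀ x, φ x * ∑ k, u x k * pd3 k g x = ∑ k, φ x * u x k * pd3 k g x := fun x => by
      rw [Finset.mul_sum]; exact Finset.sum_congr rfl fun k _ => by ring
    simp_rw [e2]
    rw [integral_finsetSum _ fun k _ => ((t1 k).mul_right (hg.pd k)).integrable]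
    simp_rw [e1, Finset.sum_neg_distrib]
    rw [← integral_finsetSum _ fun k _ => (((t1 k).pd k).mul_right hg).integrable]
    congr 1
    refine integral_congr_ae (ae_of_all _ fun x => ?_)
    simp only
    simp_rw [pd3_mul _ (hφ.1.diffAt x) ((h.su _).diffAt x), ← Finset.sum_mul,
      Finset.sum_add_distrib, ← Finset.mul_sum, h.div_u x]
    rw [mul_zero, add_zero, mul_comm]
    congr 1
    exact Finset.sum_congr rfl fun k _ => mul_comm _ _
  have hflx : ∫ x, φ x * ∑ k, pd3 k (flx u v θ k) x = -∫ x, ∑ k, pd3 k φ x * flx u v θ k x := by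
    have e1 : ∀ k, ∫ x, φ x * pd3 k (flx u v θ k) x = -∫ x, pd3 k φ x * flx u v θ k x :=
      fun k => ibp_l k hφ (h.flx_smooth k)
    simp_rw [Finset.mul_sum]
    rw [integral_finsetSum _ fun k _ => (hφ.mul_right ((h.flx_smooth k).pd k)).integrable,
      integral_finsetSum _ fun k _ => ((hφ.pd k).mul_right (h.flx_smooth k)).integrable]
    simp_rw [e1, Finset.sum_neg_distrib]
  have sadv : ∀ {g : E3 → ℝ}, Smooth g → Smooth fun x => ∑ k, u x k * pd3 k g x := fun hg =>
    ContDiff.sum fun k _ => (h.su k).mul (hg.pd k)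
  have sdf : Smooth fun x => ∑ k, pd3 k (flx u v θ k) x :=
    ContDiff.sum fun k _ => (h.flx_smooth k).pd k
  have e0 : ∀ x, ν * (φ x * dens (cmp u v θ) x) = ν * (lap3 Q x * φ x) -
      φ x * (∑ k, u x k * pd3 k Q x) - φ x * (∑ k, u x k * pd3 k pr x) -
      φ x * ∑ k, pd3 k (flx u v θ k) x := fun x => by
    have := h.pointwise x
    simp_rw [mul_add, Finset.sum_add_distrib] at this
    linear_combination φ x * this
  have i1 : Integrable fun x => ν * (lap3 Q x * φ x) := (hφ.mul_left sQ.lap).integrable.const_mul ν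
  have i2 := (hφ.mul_right (sadv sQ)).integrable
  have i3 := (hφ.mul_right (sadv h.sp)).integrable
  have i4 := (hφ.mul_right sdf).integrable
  have i12 : Integrable fun x => ν * (lap3 Q x * φ x) - φ x * (∑ k, u x k * pd3 k Q x) := i1.sub i2
  have i123 : Integrable fun x => ν * (lap3 Q x * φ x) - φ x * (∑ k, u x k * pd3 k Q x) -
    φ x * (∑ k, u x k * pd3 k pr x) := i12.sub i3
  rw [← integral_const_mul]
  simp_rw [e0]
  rw [integral_sub i123 i4, integral_sub i12 i3, integral_sub i1 i2, integral_const_mul, hflx,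
    adv sQ, adv h.sp, ← ibp_lap sQ hφ]
  have : ∫ x, (∑ k, u x k * pd3 k φ x) * Q x = ∫ x, Q x * ∑ k, u x k * pd3 k φ x := by
    simp_rw [mul_comm]
  rw [this]
  ring
end

end TCM

namespace TCM

lemma nr_two {F : Type} [NormedAddCommGroup F] (S : Set E3) (f : E3 → F) :
    nr 2 S f ^ 2 = ∫ x in S, ‖f x‖ ^ 2 := by
  have := nr_pow S f (p := 2) two_pos
  simpa using this

lemma abs_dot (a b : E3) : |∑ i, a i * b i| ≤ ‖a‖ * ‖b‖ := by
  have := abs_real_inner_le_norm b a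
  rw [mul_comm ‖a‖]
  simpa [PiLp.inner_apply] using this

/-- Bound for an integral against a function supported in the shell. -/
lemma int_le_shell {f g : E3 → ℝ} {t M : ℝ} (ht : t ≤ 2) (hg : Continuous g)
    (h0 : ∀ x, f x ≠ 0 → x ∈ At t) (h : ∀ x, |f x| ≤ M * g x) :
    |∫ x, f x| ≤ M * ∫ x in At t, g x := by
  rw [int_restrict h0, ← integral_const_mul, ← Real.norm_eq_abs]
  exact norm_integral_le_of_norm_le ((int_S (At_sub ht) (At_meas t) hg).const_mul M)
    (ae_of_all _ fun x => h x)

lemma nr_smul {F : Type} [NormedAddCommGroup F] [NormedSpace ℝ F] {p : ℝ} (hp : 0 < p)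
    (S : Set E3) (f : E3 → F) {c : ℝ} (hc : 0 ≤ c) :
    nr p S (fun x => c • f x) = c * nr p S f := by
  unfold nr
  have : ∀ x, ‖c • f x‖ ^ p = c ^ p * ‖f x‖ ^ p := fun x => by
    rw [norm_smul, Real.mul_rpow (norm_nonneg _) (norm_nonneg _), Real.norm_of_nonneg hc]
  simp_rw [this]
  rw [integral_const_mul, Real.mul_rpow (by positivity) (integral_nonneg fun x => by positivity),
    ← Real.rpow_mul hc, mul_one_div_cancel hp.ne', Real.rpow_one]

lemma nr_le_mul {F : Type} [NormedAddCommGroup F] [NormedSpace ℝ F] {S : Set E3}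
    (hS : S ⊆ ball 0 2) (hm : MeasurableSet S) {f : E3 → ℝ} {g : E3 → F} (hg : Continuous g)
    {p : ℝ} (hp : 0 < p) {c : ℝ} (hc : 0 ≤ c) (h : ∀ x, |f x| ≤ c * ‖g x‖) :
    nr p S f ≤ c * nr p S g := by
  rw [← nr_smul hp S g hc]
  refine nr_le_of hS hm (hg.const_smul c) hp fun x _ => ?_
  change _ ≤ ‖c • g x‖
  rw [norm_smul, Real.norm_of_nonneg hc]
  exact h x

lemma flx_le (u v : E3 → E3) (θ : E3 → ℝ) (k : Fin 3) (x : E3) : |flx u v θ k x| ≤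
    ‖u x‖ * (‖u x‖ ^ 2 + ‖v x‖ ^ 2 + ‖θ x‖ ^ 2) + ‖v x‖ * ‖θ x‖ := by
  unfold flx
  rw [abs_mul]
  calc _ ≤ ‖v x‖ * (‖v x‖ * ‖u x‖ + ‖θ x‖) := by
        refine mul_le_mul (coord_le _ _) ((abs_add_le _ _).trans ?_) (abs_nonneg _) (norm_nonneg _)
        exact add_le_add (abs_dot _ _) le_rfl
    _ = ‖u x‖ * ‖v x‖ ^ 2 + ‖v x‖ * ‖θ x‖ := by ring
    _ ≤ _ := by
        have : 0 ≤ ‖u x‖ ^ 2 := by positivity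
        have : 0 ≤ ‖θ x‖ ^ 2 := by positivity
        gcongr; linarith

/-- Hölder bounds, over the shell, for the quantities entering the energy identity. -/
lemma shell_norms {ν : ℝ} {u v : E3 → E3} {pr θ : E3 → ℝ} (h : NuSol ν u pr v θ) {p q : ℝ}
    (hp : 2 ≤ p) (hpq : p.HolderConjugate q) (hq1 : 1 ≤ q) (hq3 : 2 * q ≤ p) {S : Set E3}
    (hSs : S ⊆ ball 0 2) (hSm : MeasurableSet S) :
    (∫ x in S, hsq (cmp u v θ) x ≤
      V2 ^ 2 * (nr p S u ^ 2 + nr 2 S v ^ 2 + nr 2 S θ ^ 2)) ∧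
    (nr q S (Gm u v) ≤
      V2 ^ 2 * (nr p S u ^ 2 + nr (2 * q) S v ^ 2 + nr (2 * q) S θ ^ 2)) ∧
    (∫ x in S, (‖u x‖ * (‖u x‖ ^ 2 + ‖v x‖ ^ 2 + ‖θ x‖ ^ 2) + ‖v x‖ * ‖θ x‖) ≤
      V2 ^ 2 * (nr p S u * (nr p S u ^ 2 + nr (2 * q) S v ^ 2 + nr (2 * q) S θ ^ 2)) +
        nr 2 S v * nr 2 S θ) := by
  have hV := one_le_V2
  have hu2 : nr 2 S u ≤ V2 * (nr p S u) := nr_exp hSs hSm h.cu (by norm_num) (by linarith)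
  have hum : nr (2 * q) S u ≤ V2 * (nr p S u) := nr_exp hSs hSm h.cu (by linarith) hq3
  have cθ := h.sθ.cont
  have hQ1 : ∫ x in S, hsq (cmp u v θ) x ≤ V2 ^ 2 * ((nr p S u) ^ 2 + (nr 2 S v) ^ 2 + (nr 2 S θ) ^ 2) := by
    have e : ∫ x in S, hsq (cmp u v θ) x = 1 / 2 * (nr 2 S u ^ 2 + (nr 2 S v) ^ 2 + (nr 2 S θ) ^ 2) := by
      rw [nr_two, nr_two, nr_two, ← integral_add, ← integral_add, ← integral_const_mul]
      · exact integral_congr_ae (ae_of_all _ fun x => hsq_cmp u v θ x)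
      · exact int_S hSs hSm ((h.cu.norm.pow 2).add (h.cv.norm.pow 2))
      · exact int_S hSs hSm (cθ.norm.pow 2)
      · exact int_S hSs hSm (h.cu.norm.pow 2)
      · exact int_S hSs hSm (h.cv.norm.pow 2)
    rw [e]
    have h1 : nr 2 S u ^ 2 ≤ (V2 * (nr p S u)) ^ 2 := pow_le_pow_left₀ (nr_nonneg _ _ _) hu2 2
    have h2 : 1 * (nr 2 S v) ^ 2 ≤ V2 ^ 2 * (nr 2 S v) ^ 2 := by gcongr; exact one_le_pow₀ hV
    have h3 : 1 * (nr 2 S θ) ^ 2 ≤ V2 ^ 2 * (nr 2 S θ) ^ 2 := by gcongr; exact one_le_pow₀ hV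
    have h4 : 0 ≤ V2 ^ 2 * (nr p S u) ^ 2 := by positivity
    have h5 : 0 ≤ (nr 2 S v) ^ 2 := by positivity
    have h6 : 0 ≤ (nr 2 S θ) ^ 2 := by positivity
    rw [mul_pow] at h1
    linarith only [h1, h2, h3, h4, h5, h6]
  have hsum : nr q S (fun x => ‖u x‖ ^ 2 + ‖v x‖ ^ 2 + ‖θ x‖ ^ 2) ≤
      V2 ^ 2 * ((nr p S u) ^ 2 + (nr (2 * q) S v) ^ 2 + (nr (2 * q) S θ) ^ 2) ∧ nr q S (Gm u v) ≤ V2 ^ 2 * ((nr p S u) ^ 2 + (nr (2 * q) S v) ^ 2 + (nr (2 * q) S θ) ^ 2) := by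
    have h1 := nr_add hSs hSm (f := fun x => ‖u x‖ ^ 2 + ‖v x‖ ^ 2) (g := fun x => ‖θ x‖ ^ 2)
      ((h.cu.norm.pow 2).add (h.cv.norm.pow 2)) (cθ.norm.pow 2) hq1
    have h2 := nr_add hSs hSm (f := fun x => ‖u x‖ ^ 2) (g := fun x => ‖v x‖ ^ 2)
      (h.cu.norm.pow 2) (h.cv.norm.pow 2) hq1
    have e := nr_sq S u (p := q) (by linarith)
    have e1 := nr_sq S v (p := q) (by linarith)
    have e2 := nr_sq S θ (p := q) (by linarith)
    rw [e, e1] at h2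
    rw [e2] at h1
    have h3 : nr (2 * q) S u ^ 2 ≤ (V2 * (nr p S u)) ^ 2 := pow_le_pow_left₀ (nr_nonneg _ _ _) hum 2
    have h4 : 1 * (nr (2 * q) S v) ^ 2 ≤ V2 ^ 2 * (nr (2 * q) S v) ^ 2 := by gcongr; exact one_le_pow₀ hV
    have h5 : 1 * (nr (2 * q) S θ) ^ 2 ≤ V2 ^ 2 * (nr (2 * q) S θ) ^ 2 := by gcongr; exact one_le_pow₀ hV
    have h6 : 0 ≤ V2 ^ 2 * (nr (2 * q) S θ) ^ 2 := by positivity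
    rw [mul_pow] at h3
    constructor
    · linarith only [h1, h2, h3, h4, h5, h6]
    · change nr q S (fun x => ‖u x‖ ^ 2 + ‖v x‖ ^ 2) ≤ _
      linarith only [h1, h2, h3, h4, h5, h6]
  have hH1 : ∫ x in S, ‖u x‖ * (‖u x‖ ^ 2 + ‖v x‖ ^ 2 + ‖θ x‖ ^ 2) ≤ V2 ^ 2 * ((nr p S u) * ((nr p S u) ^ 2 + (nr (2 * q) S v) ^ 2 + (nr (2 * q) S θ) ^ 2)) := by
    have h1 := nr_holder hSs hSm (g := fun x => ‖u x‖ ^ 2 + ‖v x‖ ^ 2 + ‖θ x‖ ^ 2) h.cu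
      (((h.cu.norm.pow 2).add (h.cv.norm.pow 2)).add (cθ.norm.pow 2)) hpq
    have e : ∀ x, ‖‖u x‖ ^ 2 + ‖v x‖ ^ 2 + ‖θ x‖ ^ 2‖ = ‖u x‖ ^ 2 + ‖v x‖ ^ 2 + ‖θ x‖ ^ 2 :=
      fun x => Real.norm_of_nonneg (by positivity)
    simp_rw [e] at h1
    calc _ ≤ (nr p S u) * nr q S (fun x => ‖u x‖ ^ 2 + ‖v x‖ ^ 2 + ‖θ x‖ ^ 2) := h1
      _ ≤ (nr p S u) * (V2 ^ 2 * ((nr p S u) ^ 2 + (nr (2 * q) S v) ^ 2 + (nr (2 * q) S θ) ^ 2)) := by gcongr; exacts [nr_nonneg _ _ _, hsum.1]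
      _ = _ := by ring
  have hH2 : ∫ x in S, ‖v x‖ * ‖θ x‖ ≤ (nr 2 S v) * (nr 2 S θ) :=
    nr_holder hSs hSm h.cv cθ (by rw [Real.holderConjugate_iff]; norm_num)
  have hGi : ∫ x in S, (‖u x‖ * (‖u x‖ ^ 2 + ‖v x‖ ^ 2 + ‖θ x‖ ^ 2) + ‖v x‖ * ‖θ x‖) ≤
      V2 ^ 2 * ((nr p S u) * ((nr p S u) ^ 2 + (nr (2 * q) S v) ^ 2 + (nr (2 * q) S θ) ^ 2)) + (nr 2 S v) * (nr 2 S θ) := by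
    rw [integral_add]
    · linarith
    · exact int_S hSs hSm
        (h.cu.norm.mul (((h.cu.norm.pow 2).add (h.cv.norm.pow 2)).add (cθ.norm.pow 2)))
    · exact int_S hSs hSm (h.cv.norm.mul cθ.norm)
  exact ⟨hQ1, hsum.2, hGi⟩

set_option maxHeartbeats 1000000 in
/-- The local energy inequality. -/
lemma energy_ineq {p : ℝ} (hp : 3 ≤ p) : ∃ K : ℝ, 0 < K ∧
    ∀ (ν : ℝ) (u v : E3 → E3) (pr θ : E3 → ℝ), 0 ≤ ν → NuSol ν u pr v θ →
    ∀ s t : ℝ, 1.6 ≤ s → s < t → t ≤ 1.9 →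
    ν * ∫ x in ball (0 : E3) s, dens (cmp u v θ) x ≤ K * (1 / (t - s)) ^ 6 *
      (ν * (nr p (At t) u ^ 2 + nr 2 (At t) v ^ 2 + nr 2 (At t) θ ^ 2) +
        nr p (At t) u * (nr p (At t) u ^ 2 + nr (2 * (p / (p - 1))) (At t) v ^ 2 +
          nr (2 * (p / (p - 1))) (At t) θ ^ 2) + nr 2 (At t) v * nr 2 (At t) θ) := by
  obtain ⟨K, hK, hpress⟩ := press_est hp
  obtain ⟨C, hC, hcut⟩ := cut_bounds
  have hV := one_le_V2
  refine ⟨C * V2 ^ 2 + 18 * C * V2 ^ 2 + 3 * C * K * V2 ^ 2, by positivity, ?_⟩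
  intro ν u v pr θ hν h s t hs hst ht
  set S := At t with hS
  have hSs : S ⊆ ball 0 2 := At_sub (by linarith)
  have hSm : MeasurableSet S := At_meas t
  set q := p / (p - 1) with hq
  have hp1 : 0 < p - 1 := by linarith
  have hq1 : 1 ≤ q := by rw [hq, le_div_iff₀ hp1]; linarith
  have hq3 : 2 * q ≤ p := by
    rw [hq, ← mul_div_assoc, div_le_iff₀ hp1]; nlinarith
  have hpq : p.HolderConjugate q := (Real.holderConjugate_iff_eq_conjExponent (by linarith)).2 hq
  set d := t - s with hd
  have hd0 : 0 < d := by rw [hd]; linarith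
  have hd1 : d ≤ 1 := by rw [hd]; linarith
  set l := 1 / d with hl
  have hl1 : 1 ≤ l := by rw [hl, le_div_iff₀ hd0]; linarith
  set a := (s + d / 4) ^ 2 with ha
  set b := (s + 3 * d / 4) ^ 2 with hb
  have hba : d ≤ b - a := by rw [ha, hb]; nlinarith
  have hab : a < b := by linarith
  have hb4 : b ≤ 4 := by
    have : s + 3 * d / 4 ≤ 2 := by rw [hd]; linarith
    rw [hb]; nlinarith
  set φ := cut a b with hφd
  have hφ : Tst φ := cut_tst hab
  have hbd := hcut a b hab hb4 (by nlinarith [sq_nonneg (s + d / 4)])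
  have hba1 : 1 / (b - a) ≤ l := by rw [hl]; exact one_div_le_one_div_of_le hd0 hba
  have hba0 : 0 < b - a := by linarith
  have hφ1 : ∀ k x, |pd3 k φ x| ≤ C * l := fun k x => ((hbd x).1 k).trans (by
    rw [div_eq_mul_one_div]; gcongr)
  have hφ2 : ∀ x, |lap3 φ x| ≤ C * l ^ 2 := fun x => ((hbd x).2).trans (by
    rw [div_eq_mul_one_div, ← one_div_pow]; gcongr)
  -- the derivatives of the cutoff live in the closed shell
  have hK0 : ∀ k x, pd3 k φ x ≠ 0 → x ∈ Sh (s + d / 4) (s + 3 * d / 4) := by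
    intro k x hx
    constructor
    · by_contra hn
      push Not at hn
      refine hx ?_
      have : φ =ᶠ[nhds x] fun _ => 1 := by
        filter_upwards [(isOpen_lt continuous_norm continuous_const).mem_nhds hn] with y hy
        exact cut_one hab (pow_le_pow_left₀ (norm_nonneg _) (le_of_lt hy) 2)
      rw [pd3_congr k this]; simp [pd3]
    · by_contra hn
      push Not at hn
      refine hx ?_
      have : φ =ᶠ[nhds x] fun _ => 0 := by
        filter_upwards [(isOpen_lt continuous_const continuous_norm).mem_nhds hn] with y hy
        exact cut_zero hab (pow_le_pow_left₀ (by linarith) (le_of_lt hy) 2)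
      rw [pd3_congr k this]; simp [pd3]
  have hKA : ∀ x, x ∈ Sh (s + d / 4) (s + 3 * d / 4) → x ∈ S := fun x hx =>
    mem_At.2 ⟨by linarith [hx.2], by linarith [hx.1]⟩
  have hL0 : ∀ x, lap3 φ x ≠ 0 → x ∈ S := fun x hx => by
    obtain ⟨j, -, hj⟩ := Finset.exists_ne_zero_of_sum_ne_zero hx
    exact hKA x (pd3_supp (Sh_closed _ _) (hK0 j) j x hj)
  set f : E3 → ℝ := fun x => ∑ k, u x k * pd3 k φ x with hf
  have hft : Tst f := Tst.sum _ fun k _ => (hφ.pd k).mul_left (h.su k)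
  have hfs : ∀ x, f x ≠ 0 → x ∈ Sh (s + d / 4) (s + 3 * d / 4) := fun x hx => by
    obtain ⟨j, -, hj⟩ := Finset.exists_ne_zero_of_sum_ne_zero hx
    exact hK0 j x (right_ne_zero_of_mul hj)
  have hf0 : ∫ x, f x = 0 := by
    rw [hf, integral_finsetSum _ fun k _ => ((hφ.pd k).mul_left (h.su k)).integrable]
    have : ∀ k, ∫ x, u x k * pd3 k φ x = -∫ x, pd3 k (fun y => u y k) x * φ x :=
      fun k => ibp_r k (h.su k) hφ
    simp_rw [this, Finset.sum_neg_distrib]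
    rw [← integral_finsetSum _ fun k _ => (hφ.mul_left ((h.su k).pd k)).integrable]
    simp_rw [← Finset.sum_mul, h.div_u]
    simp
  have hfb : ∀ x, |f x| ≤ 3 * C * l * ‖u x‖ := fun x => by
    calc |f x| ≤ ∑ k : Fin 3, |u x k * pd3 k φ x| := Finset.abs_sum_le_sum_abs _ _
      _ ≤ ∑ k : Fin 3, ‖u x‖ * (C * l) := Finset.sum_le_sum fun k _ => by
          rw [abs_mul]
          exact mul_le_mul (coord_le _ _) (hφ1 k x) (abs_nonneg _) (norm_nonneg _)
      _ = _ := by simp; ring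
  have hid : ν * ∫ x, φ x * dens (cmp u v θ) x = ν * (∫ x, hsq (cmp u v θ) x * lap3 φ x) +
      (∫ x, f x * hsq (cmp u v θ) x) + (∫ x, pr x * f x) + ∫ x, ∑ k, pd3 k φ x * flx u v θ k x :=
    h.energy_id hφ
  have hD := dens_smooth h.cmp_smooth
  have hmain : ∫ x in ball (0 : E3) s, dens (cmp u v θ) x ≤ ∫ x, φ x * dens (cmp u v θ) x := by
    rw [← integral_indicator measurableSet_ball]
    have hi : Integrable ((ball (0 : E3) s).indicator (dens (cmp u v θ))) :=
      (int_S (ball_subset_ball (by linarith)) measurableSet_ball hD.cont).integrable_indicator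
        measurableSet_ball
    refine integral_mono hi (hφ.mul_right hD).integrable fun x => ?_
    by_cases hx : x ∈ ball (0 : E3) s
    · rw [Set.indicator_of_mem hx]
      rw [mem_ball_zero_iff] at hx
      have : φ x = 1 := cut_one hab (by
        rw [ha]; exact pow_le_pow_left₀ (norm_nonneg _) (by linarith) 2)
      simp [this]
    · rw [Set.indicator_of_notMem hx]
      exact mul_nonneg (cut_nonneg _ _ _) (dens_nonneg _ _)
  clear_value f φ a b
  set Up := nr p S u with hUp
  set v2 := nr 2 S v with hv2
  set θ2 := nr 2 S θ with hθ2
  set vm := nr (2 * q) S v with hvm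
  set θm := nr (2 * q) S θ with hθm
  have hUp0 : 0 ≤ Up := nr_nonneg _ _ _
  have hv20 : 0 ≤ v2 := nr_nonneg _ _ _
  have hθ20 : 0 ≤ θ2 := nr_nonneg _ _ _
  obtain ⟨hQ1, hGm, hGi⟩ := shell_norms h (p := p) (q := q) (by linarith) hpq hq1 hq3 hSs hSm
  rw [← hUp, ← hv2, ← hθ2] at hQ1
  rw [← hUp, ← hvm, ← hθm] at hGm
  rw [← hUp, ← hvm, ← hθm, ← hv2, ← hθ2] at hGi
  set Q := hsq (cmp u v θ) with hQ
  have hQ0 : ∀ x, 0 ≤ Q x := hsq_nonneg _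
  have hQc := hsq_cmp u v θ
  rw [← hQ] at hQc
  have cQ : Continuous Q := (hsq_smooth h.cmp_smooth).cont
  have cθ := h.sθ.cont
  have hvm0 : 0 ≤ vm := nr_nonneg _ _ _
  have hθm0 : 0 ≤ θm := nr_nonneg _ _ _
  set Y := Up ^ 2 + vm ^ 2 + θm ^ 2 with hY
  have hY0 : 0 ≤ Y := by positivity
  clear_value Q
  have t1 : |∫ x, Q x * lap3 φ x| ≤ C * l ^ 2 * (V2 ^ 2 * (Up ^ 2 + v2 ^ 2 + θ2 ^ 2)) := by
    refine (int_le_shell (t := t) (M := C * l ^ 2) (g := Q) (by linarith) cQ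
      (fun x hx => hL0 x (right_ne_zero_of_mul hx)) fun x => ?_).trans ?_
    · rw [abs_mul, abs_of_nonneg (hQ0 x), mul_comm]
      exact mul_le_mul_of_nonneg_right (hφ2 x) (hQ0 x)
    · gcongr
  have hG : Continuous fun x => ‖u x‖ * (‖u x‖ ^ 2 + ‖v x‖ ^ 2 + ‖θ x‖ ^ 2) + ‖v x‖ * ‖θ x‖ :=
    (h.cu.norm.mul (((h.cu.norm.pow 2).add (h.cv.norm.pow 2)).add (cθ.norm.pow 2))).add
      (h.cv.norm.mul cθ.norm)
  have hCl : 0 < C * l := by positivity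
  have h3Cl : 0 ≤ 3 * C * l := by positivity
  have t2 : |∫ x, f x * Q x| ≤ 3 * C * l * (V2 ^ 2 * (Up * Y) + v2 * θ2) := by
    refine (int_le_shell (t := t) (M := 3 * C * l) (by linarith) hG
      (fun x hx => hKA x (hfs x (left_ne_zero_of_mul hx))) fun x => ?_).trans (by gcongr)
    rw [abs_mul, abs_of_nonneg (hQ0 x), hQc]
    set A := ‖u x‖ ^ 2 + ‖v x‖ ^ 2 + ‖θ x‖ ^ 2 with hA
    have hA0 : 0 ≤ A := by positivity
    calc |f x| * (1 / 2 * A) ≤ 3 * C * l * ‖u x‖ * (1 / 2 * A) := by gcongr; exact hfb x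
      _ = 3 * C * l * (1 / 2 * (‖u x‖ * A)) := by ring
      _ ≤ 3 * C * l * (‖u x‖ * A + ‖v x‖ * ‖θ x‖) := by
          have h1 : 0 ≤ ‖u x‖ * A := by positivity
          have h2 : 0 ≤ ‖v x‖ * ‖θ x‖ := by positivity
          gcongr; linarith
  have t4 : |∫ x, ∑ k, pd3 k φ x * flx u v θ k x| ≤ 3 * C * l * (V2 ^ 2 * (Up * Y) + v2 * θ2) := by
    refine (int_le_shell (t := t) (M := 3 * C * l) (by linarith) hG
      (fun x hx => ?_) fun x => ?_).trans (by gcongr)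
    · obtain ⟨j, -, hj⟩ := Finset.exists_ne_zero_of_sum_ne_zero hx
      exact hKA x (hK0 j x (left_ne_zero_of_mul hj))
    · calc |∑ k, pd3 k φ x * flx u v θ k x| ≤ ∑ k : Fin 3, |pd3 k φ x * flx u v θ k x| :=
            Finset.abs_sum_le_sum_abs _ _
        _ ≤ ∑ k : Fin 3, (C * l) *
            (‖u x‖ * (‖u x‖ ^ 2 + ‖v x‖ ^ 2 + ‖θ x‖ ^ 2) + ‖v x‖ * ‖θ x‖) :=
            Finset.sum_le_sum fun k _ => by
              rw [abs_mul]
              exact mul_le_mul (hφ1 k x) (flx_le u v θ k x) (abs_nonneg _) hCl.le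
        _ = _ := by simp; ring
  have hnf : nr p (ball 0 2) f ≤ 3 * C * l * Up := by
    have h0 : 0 < p := by linarith
    rw [← nr_glob h0 (S := ball 0 2) fun x hx => hSs (hKA x (hfs x hx)),
      nr_glob h0 (S := S) fun x hx => hKA x (hfs x hx)]
    exact nr_le_mul hSs hSm h.cu h0 h3Cl hfb
  have t3 : |∫ x, pr x * f x| ≤ 3 * C * K * l ^ 6 * (V2 ^ 2 * (Up * Y) + ν * Up ^ 2) := by
    have := hpress ν u v pr θ hν h s t hs hst ht f hft hfs hf0
    calc _ ≤ K * l ^ 5 * (nr p (ball 0 2) f * (nr q S (Gm u v) + ν * Up)) := this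
      _ ≤ K * l ^ 5 * (3 * C * l * Up * (V2 ^ 2 * Y + ν * Up)) := by
          have := nr_nonneg p (ball 0 2) f
          have := nr_nonneg q S (Gm u v)
          gcongr
      _ = _ := by ring
  have hl16 : l ≤ l ^ 6 := le_self_pow₀ hl1 (by norm_num)
  have hl26 : l ^ 2 ≤ l ^ 6 := pow_le_pow_right₀ hl1 (by norm_num)
  have hmain2 := mul_le_mul_of_nonneg_left hmain hν
  rw [hid] at hmain2
  have b1 := (abs_le.1 t1).2
  have b2 := (abs_le.1 t2).2
  have b3 := (abs_le.1 t3).2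
  have b4 := (abs_le.1 t4).2
  have c1 := mul_le_mul_of_nonneg_left b1 hν
  set E2 := ν * (Up ^ 2 + v2 ^ 2 + θ2 ^ 2) with hE2
  have hUY : 0 ≤ Up * Y := by positivity
  have hvt : 0 ≤ v2 * θ2 := by positivity
  have hV2 : 1 ≤ V2 ^ 2 := one_le_pow₀ hV
  have hE20 : 0 ≤ E2 := by positivity
  have hνU : ν * Up ^ 2 ≤ V2 ^ 2 * E2 := by
    have h1 : ν * Up ^ 2 ≤ E2 := by
      rw [hE2]; gcongr
      have : 0 ≤ v2 ^ 2 := by positivity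
      have : 0 ≤ θ2 ^ 2 := by positivity
      linarith
    have h2 : 1 * E2 ≤ V2 ^ 2 * E2 := by gcongr
    linarith
  set T := E2 + Up * Y + v2 * θ2 with hT
  have d1 : ν * (C * l ^ 2 * (V2 ^ 2 * (Up ^ 2 + v2 ^ 2 + θ2 ^ 2))) ≤ C * V2 ^ 2 * l ^ 6 * T := by
    calc _ = C * V2 ^ 2 * l ^ 2 * E2 := by rw [hE2]; ring
      _ ≤ C * V2 ^ 2 * l ^ 6 * T := by gcongr; linarith
  have d2 : 3 * C * l * (V2 ^ 2 * (Up * Y) + v2 * θ2) ≤ 3 * C * V2 ^ 2 * l ^ 6 * T := by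
    have h1 : 1 * (v2 * θ2) ≤ V2 ^ 2 * (v2 * θ2) := by gcongr
    calc _ ≤ 3 * C * l ^ 6 * (V2 ^ 2 * T) := by
          have : V2 ^ 2 * (Up * Y) + v2 * θ2 ≤ V2 ^ 2 * T := by
            have : 0 ≤ V2 ^ 2 * E2 := by positivity
            rw [hT]; linarith only [this, h1]
          gcongr
      _ = _ := by ring
  have d3 : 3 * C * K * l ^ 6 * (V2 ^ 2 * (Up * Y) + ν * Up ^ 2) ≤ 3 * C * K * V2 ^ 2 * l ^ 6 * T := by
    calc _ ≤ 3 * C * K * l ^ 6 * (V2 ^ 2 * T) := by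
          have : V2 ^ 2 * (Up * Y) + ν * Up ^ 2 ≤ V2 ^ 2 * T := by
            have : 0 ≤ V2 ^ 2 * (v2 * θ2) := by positivity
            rw [hT]; linarith only [this, hνU]
          gcongr
      _ = _ := by ring
  have hT0 : 0 ≤ T := by positivity
  have hlast : 0 ≤ 12 * C * V2 ^ 2 * l ^ 6 * T := by positivity
  have : (C * V2 ^ 2 + 18 * C * V2 ^ 2 + 3 * C * K * V2 ^ 2) * l ^ 6 * T =
    C * V2 ^ 2 * l ^ 6 * T + 2 * (3 * C * V2 ^ 2 * l ^ 6 * T) + 3 * C * K * V2 ^ 2 * l ^ 6 * T +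
      12 * C * V2 ^ 2 * l ^ 6 * T := by ring
  rw [this]
  linarith only [hmain2, c1, b2, b3, b4, d1, d2, d3, hlast]

end TCM

namespace TCM

/-! ### The Sobolev inequality -/

lemma fderiv_norm_sq_le (f : E3 → ℝ) (x : E3) :
    ‖fderiv ℝ f x‖ ^ 2 ≤ ∑ k, pd3 k f x ^ 2 := by
  have h0 : 0 ≤ ∑ k, pd3 k f x ^ 2 := Finset.sum_nonneg fun _ _ => sq_nonneg _
  have h : ‖fderiv ℝ f x‖ ≤ √(∑ k, pd3 k f x ^ 2) := by
    refine ContinuousLinearMap.opNorm_le_bound _ (Real.sqrt_nonneg _) fun w => ?_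
    rw [fderiv_eq_sum, Real.norm_eq_abs]
    refine Real.abs_le_sqrt (Finset.sum_mul_sq_le_sq_mul_sq _ _ _) |>.trans ?_
    rw [← EuclideanSpace.real_norm_sq_eq, mul_comm, Real.sqrt_mul h0, Real.sqrt_sq (norm_nonneg _)]
  calc _ ≤ √(∑ k, pd3 k f x ^ 2) ^ 2 := pow_le_pow_left₀ (norm_nonneg _) h 2
    _ = _ := Real.sq_sqrt h0

lemma sob_test : ∃ C : ℝ, 0 < C ∧ ∀ f : E3 → ℝ, Tst f → (∀ x, f x ≠ 0 → ‖x‖ ≤ 1.9) →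
    nr 6 (ball 0 2) f ^ 2 ≤ C * ∫ x in ball (0 : E3) 2, ∑ k, pd3 k f x ^ 2 := by
  set K := SNormLESNormFDerivOfEqConst ℝ (volume : Measure E3) ((2 : ℝ≥0) : ℝ) with hK
  refine ⟨(K : ℝ) ^ 2 + 1, by positivity, fun f hf hs => ?_⟩
  have hB : ball (0 : E3) 2 ⊆ ball 0 2 := subset_rfl
  have h1 := eLpNorm_le_eLpNorm_fderiv_of_eq (volume : Measure E3) (u := f) (p := 2) (p' := 6)
    (hf.1.of_le (by norm_cast)) hf.2 (by norm_num) (by simp) (by simp; norm_num)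
  have cf : Continuous (fderiv ℝ f) := hf.1.continuous_fderiv (by norm_cast)
  have e1 : eLpNorm f (6 : ℝ≥0) volume = LpS f 6 (ball 0 2) := by
    unfold LpS
    rw [eLpNorm_restrict_eq_of_support_subset
      (fun x hx => mem_ball_zero_iff.2 (lt_of_le_of_lt (hs x hx) (by norm_num)))]
    congr 1
    norm_num
  have hsd : ∀ x, fderiv ℝ f x ≠ 0 → ‖x‖ ≤ 1.9 := fun x hx => by
    by_contra hn
    push Not at hn
    refine hx ?_
    have : f =ᶠ[nhds x] fun _ => 0 := by
      filter_upwards [(isOpen_lt continuous_const continuous_norm).mem_nhds hn] with y hy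
      by_contra h
      exact absurd (hs y h) (not_le.2 hy)
    rw [this.fderiv_eq]; simp
  have e2 : eLpNorm (fderiv ℝ f) (2 : ℝ≥0) volume = LpS (fderiv ℝ f) 2 (ball 0 2) := by
    unfold LpS
    rw [eLpNorm_restrict_eq_of_support_subset (f := fderiv ℝ f)
      (fun x hx => mem_ball_zero_iff.2 (lt_of_le_of_lt (hsd x (Function.mem_support.1 hx)) (by norm_num)))]
    congr 1
    norm_num
  rw [e1, e2, nr_eq hB measurableSet_ball hf.1.cont (by norm_num),
    nr_eq hB measurableSet_ball cf (by norm_num), ← hK, ← ENNReal.ofReal_coe_nnreal,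
    ← ENNReal.ofReal_mul K.coe_nonneg,
    ENNReal.ofReal_le_ofReal_iff (mul_nonneg K.coe_nonneg (nr_nonneg _ _ _))] at h1
  have h2 : nr 2 (ball 0 2) (fderiv ℝ f) ^ 2 ≤ ∫ x in ball (0 : E3) 2, ∑ k, pd3 k f x ^ 2 := by
    rw [nr_two]
    refine setIntegral_mono (int_S hB measurableSet_ball (cf.norm.pow 2))
      (int_S hB measurableSet_ball ?_) fun x => fderiv_norm_sq_le f x
    exact continuous_finsetSum _ fun k _ => (hf.1.pd k).cont.pow 2
  calc _ ≤ (K * nr 2 (ball 0 2) (fderiv ℝ f)) ^ 2 := pow_le_pow_left₀ (nr_nonneg _ _ _) h1 2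
    _ = K ^ 2 * nr 2 (ball 0 2) (fderiv ℝ f) ^ 2 := by ring
    _ ≤ (K ^ 2 + 1) * ∫ x in ball (0 : E3) 2, ∑ k, pd3 k f x ^ 2 := by
        gcongr
        linarith

/-- A local Sobolev inequality: the cutoff error is felt only in the shell between the radii, which lies
in `At t`. -/
lemma sob_scalar : ∃ C : ℝ, 0 < C ∧ ∀ f : E3 → ℝ, Smooth f → ∀ s t : ℝ, 1.6 ≤ s → s < t → t ≤ 1.9 →
    nr 6 (ball 0 s) f ^ 2 ≤ C * ((∫ x in ball (0 : E3) t, ∑ k, pd3 k f x ^ 2) +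
      (1 / (t - s)) ^ 2 * nr 2 (At t) f ^ 2) := by
  obtain ⟨K, hK, hsob⟩ := sob_test
  obtain ⟨C, hC, hcut⟩ := cut_bounds
  refine ⟨K * (2 + 6 * C ^ 2), by positivity, fun f hf s t hs hst ht => ?_⟩
  set d := t - s with hd
  have hd0 : 0 < d := by rw [hd]; linarith
  have hd1 : d ≤ 1 := by rw [hd]; linarith
  set l := 1 / d with hl
  set a := s ^ 2 with ha
  set b := (s + d / 2) ^ 2 with hb
  have hba : d ≤ b - a := by rw [ha, hb]; nlinarith
  have hab : a < b := by linarith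
  have hb4 : b ≤ 4 := by
    have : s + d / 2 ≤ 2 := by rw [hd]; linarith
    rw [hb]; nlinarith
  have hbd := hcut a b hab hb4 (by nlinarith [sq_nonneg s])
  have hba1 : 1 / (b - a) ≤ l := by rw [hl]; exact one_div_le_one_div_of_le hd0 hba
  have hφ1 : ∀ k x, |pd3 k (cut a b) x| ≤ C * l := fun k x => ((hbd x).1 k).trans (by
    rw [div_eq_mul_one_div]; gcongr)
  have hφz : ∀ x : E3, s + d / 2 < ‖x‖ → cut a b x = 0 := fun x hx =>
    cut_zero hab (pow_le_pow_left₀ (by linarith) hx.le 2)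
  have hφ0 : ∀ k x, pd3 k (cut a b) x ≠ 0 → x ∈ At t := by
    intro k x hx
    rw [mem_At]
    constructor
    · by_contra hn
      push Not at hn
      refine hx ?_
      have hn' : s + d / 2 < ‖x‖ := by linarith
      have : cut a b =ᶠ[nhds x] fun _ => 0 := by
        filter_upwards [(isOpen_lt continuous_const continuous_norm).mem_nhds hn'] with y hy
        exact hφz y hy
      rw [pd3_congr k this]; simp [pd3]
    · by_contra hn
      push Not at hn
      refine hx ?_
      have hn' : ‖x‖ < s := by linarith
      have : cut a b =ᶠ[nhds x] fun _ => 1 := by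
        filter_upwards [(isOpen_lt continuous_norm continuous_const).mem_nhds hn'] with y hy
        exact cut_one hab (pow_le_pow_left₀ (norm_nonneg _) (le_of_lt hy) 2)
      rw [pd3_congr k this]; simp [pd3]
  have hB : ball (0 : E3) 2 ⊆ ball 0 2 := subset_rfl
  have hg : Tst fun x => cut a b x * f x := (cut_tst hab).mul_right hf
  have h1 := hsob _ hg fun x hx => by
    by_contra hn
    push Not at hn
    exact left_ne_zero_of_mul hx (hφz x (by linarith))
  have h2 : nr 6 (ball 0 s) f ≤ nr 6 (ball 0 2) (fun x => cut a b x * f x) := by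
    refine le_trans (le_of_eq ?_) (nr_mono_set hB measurableSet_ball hg.1.cont (by norm_num)
      (ball_subset_ball (by linarith : s ≤ 2)))
    unfold nr
    congr 1
    refine setIntegral_congr_fun measurableSet_ball fun x hx => ?_
    have : ‖x‖ < s := by simpa using hx
    simp [cut_one hab (pow_le_pow_left₀ (norm_nonneg x) this.le 2)]
  have hD : Continuous fun x => ∑ k, pd3 k f x ^ 2 :=
    continuous_finsetSum _ fun k _ => (hf.pd k).cont.pow 2
  have hAs : At t ⊆ ball (0 : E3) 2 := At_sub (by linarith)
  have htb : ball (0 : E3) t ⊆ ball 0 2 := ball_subset_ball (by linarith)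
  have hpt : ∀ x, ∑ k, pd3 k (fun y => cut a b y * f y) x ^ 2 ≤
      2 * (ball (0 : E3) t).indicator (fun x => ∑ k, pd3 k f x ^ 2) x +
        6 * (C * l) ^ 2 * (At t).indicator (fun x => ‖f x‖ ^ 2) x := by
    intro x
    have hk : ∀ k, pd3 k (fun y => cut a b y * f y) x ^ 2 ≤
        2 * (ball (0 : E3) t).indicator (fun x => pd3 k f x ^ 2) x +
        2 * ((C * l) ^ 2 * (At t).indicator (fun x => ‖f x‖ ^ 2) x) := by
      intro k
      rw [pd3_mul k ((cut_smooth a b).diffAt x) (hf.diffAt x)]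
      have i1 : (cut a b x * pd3 k f x) ^ 2 ≤ (ball (0 : E3) t).indicator (fun x => pd3 k f x ^ 2) x := by
        by_cases hx : x ∈ ball (0 : E3) t
        · rw [Set.indicator_of_mem hx, mul_pow]
          have : cut a b x ^ 2 ≤ 1 := pow_le_one₀ (cut_nonneg _ _ _) (cut_le_one _ _ _)
          nlinarith [sq_nonneg (pd3 k f x)]
        · have : t ≤ ‖x‖ := by simpa using hx
          rw [Set.indicator_of_notMem hx, hφz x (by linarith)]; simp
      have i2 : (pd3 k (cut a b) x * f x) ^ 2 ≤
          (C * l) ^ 2 * (At t).indicator (fun x => ‖f x‖ ^ 2) x := by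
        by_cases hx : pd3 k (cut a b) x = 0
        · have : 0 ≤ (At t).indicator (fun x => ‖f x‖ ^ 2) x :=
            Set.indicator_nonneg (fun _ _ => by positivity) x
          rw [hx, zero_mul, zero_pow two_ne_zero]; positivity
        · rw [Set.indicator_of_mem (hφ0 k x hx), mul_pow, Real.norm_eq_abs, sq_abs]
          have : pd3 k (cut a b) x ^ 2 ≤ (C * l) ^ 2 := by
            rw [← sq_abs]; exact pow_le_pow_left₀ (abs_nonneg _) (hφ1 k x) 2
          gcongr
      nlinarith [sq_nonneg (pd3 k (cut a b) x * f x - cut a b x * pd3 k f x)]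
    refine (Finset.sum_le_sum fun k _ => hk k).trans (le_of_eq ?_)
    by_cases hx : x ∈ ball (0 : E3) t
    · simp [Set.indicator_of_mem hx, Fin.sum_univ_three]; ring
    · simp [Set.indicator_of_notMem hx, Fin.sum_univ_three]; ring
  have iA : Integrable ((ball (0 : E3) t).indicator fun x => ∑ k, pd3 k f x ^ 2) :=
    (int_S htb measurableSet_ball hD).integrable_indicator measurableSet_ball
  have iB : Integrable ((At t).indicator fun x => ‖f x‖ ^ 2) :=
    (int_S hAs (At_meas t) (hf.cont.norm.pow 2)).integrable_indicator (At_meas t)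
  have hsumc : Continuous fun x => ∑ k, pd3 k (fun y => cut a b y * f y) x ^ 2 :=
    continuous_finsetSum _ fun k _ => (hg.1.pd k).cont.pow 2
  have h3 : ∫ x in ball (0 : E3) 2, ∑ k, pd3 k (fun y => cut a b y * f y) x ^ 2 ≤
      2 * (∫ x in ball (0 : E3) t, ∑ k, pd3 k f x ^ 2) + 6 * (C * l) ^ 2 * nr 2 (At t) f ^ 2 := by
    have iR : Integrable fun x => 2 * (ball (0 : E3) t).indicator (fun x => ∑ k, pd3 k f x ^ 2) x +
        6 * (C * l) ^ 2 * (At t).indicator (fun x => ‖f x‖ ^ 2) x :=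
      (iA.const_mul 2).add (iB.const_mul _)
    calc _ ≤ ∫ x in ball (0 : E3) 2,
          (2 * (ball (0 : E3) t).indicator (fun x => ∑ k, pd3 k f x ^ 2) x +
          6 * (C * l) ^ 2 * (At t).indicator (fun x => ‖f x‖ ^ 2) x) :=
          setIntegral_mono (int_S hB measurableSet_ball hsumc) iR.integrableOn hpt
      _ ≤ ∫ x, (2 * (ball (0 : E3) t).indicator (fun x => ∑ k, pd3 k f x ^ 2) x +
          6 * (C * l) ^ 2 * (At t).indicator (fun x => ‖f x‖ ^ 2) x) :=
          setIntegral_le_integral iR (ae_of_all _ fun x =>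
            (Finset.sum_nonneg fun _ _ => sq_nonneg _).trans (hpt x))
      _ = _ := by
          rw [integral_add (iA.const_mul 2) (iB.const_mul _), integral_const_mul, integral_const_mul,
            integral_indicator measurableSet_ball, integral_indicator (At_meas t), nr_two]
  have hI0 : 0 ≤ ∫ x in ball (0 : E3) t, ∑ k, pd3 k f x ^ 2 :=
    integral_nonneg fun _ => Finset.sum_nonneg fun _ _ => sq_nonneg _
  have hN0 : 0 ≤ l ^ 2 * nr 2 (At t) f ^ 2 := by positivity
  calc _ ≤ nr 6 (ball 0 2) (fun x => cut a b x * f x) ^ 2 := pow_le_pow_left₀ (nr_nonneg _ _ _) h2 2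
    _ ≤ _ := h1
    _ ≤ K * (2 * (∫ x in ball (0 : E3) t, ∑ k, pd3 k f x ^ 2) +
        6 * (C * l) ^ 2 * nr 2 (At t) f ^ 2) := by gcongr
    _ ≤ K * ((2 + 6 * C ^ 2) * ((∫ x in ball (0 : E3) t, ∑ k, pd3 k f x ^ 2) +
        l ^ 2 * nr 2 (At t) f ^ 2)) := by
        gcongr
        have : 0 ≤ C ^ 2 * ∫ x in ball (0 : E3) t, ∑ k, pd3 k f x ^ 2 := by positivity
        linarith only [this, hN0]
    _ = _ := by ring

/-- The Sobolev inequality for the baroclinic mode and the temperature, with the full Dirichlet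
energy on the right. -/
lemma sobolev : ∃ C : ℝ, 0 < C ∧ ∀ (ν : ℝ) (u v : E3 → E3) (pr θ : E3 → ℝ), NuSol ν u pr v θ →
    ∀ s t : ℝ, 1.6 ≤ s → s < t → t ≤ 1.9 →
    nr 6 (ball 0 s) v ^ 2 + nr 6 (ball 0 s) θ ^ 2 ≤
      C * ((∫ x in ball (0 : E3) t, dens (cmp u v θ) x) +
        (1 / (t - s)) ^ 2 * (nr 2 (At t) v ^ 2 + nr 2 (At t) θ ^ 2)) := by
  obtain ⟨C, hC, hsob⟩ := sob_scalar
  refine ⟨3 * C, by positivity, fun ν u v pr θ h s t hs hst ht => ?_⟩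
  have hsb : ball (0 : E3) s ⊆ ball 0 2 := ball_subset_ball (by linarith)
  have htb : ball (0 : E3) t ⊆ ball 0 2 := ball_subset_ball (by linarith)
  have hAs : At t ⊆ ball (0 : E3) 2 := At_sub (by linarith)
  have hv := fun i => hsob _ (h.sv i) s t hs hst ht
  have hθ := hsob _ h.sθ s t hs hst ht
  have hcomp : nr 6 (ball 0 s) v ≤ ∑ i, nr 6 (ball 0 s) (fun x => v x i) := by
    have c0 : ∀ i, Continuous fun x => |v x i| := fun i => (h.sv i).cont.abs
    have e : ∀ i, nr 6 (ball 0 s) (fun x => |v x i|) = nr 6 (ball 0 s) (fun x => v x i) :=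
      fun i => nr_norm 6 (ball 0 s) (fun x => v x i)
    have c01 : Continuous fun x => |v x 0| + |v x 1| := (c0 0).add (c0 1)
    have c012 : Continuous fun x => |v x 0| + |v x 1| + |v x 2| := c01.add (c0 2)
    have a1 := nr_add hsb measurableSet_ball (p := 6) (c0 0) (c0 1) (by norm_num)
    have a2 := nr_add hsb measurableSet_ball (p := 6) c01 (c0 2) (by norm_num)
    have a3 : nr 6 (ball 0 s) v ≤ nr 6 (ball 0 s) (fun x => |v x 0| + |v x 1| + |v x 2|) := by
      refine nr_le_of hsb measurableSet_ball c012 (by norm_num)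
        fun x _ => ?_
      rw [Real.norm_of_nonneg (by positivity)]
      refine abs_le_of_sq_le_sq' ?_ (by positivity) |>.2
      rw [EuclideanSpace.real_norm_sq_eq, Fin.sum_univ_three, ← sq_abs (v x 0), ← sq_abs (v x 1),
        ← sq_abs (v x 2)]
      nlinarith [mul_nonneg (abs_nonneg (v x 0)) (abs_nonneg (v x 1)),
        mul_nonneg (abs_nonneg (v x 0)) (abs_nonneg (v x 2)),
        mul_nonneg (abs_nonneg (v x 1)) (abs_nonneg (v x 2))]
    rw [Fin.sum_univ_three, ← e, ← e, ← e]
    linarith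
  have hcs : nr 6 (ball 0 s) v ^ 2 ≤ 3 * ∑ i, nr 6 (ball 0 s) (fun x => v x i) ^ 2 := by
    refine (pow_le_pow_left₀ (nr_nonneg _ _ _) hcomp 2).trans ?_
    have := sq_sum_le_card_mul_sum_sq (s := (Finset.univ : Finset (Fin 3)))
      (f := fun i => nr 6 (ball 0 s) (fun x => v x i))
    simpa using this
  have hn2 : ∑ i, nr 2 (At t) (fun x => v x i) ^ 2 = nr 2 (At t) v ^ 2 := by
    simp_rw [nr_two]
    have hi : ∀ i, IntegrableOn (fun x => ‖v x i‖ ^ 2) (At t) := fun i =>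
      int_S hAs (At_meas t) ((h.sv i).cont.norm.pow 2)
    rw [← integral_finsetSum _ fun i _ => hi i]
    simp [EuclideanSpace.real_norm_sq_eq]
  have cg : ∀ {f : E3 → ℝ}, Smooth f → IntegrableOn (fun x => ∑ k, pd3 k f x ^ 2) (ball (0 : E3) t) :=
    fun hf => int_S htb measurableSet_ball
      (continuous_finsetSum _ fun k _ => (Smooth.pd hf k).cont.pow 2)
  have hDn : (∑ i, ∫ x in ball (0 : E3) t, ∑ k, pd3 k (fun y => v y i) x ^ 2) +
      (∫ x in ball (0 : E3) t, ∑ k, pd3 k θ x ^ 2) ≤ ∫ x in ball (0 : E3) t, dens (cmp u v θ) x := by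
    rw [← integral_finsetSum _ fun i _ => cg (h.sv i), ← integral_add
      (integrable_finsetSum _ fun i _ => cg (h.sv i)) (cg h.sθ)]
    refine setIntegral_mono ((integrable_finsetSum _ fun i _ => cg (h.sv i)).add (cg h.sθ))
      (int_S htb measurableSet_ball (dens_smooth h.cmp_smooth).cont) fun x => ?_
    simp only [dens, Fintype.sum_sum_type, cmp, Finset.univ_unique, Finset.sum_singleton]
    have : 0 ≤ ∑ i, ∑ k, pd3 k (fun y => u y i) x ^ 2 :=
      Finset.sum_nonneg fun _ _ => Finset.sum_nonneg fun _ _ => sq_nonneg _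
    linarith
  have hsv := Finset.sum_le_sum fun i (_ : i ∈ (Finset.univ : Finset (Fin 3))) => hv i
  rw [← Finset.mul_sum, Finset.sum_add_distrib, ← Finset.mul_sum, hn2] at hsv
  have hI0 : 0 ≤ ∫ x in ball (0 : E3) t, ∑ k, pd3 k θ x ^ 2 :=
    integral_nonneg fun _ => Finset.sum_nonneg fun _ _ => sq_nonneg _
  have hN0 : 0 ≤ (1 / (t - s)) ^ 2 * nr 2 (At t) θ ^ 2 := by positivity
  have hθ0 : 0 ≤ C * (∫ x in ball (0 : E3) t, ∑ k, pd3 k θ x ^ 2) := by positivity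
  have hN1 := mul_nonneg hC.le hN0
  have hDn' := mul_le_mul_of_nonneg_left hDn hC.le
  linarith only [hcs, hsv, hθ, hDn', hθ0, hN1]

end TCM

namespace TCM

/-! ### Interpolation and exponents -/

lemma nr_rpow {F : Type} [NormedAddCommGroup F] (S : Set E3) (f : E3 → F) {q c : ℝ} (hq : 0 < q)
    (hc : 0 < c) : nr (q / c) S (fun x => ‖f x‖ ^ c) = nr q S f ^ c := by
  unfold nr
  have : ∀ x, ‖‖f x‖ ^ c‖ ^ (q / c) = ‖f x‖ ^ q := fun x => by
    rw [Real.norm_of_nonneg (by positivity), ← Real.rpow_mul (norm_nonneg _)]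
    congr 1; field_simp
  simp_rw [this]
  rw [← Real.rpow_mul (integral_nonneg fun x => by positivity)]
  congr 1; field_simp

/-- Interpolation of `L^m` between `L^q` and `L^6`. -/
lemma nr_interp {F : Type} [NormedAddCommGroup F] {S : Set E3} (hS : S ⊆ ball 0 2)
    (hm : MeasurableSet S) {f : E3 → F} (hf : Continuous f) {q m κ : ℝ} (hq : 0 < q) (hm0 : 0 < m)
    (h0 : 0 < κ) (h1 : κ < 1) (h : 1 / m = (1 - κ) / q + κ / 6) :
    nr m S f ≤ nr q S f ^ (1 - κ) * nr 6 S f ^ κ := by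
  set a := m * (1 - κ) with ha
  set b := m * κ with hb
  have ha0 : 0 < a := mul_pos hm0 (by linarith)
  have hb0 : 0 < b := by positivity
  have hab : a / q + b / 6 = 1 := by
    have : m * (1 / m) = m * ((1 - κ) / q + κ / 6) := by rw [h]
    rw [mul_one_div_cancel hm0.ne'] at this
    rw [this, ha, hb]; ring
  have hconj : (q / a).HolderConjugate (6 / b) := by
    rw [Real.holderConjugate_iff, inv_div, inv_div]
    refine ⟨?_, hab⟩
    rw [lt_div_iff₀ ha0, one_mul]
    have : 0 < b / 6 := by positivity
    have h2 : a / q < 1 := by linarith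
    rwa [div_lt_one hq] at h2
  have hh := nr_holder hS hm (f := fun x => ‖f x‖ ^ a) (g := fun x => ‖f x‖ ^ b)
    (rpow_cont hf ha0.le) (rpow_cont hf hb0.le) hconj
  rw [nr_rpow S f hq ha0, nr_rpow S f (by norm_num) hb0] at hh
  have e : ∀ x, ‖‖f x‖ ^ a‖ * ‖‖f x‖ ^ b‖ = ‖f x‖ ^ m := fun x => by
    rw [Real.norm_of_nonneg (by positivity), Real.norm_of_nonneg (by positivity),
      ← Real.rpow_add_of_nonneg (norm_nonneg _) ha0.le hb0.le]
    congr 1; rw [ha, hb]; ring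
  simp_rw [e] at hh
  have n1 := nr_nonneg q S f
  have n2 := nr_nonneg 6 S f
  calc nr m S f = (∫ x in S, ‖f x‖ ^ m) ^ (1 / m) := rfl
    _ ≤ (nr q S f ^ a * nr 6 S f ^ b) ^ (1 / m) :=
        Real.rpow_le_rpow (integral_nonneg fun x => by positivity) hh (by positivity)
    _ = _ := by
        rw [Real.mul_rpow (by positivity) (by positivity), ← Real.rpow_mul n1, ← Real.rpow_mul n2]
        congr 2
        · rw [ha]; field_simp
        · rw [hb]; field_simp

/-- The weight of `L^6` when `L^m` is interpolated between `L^q` and `L^6`; no interpolation takes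
place when `m ≤ q`. -/
def kap (q m : ℝ) : ℝ := if q < m then 1 - (1 / m - 1 / 6) / (1 / q - 1 / 6) else 0

/-- The power of `R` in the bound for the `L^m` norm of a rescaled function. -/
def ex (q β m : ℝ) : ℝ := if q < m then (1 - kap q m) * β - 3 / m else β - 3 / q

lemma kap_mem {q m : ℝ} (hq : 0 < q) (hm : m < 6) : 0 ≤ kap q m ∧ kap q m < 1 := by
  unfold kap
  split_ifs with h
  · have h1 : 0 < 1 / m - 1 / 6 := by
      have := one_div_lt_one_div_of_lt (by linarith : 0 < m) hm; linarith
    have h2 : 1 / m < 1 / q := one_div_lt_one_div_of_lt hq h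
    have h3 : (1 / m - 1 / 6) / (1 / q - 1 / 6) ≤ 1 := by
      rw [div_le_one (by linarith)]; linarith
    have h4 : 0 < (1 / m - 1 / 6) / (1 / q - 1 / 6) := div_pos h1 (by linarith)
    constructor <;> linarith
  · norm_num

lemma kap_pos {q m : ℝ} (hq : 0 < q) (hm : m < 6) (h : q < m) : 0 < kap q m := by
  unfold kap
  rw [if_pos h]
  have h1 : 0 < 1 / m - 1 / 6 := by
    have := one_div_lt_one_div_of_lt (by linarith : 0 < m) hm; linarith
  have h2 : 1 / m < 1 / q := one_div_lt_one_div_of_lt hq h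
  have h3 : (1 / m - 1 / 6) / (1 / q - 1 / 6) < 1 := by
    rw [div_lt_one (by linarith)]; linarith
  linarith

/-- The bound for the `L^m` norm of a rescaled function in terms of its scaled `L^6` norm. -/
lemma nr_bound {F : Type} [NormedAddCommGroup F] {S : Set E3} (hS : S ⊆ ball 0 2)
    (hmS : MeasurableSet S) {f : E3 → F} (hf : Continuous f) {q m β M R : ℝ} (hq : 1 ≤ q)
    (hm1 : 1 ≤ m) (hm : m < 6) (hM : 1 ≤ M) (hR : 0 < R)
    (h : nr q S f ≤ M * R ^ (β - 3 / q)) :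
    nr m S f ≤ V2 * M * R ^ ex q β m * (R ^ (1 / 2 : ℝ) * nr 6 S f) ^ kap q m := by
  have hV := one_le_V2
  have hq0 : 0 < q := by linarith
  by_cases hqm : q < m
  · obtain ⟨-, k1⟩ := kap_mem hq0 hm
    have k0 := kap_pos hq0 hm hqm
    have hk : 1 / m = (1 - kap q m) / q + kap q m / 6 := by
      have h1 : 0 < 1 / m - 1 / 6 := by
        have := one_div_lt_one_div_of_lt (by linarith : 0 < m) hm; linarith
      have h2 : 1 / m < 1 / q := one_div_lt_one_div_of_lt hq0 hqm
      have h3 : (1 - kap q m) * (1 / q - 1 / 6) = 1 / m - 1 / 6 := by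
        unfold kap; rw [if_pos hqm, sub_sub_cancel, div_mul_cancel₀ _ (by linarith)]
      linear_combination -h3
    have hi := nr_interp hS hmS hf hq0 (by linarith) k0 k1 hk
    set κ := kap q m with hκ
    have n6 := nr_nonneg 6 S f
    have hRR : (M * R ^ (β - 3 / q)) ^ (1 - κ) ≤ M * R ^ ((β - 3 / q) * (1 - κ)) := by
      rw [Real.mul_rpow (by positivity) (by positivity), ← Real.rpow_mul hR.le]
      gcongr
      exact Real.rpow_le_self_of_one_le hM (by linarith)
    have hex : (β - 3 / q) * (1 - κ) = ex q β m + 1 / 2 * κ := by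
      unfold ex; rw [if_pos hqm, ← hκ]
      linear_combination 3 * hk
    calc nr m S f ≤ (M * R ^ (β - 3 / q)) ^ (1 - κ) * nr 6 S f ^ κ := hi.trans (by
          gcongr
          exact nr_nonneg _ _ _)
      _ ≤ M * R ^ ((β - 3 / q) * (1 - κ)) * nr 6 S f ^ κ := by gcongr
      _ = 1 * (M * R ^ ex q β m * (R ^ (1 / 2 : ℝ) * nr 6 S f) ^ κ) := by
          rw [hex, Real.rpow_add hR, Real.mul_rpow (by positivity) n6, ← Real.rpow_mul hR.le]
          ring
      _ ≤ V2 * (M * R ^ ex q β m * (R ^ (1 / 2 : ℝ) * nr 6 S f) ^ κ) := by gcongr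
      _ = _ := by ring
  · have e1 : kap q m = 0 := if_neg hqm
    have e2 : ex q β m = β - 3 / q := if_neg hqm
    rw [e1, e2, Real.rpow_zero, mul_one]
    calc nr m S f ≤ V2 * nr q S f := nr_exp hS hmS hf hm1 (not_lt.1 hqm)
      _ ≤ V2 * (M * R ^ (β - 3 / q)) := by gcongr
      _ = _ := by ring

lemma one_sub_kap_two {q : ℝ} (hq : 1 ≤ q) (h : q < 2) : 1 - kap q 2 = 2 * q / (6 - q) := by
  unfold kap
  rw [if_pos h, sub_sub_cancel]
  have : 6 - q ≠ 0 := by linarith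
  have h1 : 1 / q - 1 / 6 = (6 - q) / (6 * q) := by field_simp
  rw [h1]; field_simp; norm_num

lemma one_sub_kap_p {p q : ℝ} (hp : 3 ≤ p) (hq : 1 ≤ q) (h : q < 2 * (p / (p - 1))) (hq6 : q < 6) :
    2 * (1 - kap q (2 * (p / (p - 1)))) = ((4 * p - 6) * q) / ((6 - q) * p) := by
  unfold kap
  rw [if_pos h, sub_sub_cancel]
  have : 6 - q ≠ 0 := by linarith
  have : p - 1 ≠ 0 := by linarith
  have : p ≠ 0 := by linarith
  have h1 : 1 / q - 1 / 6 = (6 - q) / (6 * q) := by field_simp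
  rw [h1]; field_simp; ring

lemma ex_two {q β : ℝ} (hq : 1 ≤ q) (hβ : β ≤ 3 / q - 1 / 2) : ex q β 2 ≤ -(1 / 2) := by
  unfold ex
  split_ifs with h
  · rw [one_sub_kap_two hq h]
    have : 0 < 6 - q := by linarith
    have h1 : 2 * q / (6 - q) * β ≤ 2 * q / (6 - q) * (3 / q - 1 / 2) := by gcongr
    have h2 : 2 * q / (6 - q) * (3 / q - 1 / 2) = 1 := by field_simp; ring
    linarith
  · linarith

lemma ex_p_lt {p q α β : ℝ} (hp : 3 ≤ p) (hq : 1 ≤ q) (h : q < 2 * (p / (p - 1))) (hq6 : q < 6)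
    (hA : α + ((4 * p - 6) * q) / ((6 - q) * p) * β ≤ 1) :
    2 + (α - 3 / p) + 2 * ex q β (2 * (p / (p - 1))) ≤ 0 := by
  unfold ex
  rw [if_pos h]
  rw [← one_sub_kap_p hp hq h hq6] at hA
  have : p - 1 ≠ 0 := by linarith
  have : p ≠ 0 := by linarith
  have e : 3 / (2 * (p / (p - 1))) = 3 / 2 - 3 / p / 2 := by field_simp
  rw [e]
  linarith

lemma ex_p_ge {p q α β : ℝ} (h : 2 * (p / (p - 1)) ≤ q) (hA : α + 2 * β ≤ 3 / p + 6 / q - 2) :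
    2 + (α - 3 / p) + 2 * ex q β (2 * (p / (p - 1))) ≤ 0 := by
  unfold ex
  rw [if_neg (not_lt.2 h)]
  have : 6 / q = 2 * (3 / q) := by ring
  linarith

lemma ex_two_lt {q β : ℝ} (hq : 1 ≤ q) (h : q < 2) : ex q β 2 = 2 * q / (6 - q) * β - 3 / 2 := by
  unfold ex; rw [if_pos h, one_sub_kap_two hq h]

lemma ex_two_ge {q β : ℝ} (h : 2 ≤ q) : ex q β 2 = β - 3 / q := if_neg (not_lt.2 h)

/-- Young's inequality in the form used to absorb sublinear terms. -/
lemma young_absorb {κ a y : ℝ} (h0 : 0 ≤ κ) (h1 : κ < 1) (ha : 0 ≤ a) (hy : 0 < y) :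
    a * y ^ κ ≤ 1 / 4 * y + (4 * a) ^ (1 / (1 - κ)) := by
  have hk : 0 < 1 - κ := by linarith
  have hp : 0 ≤ (4 * a) ^ (1 / (1 - κ)) := by positivity
  by_cases h : a * y ^ κ ≤ 1 / 4 * y
  · linarith
  push Not at h
  have ha0 : 0 < a := by
    rcases ha.eq_or_lt with h' | h'
    · rw [← h'] at h; linarith
    · exact h'
  have hyk : 0 < y ^ κ := by positivity
  have h2 : y ^ (1 - κ) ≤ 4 * a := by
    rw [Real.rpow_sub hy, Real.rpow_one, div_le_iff₀ hyk]; linarith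
  have h3 : y ≤ (4 * a) ^ (1 / (1 - κ)) := by
    calc y = (y ^ (1 - κ)) ^ (1 / (1 - κ)) := by
          rw [← Real.rpow_mul hy.le, mul_one_div_cancel hk.ne', Real.rpow_one]
      _ ≤ _ := by gcongr
  calc a * y ^ κ ≤ (4 * a) * ((4 * a) ^ (1 / (1 - κ))) ^ κ := by
        gcongr
        linarith
    _ = (4 * a) ^ (1 + 1 / (1 - κ) * κ) := by
        rw [← Real.rpow_mul (by positivity), Real.rpow_add (by positivity), Real.rpow_one]
    _ = (4 * a) ^ (1 / (1 - κ)) := by congr 1; field_simp; ring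
    _ ≤ _ := by linarith

/-- The exponent conditions satisfied in every one of the nine cases. -/
structure Exps (p q r α β γ : ℝ) : Prop where
  p3 : 3 ≤ p
  q1 : 1 ≤ q
  r1 : 1 ≤ r
  α_le : α ≤ 3 / p - 2 / 3
  ev : ex q β 2 ≤ -(1 / 2)
  eθ : ex r γ 2 ≤ -(1 / 2)
  ev_p : 2 + (α - 3 / p) + 2 * ex q β (2 * (p / (p - 1))) ≤ 0
  eθ_p : 2 + (α - 3 / p) + 2 * ex r γ (2 * (p / (p - 1))) ≤ 0
  cross : 2 + ex q β 2 + ex r γ 2 ≤ 0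
  cross_lt : kap q 2 = 0 → kap r 2 = 0 → 2 + ex q β 2 + ex r γ 2 < 0

lemma two_pconj {p : ℝ} (hp : 3 ≤ p) : 2 ≤ 2 * (p / (p - 1)) ∧ 2 * (p / (p - 1)) ≤ 3 := by
  have : 0 < p - 1 := by linarith
  constructor
  · have : 1 ≤ p / (p - 1) := by rw [le_div_iff₀ this]; linarith
    linarith
  · have : p / (p - 1) ≤ 3 / 2 := by rw [div_le_iff₀ this]; linarith
    linarith

/-- The exponent condition for the flux `θ v`; strict inequality is needed exactly when neither factor
is interpolated, because then no factor tends to zero. -/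
lemma cross_any {q r β γ : ℝ} (hq : 1 ≤ q) (hr : 1 ≤ r)
    (h : ((q < 2 ∧ r < 2) ∧ 2 * q / (6 - q) * β + 2 * r / (6 - r) * γ ≤ 1) ∨
      ((q < 2 ∧ 2 ≤ r) ∧ 2 * q / (6 - q) * β + γ ≤ (6 - r) / (2 * r)) ∨
      ((2 ≤ q ∧ r < 2) ∧ β + 2 * r / (6 - r) * γ ≤ (6 - q) / (2 * q)) ∨
      ((2 ≤ q ∧ 2 ≤ r) ∧ β + γ < 3 / q + 3 / r - 2)) :
    2 + ex q β 2 + ex r γ 2 ≤ 0 ∧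
      (kap q 2 = 0 → kap r 2 = 0 → 2 + ex q β 2 + ex r γ 2 < 0) := by
  have e : ∀ {x : ℝ}, 1 ≤ x → (6 - x) / (2 * x) = 3 / x - 1 / 2 := fun {x} hx => by
    have : x ≠ 0 := by linarith
    field_simp
    ring
  have kq : q < 2 → kap q 2 ≠ 0 := fun h => (kap_pos (by linarith) (by norm_num) h).ne'
  have kr : r < 2 → kap r 2 ≠ 0 := fun h => (kap_pos (by linarith) (by norm_num) h).ne'
  rcases h with ⟨⟨h1, h2⟩, h⟩ | ⟨⟨h1, h2⟩, h⟩ | ⟨⟨h1, h2⟩, h⟩ | ⟨⟨h1, h2⟩, h⟩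
  · rw [ex_two_lt hq h1, ex_two_lt hr h2]
    exact ⟨by linarith, fun a => absurd a (kq h1)⟩
  · rw [ex_two_lt hq h1, ex_two_ge h2]
    rw [e hr] at h
    exact ⟨by linarith, fun a => absurd a (kq h1)⟩
  · rw [ex_two_ge h1, ex_two_lt hr h2]
    rw [e hq] at h
    exact ⟨by linarith, fun _ a => absurd a (kr h2)⟩
  · rw [ex_two_ge h1, ex_two_ge h2]
    exact ⟨by linarith, fun _ _ => by linarith⟩

end TCM

namespace TCM

/-! ### Uniform bounds for rescaled solutions -/

/-- A solution with viscosity `1/R` satisfying the growth bounds inherited by rescaling a solution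
of the original system by the factor `R`. -/
structure Scal (p q r α β γ M R X : ℝ) (u : E3 → E3) (pr : E3 → ℝ) (v : E3 → E3) (θ : E3 → ℝ) :
    Prop where
  R1 : 1 ≤ R
  X0 : 0 ≤ X
  sol : NuSol (1 / R) u pr v θ
  hu : nr p (At 2) u ≤ X * R ^ (α - 3 / p)
  hv : nr q (At 2) v ≤ M * R ^ (β - 3 / q)
  hθ : nr r (At 2) θ ≤ M * R ^ (γ - 3 / r)

lemma At_mono {s t : ℝ} (h : s ≤ t) : At s ⊆ At t := fun x hx => by
  rw [mem_At] at *; exact ⟨hx.1.trans_le h, hx.2⟩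

lemma rpow_le_one_of_nonpos' {R e : ℝ} (hR : 1 ≤ R) (he : e ≤ 0) : R ^ e ≤ 1 :=
  Real.rpow_le_one_of_one_le_of_nonpos hR he

lemma term_u {R a X e : ℝ} (hR : 1 ≤ R) (ha : 0 ≤ a) (hX : 0 ≤ X) (he : e ≤ -(2 / 3))
    (h : a ≤ X * R ^ e) : R * a ^ 2 ≤ X ^ 2 ∧ R ^ 2 * a ^ 3 ≤ X ^ 3 := by
  have hR0 : 0 < R := by linarith
  have hp : 0 < R ^ e := by positivity
  constructor
  · calc R * a ^ 2 ≤ R * (X * R ^ e) ^ 2 := by gcongr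
      _ = X ^ 2 * (R ^ (1 : ℝ) * R ^ (e * 2)) := by
          rw [Real.rpow_one, Real.rpow_mul hR0.le, Real.rpow_two]; ring
      _ = X ^ 2 * R ^ (1 + e * 2) := by rw [Real.rpow_add hR0]
      _ ≤ X ^ 2 * 1 := by gcongr; exact rpow_le_one_of_nonpos' hR (by linarith)
      _ = _ := mul_one _
  · calc R ^ 2 * a ^ 3 ≤ R ^ 2 * (X * R ^ e) ^ 3 := by gcongr
      _ = X ^ 3 * (R ^ (2 : ℝ) * R ^ (e * 3)) := by
          rw [Real.rpow_two, Real.rpow_mul hR0.le, show (3 : ℝ) = ((3 : ℕ) : ℝ) by norm_num,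
            Real.rpow_natCast]; ring
      _ = X ^ 3 * R ^ (2 + e * 3) := by rw [Real.rpow_add hR0]
      _ ≤ X ^ 3 * 1 := by gcongr; exact rpow_le_one_of_nonpos' hR (by linarith)
      _ = _ := mul_one _

lemma term_uv {R a b X D y e f : ℝ} (hR : 1 ≤ R) (ha : 0 ≤ a) (hb : 0 ≤ b) (hX : 0 ≤ X)
    (he : 2 + e + 2 * f ≤ 0) (h : a ≤ X * R ^ e) (h' : b ≤ D * R ^ f * y) :
    R ^ 2 * (a * b ^ 2) ≤ D ^ 2 * (X * y ^ 2) := by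
  have hR0 : 0 < R := by linarith
  calc R ^ 2 * (a * b ^ 2) ≤ R ^ 2 * (X * R ^ e * (D * R ^ f * y) ^ 2) := by gcongr
    _ = D ^ 2 * (X * y ^ 2) * (R ^ (2 : ℝ) * R ^ e * R ^ (f * 2)) := by
        rw [Real.rpow_two, Real.rpow_mul hR0.le, Real.rpow_two]; ring
    _ = D ^ 2 * (X * y ^ 2) * R ^ (2 + e + f * 2) := by rw [← Real.rpow_add hR0, ← Real.rpow_add hR0]
    _ ≤ D ^ 2 * (X * y ^ 2) * 1 := by gcongr; exact rpow_le_one_of_nonpos' hR (by linarith)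
    _ = _ := mul_one _

lemma term_vt {R a b D y z e f : ℝ} (hR : 1 ≤ R) (hb : 0 ≤ b) (h0 : 0 ≤ D * R ^ e * y)
    (h : a ≤ D * R ^ e * y) (h' : b ≤ D * R ^ f * z) :
    R ^ 2 * (a * b) ≤ D ^ 2 * (R ^ (2 + e + f) * (y * z)) := by
  have hR0 : 0 < R := by linarith
  calc R ^ 2 * (a * b) ≤ R ^ 2 * (D * R ^ e * y * (D * R ^ f * z)) := by gcongr
    _ = D ^ 2 * (R ^ (2 : ℝ) * R ^ e * R ^ f * (y * z)) := by rw [Real.rpow_two]; ring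
    _ = _ := by rw [← Real.rpow_add hR0, ← Real.rpow_add hR0]

lemma term_v {R a D y e : ℝ} (hR : 1 ≤ R) (ha : 0 ≤ a) (he : e ≤ -(1 / 2))
    (h : a ≤ D * R ^ e * y) : R * a ^ 2 ≤ D ^ 2 * y ^ 2 := by
  have hR0 : 0 < R := by linarith
  calc R * a ^ 2 ≤ R * (D * R ^ e * y) ^ 2 := by gcongr
    _ = D ^ 2 * y ^ 2 * (R ^ (1 : ℝ) * R ^ (e * 2)) := by
        rw [Real.rpow_one, Real.rpow_mul hR0.le, Real.rpow_two]; ring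
    _ = D ^ 2 * y ^ 2 * R ^ (1 + e * 2) := by rw [Real.rpow_add hR0]
    _ ≤ D ^ 2 * y ^ 2 * 1 := by gcongr; exact rpow_le_one_of_nonpos' hR (by linarith)
    _ = _ := mul_one _

/-- The scaled `L^6` norm. -/
def sn {F : Type} [NormedAddCommGroup F] (R : ℝ) (S : Set E3) (f : E3 → F) : ℝ :=
  R ^ (1 / 2 : ℝ) * nr 6 S f

section
variable {p q r α β γ M R X : ℝ} {u v : E3 → E3} {pr θ : E3 → ℝ}

lemma Scal.nrv (E : Exps p q r α β γ) (hM : 1 ≤ M) (h : Scal p q r α β γ M R X u pr v θ) {t m : ℝ}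
    (ht : t ≤ 2) (hm1 : 1 ≤ m) (hm : m < 6) :
    nr m (At t) v ≤ V2 * M * R ^ ex q β m * (sn R (At t) v) ^ kap q m :=
  nr_bound (At_sub ht) (At_meas t) h.sol.cv E.q1 hm1 hm hM (by linarith [h.R1])
    ((nr_mono_set (At_sub le_rfl) (At_meas 2) h.sol.cv (by linarith [E.q1]) (At_mono ht)).trans h.hv)

lemma Scal.nrθ (E : Exps p q r α β γ) (hM : 1 ≤ M) (h : Scal p q r α β γ M R X u pr v θ) {t m : ℝ}
    (ht : t ≤ 2) (hm1 : 1 ≤ m) (hm : m < 6) :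
    nr m (At t) θ ≤ V2 * M * R ^ ex r γ m * (sn R (At t) θ) ^ kap r m :=
  nr_bound (At_sub ht) (At_meas t) h.sol.sθ.cont E.r1 hm1 hm hM (by linarith [h.R1])
    ((nr_mono_set (At_sub le_rfl) (At_meas 2) h.sol.sθ.cont (by linarith [E.r1])
      (At_mono ht)).trans h.hθ)
end

lemma sn_nonneg {F : Type} [NormedAddCommGroup F] {R : ℝ} (hR : 0 ≤ R) (S : Set E3) (f : E3 → F) :
    0 ≤ sn R S f := mul_nonneg (by positivity) (nr_nonneg _ _ _)

/-- The energy inequality for rescaled solutions, with every norm of `v` and `θ` except the `L^2`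
ones of the viscous term interpolated between the growth bounds and the scaled `L^6` norm. -/
lemma energy_step {p q r α β γ M : ℝ} (E : Exps p q r α β γ) (hM : 1 ≤ M) :
    ∃ K > 0, ∀ (R X : ℝ) (u v : E3 → E3) (pr θ : E3 → ℝ), Scal p q r α β γ M R X u pr v θ →
      ∀ s t : ℝ, 1.6 ≤ s → s < t → t ≤ 1.9 →
      R * ∫ x in ball 0 s, dens (cmp u v θ) x ≤ K * (1 / (t - s)) ^ 6 *
        (X ^ 2 + X ^ 3 + R * nr 2 (At t) v ^ 2 + R * nr 2 (At t) θ ^ 2 +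
          X * (sn R (At t) v ^ kap q (2 * (p / (p - 1)))) ^ 2 +
          X * (sn R (At t) θ ^ kap r (2 * (p / (p - 1)))) ^ 2 +
          R ^ (2 + ex q β 2 + ex r γ 2) * (sn R (At t) v ^ kap q 2 * sn R (At t) θ ^ kap r 2)) := by
  obtain ⟨K, hK, H⟩ := energy_ineq E.p3
  have hV := one_le_V2
  have hD : 1 ≤ (V2 * M) ^ 2 := one_le_pow₀ (one_le_mul_of_one_le_of_one_le hV hM)
  refine ⟨K * (V2 * M) ^ 2, by positivity, fun R X u v pr θ h s t hs hst ht => ?_⟩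
  have hR0 : 0 < R := by linarith [h.R1]
  obtain ⟨m1, m2⟩ := two_pconj E.p3
  have hh := H (1 / R) u v pr θ (by positivity) h.sol s t hs hst ht
  have ht2 : t ≤ 2 := by linarith
  have b1 := h.nrv E hM ht2 (m := 2 * (p / (p - 1))) (by linarith) (by linarith)
  have b2 := h.nrv E hM ht2 (m := 2) (by norm_num) (by norm_num)
  have c1 := h.nrθ E hM ht2 (m := 2 * (p / (p - 1))) (by linarith) (by linarith)
  have c2 := h.nrθ E hM ht2 (m := 2) (by norm_num) (by norm_num)
  have a1 : nr p (At t) u ≤ X * R ^ (α - 3 / p) :=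
    (nr_mono_set (At_sub le_rfl) (At_meas 2) h.sol.cu (by linarith [E.p3]) (At_mono ht2)).trans h.hu
  have sv := sn_nonneg hR0.le (At t) v
  have sθ := sn_nonneg hR0.le (At t) θ
  obtain ⟨t1, t2⟩ := term_u h.R1 (nr_nonneg p (At t) u) h.X0 (by linarith [E.α_le]) a1
  have t3 := term_uv h.R1 (nr_nonneg p (At t) u) (nr_nonneg _ _ _) h.X0 E.ev_p a1 b1
  have t4 := term_uv h.R1 (nr_nonneg p (At t) u) (nr_nonneg _ _ _) h.X0 E.eθ_p a1 c1
  have t5 := term_vt h.R1 (nr_nonneg 2 (At t) θ) (by positivity) b2 c2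
  have hX := h.X0
  have hR1 := h.R1
  set S1 := sn R (At t) v ^ kap q (2 * (p / (p - 1)))
  set S2 := sn R (At t) θ ^ kap r (2 * (p / (p - 1)))
  have n3 : 0 ≤ R ^ (2 + ex q β 2 + ex r γ 2) * (sn R (At t) v ^ kap q 2 * sn R (At t) θ ^ kap r 2) := by
    positivity
  set S3 := R ^ (2 + ex q β 2 + ex r γ 2) * (sn R (At t) v ^ kap q 2 * sn R (At t) θ ^ kap r 2)
  have L : 0 < K * (1 / (t - s)) ^ 6 := by
    have : 0 < t - s := by linarith
    positivity
  set a := nr p (At t) u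
  set b := nr 2 (At t) v
  set c := nr 2 (At t) θ
  set b' := nr (2 * (p / (p - 1))) (At t) v
  set c' := nr (2 * (p / (p - 1))) (At t) θ
  set I := ∫ x in ball 0 s, dens (cmp u v θ) x
  set L' := K * (1 / (t - s)) ^ 6
  set D := (V2 * M) ^ 2
  clear_value S1 S2 S3 a b c b' c' I D
  have e1 : R * I = R ^ 2 * (1 / R * I) := by field_simp
  have key : R ^ 2 * (1 / R * (a ^ 2 + b ^ 2 + c ^ 2) + a * (a ^ 2 + b' ^ 2 + c' ^ 2) + b * c) ≤
      D * (X ^ 2 + X ^ 3 + R * b ^ 2 + R * c ^ 2 + X * S1 ^ 2 + X * S2 ^ 2 + S3) := by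
    have e2 : R ^ 2 * (1 / R * (a ^ 2 + b ^ 2 + c ^ 2) + a * (a ^ 2 + b' ^ 2 + c' ^ 2) + b * c) =
      R * a ^ 2 + R * b ^ 2 + R * c ^ 2 + R ^ 2 * a ^ 3 + R ^ 2 * (a * b' ^ 2) +
        R ^ 2 * (a * c' ^ 2) + R ^ 2 * (b * c) := by field_simp; ring
    have d1 : X ^ 2 ≤ D * X ^ 2 := le_mul_of_one_le_left (by positivity) hD
    have d2 : X ^ 3 ≤ D * X ^ 3 := le_mul_of_one_le_left (by positivity) hD
    have d3 : R * b ^ 2 ≤ D * (R * b ^ 2) := le_mul_of_one_le_left (by positivity) hD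
    have d4 : R * c ^ 2 ≤ D * (R * c ^ 2) := le_mul_of_one_le_left (by positivity) hD
    rw [e2]
    linarith only [t1, t2, t3, t4, t5, d1, d2, d3, d4]
  calc R * I ≤ R ^ 2 * (L' * (1 / R * (a ^ 2 + b ^ 2 + c ^ 2) + a * (a ^ 2 + b' ^ 2 + c' ^ 2) + b * c)) := by
        rw [e1]; gcongr
    _ = L' * (R ^ 2 * (1 / R * (a ^ 2 + b ^ 2 + c ^ 2) + a * (a ^ 2 + b' ^ 2 + c' ^ 2) + b * c)) := by ring
    _ ≤ L' * (D * (X ^ 2 + X ^ 3 + R * b ^ 2 + R * c ^ 2 + X * S1 ^ 2 + X * S2 ^ 2 + S3)) := by gcongr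
    _ = _ := by simp only [L']; ring

end TCM

namespace TCM

/-- The standard iteration lemma: a function that is controlled by half of its value at any later
point, up to a power of the inverse distance, is bounded. -/
lemma iter (n : ℕ) (hn : 1 ≤ n) {B : ℝ} (hB : 0 ≤ B) : ∃ C, ∀ H : ℝ → ℝ,
    (∀ s, 1.6 ≤ s → s ≤ 1.9 → 0 ≤ H s) → (∃ b, ∀ s, 1.6 ≤ s → s ≤ 1.9 → H s ≤ b) →
    (∀ s t, 1.6 ≤ s → s < t → t ≤ 1.9 → H s ≤ 1 / 2 * H t + B * (1 / (t - s)) ^ n) → H 1.6 ≤ C := by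
  have hn0 : (1 : ℝ) ≤ n := by exact_mod_cast hn
  set N : ℝ := 3 * n with hN
  refine ⟨4 * (B * N ^ n) / 0.3 ^ n, fun H h0 hb h => ?_⟩
  obtain ⟨b, hb⟩ := hb
  have bern : (2 : ℝ) / 3 ≤ (1 - 1 / N) ^ n := by
    have hNle : 1 / N ≤ 1 := by rw [div_le_one (by positivity)]; linarith
    have := one_add_mul_le_pow (a := -(1 / N)) (by linarith) n
    have e : (n : ℝ) * -(1 / N) = -(1 / 3) := by rw [hN]; field_simp
    rw [e] at this
    calc (2 : ℝ) / 3 = 1 + -(1 / 3) := by norm_num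
      _ ≤ _ := this
  -- the weighted function `(1.9 - s)^n H(s)` contracts by the factor `3/4`
  have key : ∀ k : ℕ, ∀ s, 1.6 ≤ s → s < 1.9 →
      (1.9 - s) ^ n * H s ≤ (3 / 4) ^ k * b + 4 * (B * N ^ n) := by
    intro k
    induction k with
    | zero =>
      intro s h1 h2
      have e1 : (1.9 - s) ^ n ≤ 1 := pow_le_one₀ (by linarith) (by linarith)
      have e2 : (1.9 - s) ^ n * H s ≤ 1 * H s := mul_le_mul_of_nonneg_right e1 (h0 s h1 h2.le)
      have e3 := hb s h1 h2.le
      have e4 : 0 ≤ B * N ^ n := by positivity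
      rw [pow_zero]; linarith
    | succ k ih =>
      intro s h1 h2
      have hd : 0 < 1.9 - s := by linarith
      set t := s + (1.9 - s) / N with ht
      have hN3 : 3 ≤ N := by linarith
      have hdN : 0 < (1.9 - s) / N := by positivity
      have hdN' : (1.9 - s) / N < 1.9 - s := by
        rw [div_lt_iff₀ (by linarith)]; nlinarith
      have i1 := ih t (by linarith) (by linarith)
      have i2 := h s t h1 (by linarith) (by linarith)
      have e1 : 1.9 - t = (1.9 - s) * (1 - 1 / N) := by rw [ht]; field_simp; ring
      have e2 : t - s = (1.9 - s) / N := by rw [ht]; ring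
      rw [e1, mul_pow] at i1
      rw [e2, one_div_div, div_pow] at i2
      have Ht : 0 ≤ H t := h0 t (by linarith) (by linarith)
      set w := (1.9 - s) ^ n with hw
      have w0 : 0 < w := by positivity
      have i3 : w * H s ≤ 1 / 2 * (w * H t) + B * N ^ n := by
        calc w * H s ≤ w * (1 / 2 * H t + B * (N ^ n / w)) := by gcongr
          _ = _ := by field_simp
      have i4 : 2 / 3 * (w * H t) ≤ w * (1 - 1 / N) ^ n * H t := by
        calc 2 / 3 * (w * H t) ≤ (1 - 1 / N) ^ n * (w * H t) := by gcongr
          _ = _ := by ring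
      rw [pow_succ]
      linarith only [i1, i3, i4]
  have lim : Tendsto (fun k : ℕ => ((3 : ℝ) / 4) ^ k * b + 4 * (B * N ^ n)) atTop
      (nhds (0 * b + 4 * (B * N ^ n))) :=
    ((tendsto_pow_atTop_nhds_zero_of_lt_one (by norm_num) (by norm_num)).mul_const b).add_const _
  have := ge_of_tendsto' lim fun k => key k 1.6 le_rfl (by norm_num)
  rw [le_div_iff₀ (by positivity)]
  norm_num at this ⊢
  linarith

lemma pow_kap_le {y k κ N : ℝ} (hy : 0 ≤ y) (h : y ^ 2 ≤ N) (hN : 1 ≤ N) (hk : 0 ≤ k) (hkκ : k ≤ κ) :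
    (y ^ k) ^ 2 ≤ N ^ κ := by
  calc (y ^ k) ^ 2 = (y ^ 2) ^ k := by
        rw [← Real.rpow_natCast, ← Real.rpow_natCast, ← Real.rpow_mul hy, ← Real.rpow_mul hy, mul_comm]
    _ ≤ N ^ k := by gcongr
    _ ≤ N ^ κ := Real.rpow_le_rpow_of_exponent_le hN hkκ

/-- The largest interpolation weight that occurs. -/
def kmax (p q r : ℝ) : ℝ :=
  max (max (kap q 2) (kap r 2)) (max (kap q (2 * (p / (p - 1)))) (kap r (2 * (p / (p - 1)))))

lemma kmax_mem {p q r α β γ : ℝ} (E : Exps p q r α β γ) : 0 ≤ kmax p q r ∧ kmax p q r < 1 := by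
  obtain ⟨-, m2⟩ := two_pconj E.p3
  have q0 : 0 < q := by linarith [E.q1]
  have r0 : 0 < r := by linarith [E.r1]
  have a := kap_mem (q := q) (m := 2) q0 (by norm_num)
  have b := kap_mem (q := r) (m := 2) r0 (by norm_num)
  have c := kap_mem (q := q) (m := 2 * (p / (p - 1))) q0 (by linarith)
  have d := kap_mem (q := r) (m := 2 * (p / (p - 1))) r0 (by linarith)
  exact ⟨a.1.trans ((le_max_left _ _).trans (le_max_left _ _)),
    max_lt (max_lt a.2 b.2) (max_lt c.2 d.2)⟩

lemma sn_mono {F : Type} [NormedAddCommGroup F] {R : ℝ} (hR : 0 ≤ R) {S T : Set E3} {f : E3 → F}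
    (hT : T ⊆ ball 0 2) (hm : MeasurableSet T) (hf : Continuous f) (h : S ⊆ T) :
    sn R S f ≤ sn R T f :=
  mul_le_mul_of_nonneg_left (nr_mono_set hT hm hf (by norm_num) h) (by positivity)

lemma sn_sq {F : Type} [NormedAddCommGroup F] {R : ℝ} (hR : 0 ≤ R) (S : Set E3) (f : E3 → F) :
    sn R S f ^ 2 = R * nr 6 S f ^ 2 := by
  unfold sn
  rw [mul_pow, ← Real.sqrt_eq_rpow, Real.sq_sqrt hR]

lemma At_sub_ball (t : ℝ) : At t ⊆ ball 0 t := Set.sdiff_subset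

/-- The two inequalities driving the iteration: sublinear control of the energy by the scaled `L^6`
norms, and control of the latter by the energy. -/
lemma two_steps {p q r α β γ M : ℝ} (E : Exps p q r α β γ) (hM : 1 ≤ M) :
    ∃ K > 0, ∃ C > 0, ∀ (R X : ℝ) (u v : E3 → E3) (pr θ : E3 → ℝ),
      Scal p q r α β γ M R X u pr v θ → X ≤ 1 → ∀ s t : ℝ, 1.6 ≤ s → s < t → t ≤ 1.9 →
      R * ∫ x in ball 0 s, dens (cmp u v θ) x ≤ K * (1 / (t - s)) ^ 6 *
        (1 + sn R (ball 0 t) v ^ 2 + sn R (ball 0 t) θ ^ 2) ^ kmax p q r ∧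
      sn R (ball 0 s) v ^ 2 + sn R (ball 0 s) θ ^ 2 ≤
        C * (R * ∫ x in ball 0 t, dens (cmp u v θ) x) + K * (1 / (t - s)) ^ 6 *
        (1 + sn R (ball 0 t) v ^ 2 + sn R (ball 0 t) θ ^ 2) ^ kmax p q r := by
  obtain ⟨K, hK, H⟩ := energy_step E hM
  obtain ⟨C, hC, S⟩ := sobolev
  have hV := one_le_V2
  obtain ⟨m1, m2⟩ := two_pconj E.p3
  have q0 : 0 < q := by linarith [E.q1]
  have r0 : 0 < r := by linarith [E.r1]
  set D := (V2 * M) ^ 2 with hD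
  refine ⟨K * (2 * D + 5) + 2 * C * D, by positivity, C, hC,
    fun R X u v pr θ h hX1 s t hs hst ht => ?_⟩
  have hR0 : 0 < R := by linarith [h.R1]
  have ht2 : t ≤ 2 := by linarith
  have hb2 : ball (0 : E3) t ⊆ ball 0 2 := ball_subset_ball ht2
  have av := sn_nonneg hR0.le (At t) v
  have aθ := sn_nonneg hR0.le (At t) θ
  have mv := sn_mono hR0.le hb2 measurableSet_ball h.sol.cv (At_sub_ball t)
  have mθ := sn_mono hR0.le hb2 measurableSet_ball h.sol.sθ.cont (At_sub_ball t)
  set N := 1 + sn R (ball 0 t) v ^ 2 + sn R (ball 0 t) θ ^ 2 with hN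
  have sv : sn R (At t) v ^ 2 ≤ sn R (ball 0 t) v ^ 2 := by gcongr
  have sθ : sn R (At t) θ ^ 2 ≤ sn R (ball 0 t) θ ^ 2 := by gcongr
  have lv : sn R (At t) v ^ 2 ≤ N := by rw [hN]; linarith [sq_nonneg (sn R (ball 0 t) θ)]
  have lθ : sn R (At t) θ ^ 2 ≤ N := by rw [hN]; linarith [sq_nonneg (sn R (ball 0 t) v)]
  have N1 : 1 ≤ N := by
    rw [hN]; linarith [sq_nonneg (sn R (ball 0 t) v), sq_nonneg (sn R (ball 0 t) θ)]
  have k1 := pow_kap_le av lv N1 (kap_mem (m := 2) q0 (by norm_num)).1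
    ((le_max_left _ _).trans (le_max_left _ _) : _ ≤ kmax p q r)
  have k2 := pow_kap_le aθ lθ N1 (kap_mem (m := 2) r0 (by norm_num)).1
    ((le_max_right _ _).trans (le_max_left _ _) : _ ≤ kmax p q r)
  have k3 := pow_kap_le av lv N1 (kap_mem (m := 2 * (p / (p - 1))) q0 (by linarith)).1
    ((le_max_left _ _).trans (le_max_right _ _) : _ ≤ kmax p q r)
  have k4 := pow_kap_le aθ lθ N1 (kap_mem (m := 2 * (p / (p - 1))) r0 (by linarith)).1
    ((le_max_right _ _).trans (le_max_right _ _) : _ ≤ kmax p q r)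
  have b2 := h.nrv E hM ht2 (m := 2) (by norm_num) (by norm_num)
  have c2 := h.nrθ E hM ht2 (m := 2) (by norm_num) (by norm_num)
  have v2 := term_v h.R1 (nr_nonneg _ _ _) E.ev b2
  have w2 := term_v h.R1 (nr_nonneg _ _ _) E.eθ c2
  have Nk : 1 ≤ N ^ kmax p q r := Real.one_le_rpow N1 (kmax_mem E).1
  have hE := H R X u v pr θ h s t hs hst ht
  have hS := S (1 / R) u v pr θ h.sol s t hs hst ht
  have cr := rpow_le_one_of_nonpos' h.R1 E.cross
  rw [sn_sq hR0.le, sn_sq hR0.le]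
  have hX0 := h.X0
  have y1 : 0 ≤ sn R (At t) v ^ kap q 2 := by positivity
  have y2 : 0 ≤ sn R (At t) θ ^ kap r 2 := by positivity
  set Y1 := sn R (At t) v ^ kap q 2
  set Y2 := sn R (At t) θ ^ kap r 2
  set Y3 := (sn R (At t) v ^ kap q (2 * (p / (p - 1)))) ^ 2
  set Y4 := (sn R (At t) θ ^ kap r (2 * (p / (p - 1)))) ^ 2
  have y3 : 0 ≤ Y3 := sq_nonneg _
  have y4 : 0 ≤ Y4 := sq_nonneg _
  set P := N ^ kmax p q r
  rw [← hD] at v2 w2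
  have hDk1 : D * Y1 ^ 2 ≤ D * P := by gcongr
  have hDk2 : D * Y2 ^ 2 ≤ D * P := by gcongr
  have l1 : 1 ≤ 1 / (t - s) := by
    rw [le_div_iff₀ (by linarith)]; linarith
  set l := 1 / (t - s)
  have l26 : l ^ 2 ≤ l ^ 6 := pow_le_pow_right₀ l1 (by norm_num)
  set ρ := R ^ (2 + ex q β 2 + ex r γ 2)
  have x2 : X ^ 2 ≤ 1 := pow_le_one₀ hX0 hX1
  have x3 : X ^ 3 ≤ 1 := pow_le_one₀ hX0 hX1
  have z3 : X * Y3 ≤ P := (mul_le_of_le_one_left y3 hX1).trans k3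
  have z4 : X * Y4 ≤ P := (mul_le_of_le_one_left y4 hX1).trans k4
  have z5 : ρ * (Y1 * Y2) ≤ P := by
    refine (mul_le_of_le_one_left (mul_nonneg y1 y2) cr).trans ?_
    linarith only [k1, k2, sq_nonneg (Y1 - Y2)]
  set A := nr 2 (At t) v ^ 2
  set B := nr 2 (At t) θ ^ 2
  set I := ∫ x in ball 0 s, dens (cmp u v θ) x
  set J := ∫ x in ball 0 t, dens (cmp u v θ) x
  have A0 : 0 ≤ A := sq_nonneg _
  have B0 : 0 ≤ B := sq_nonneg _
  clear_value Y1 Y2 Y3 Y4 P l ρ A B I J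
  have hl6 : 0 < l ^ 6 := by positivity
  constructor
  · refine hE.trans ?_
    calc _ ≤ K * l ^ 6 * ((2 * D + 5) * P) := by
          gcongr
          linarith only [x2, x3, v2, w2, hDk1, hDk2, z3, z4, z5, Nk]
      _ ≤ K * l ^ 6 * ((2 * D + 5) * P) + 2 * C * D * l ^ 6 * P := by
          have : 0 ≤ 2 * C * D * l ^ 6 * P := by positivity
          linarith
      _ = _ := by ring
  · calc R * nr 6 (ball 0 s) v ^ 2 + R * nr 6 (ball 0 s) θ ^ 2
        = R * (nr 6 (ball 0 s) v ^ 2 + nr 6 (ball 0 s) θ ^ 2) := by ring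
      _ ≤ R * (C * (J + l ^ 2 * (A + B))) := by gcongr
      _ = C * (R * J) + C * l ^ 2 * (R * A + R * B) := by ring
      _ ≤ C * (R * J) + C * l ^ 6 * (2 * D * P) := by
          gcongr
          linarith only [v2, w2, hDk1, hDk2]
      _ ≤ C * (R * J) + (C * l ^ 6 * (2 * D * P) + K * (2 * D + 5) * l ^ 6 * P) := by
          have : 0 ≤ K * (2 * D + 5) * l ^ 6 * P := by positivity
          linarith
      _ = _ := by ring

/-- A uniform bound for the energy and the scaled `L^6` norms of rescaled solutions. -/
lemma unif_bound {p q r α β γ M : ℝ} (E : Exps p q r α β γ) (hM : 1 ≤ M) :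
    ∃ C, ∀ (R X : ℝ) (u v : E3 → E3) (pr θ : E3 → ℝ),
      Scal p q r α β γ M R X u pr v θ → X ≤ 1 →
      R * (∫ x in ball 0 1.6, dens (cmp u v θ) x) ≤ C ∧
      sn R (ball 0 1.6) v ^ 2 + sn R (ball 0 1.6) θ ^ 2 ≤ C := by
  obtain ⟨K, hK, C, hC, H⟩ := two_steps E hM
  obtain ⟨κ0, κ1⟩ := kmax_mem E
  set κ := kmax p q r
  set μ := 1 / (4 * C) with hμ
  have hμ0 : 0 < μ := by positivity
  set A := (K + μ * K) * (1 + 4 * C) with hA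
  have hA0 : 0 < A := by positivity
  set m := 1 / (1 - κ) with hm
  have hm0 : 0 < m := by have : 0 < 1 - κ := by linarith
                         positivity
  obtain ⟨n, hn⟩ := exists_nat_ge (6 * m)
  have hn1 : 1 ≤ n := by
    rcases Nat.eq_zero_or_pos n with h | h
    · subst h; norm_num at hn; linarith
    · exact h
  obtain ⟨C0, hC0⟩ := iter n hn1 (B := 1 + (4 * A) ^ m) (by positivity)
  refine ⟨max C0 (4 * C * C0), fun R X u v pr θ h hX => ?_⟩
  have hR0 : 0 < R := by linarith [h.R1]
  set I : ℝ → ℝ := fun s => R * ∫ x in ball 0 s, dens (cmp u v θ) x with hI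
  set G : ℝ → ℝ := fun s => sn R (ball 0 s) v ^ 2 + sn R (ball 0 s) θ ^ 2 with hG
  have dn : ∀ x, 0 ≤ dens (cmp u v θ) x := fun x => dens_nonneg _ x
  have I0 : ∀ s, 0 ≤ I s := fun s => mul_nonneg hR0.le (integral_nonneg fun x => dn x)
  have G0 : ∀ s, 0 ≤ G s := fun s => by positivity
  have hfin := hC0 (fun s => I s + μ * G s) (fun s _ _ => by have := I0 s; have := G0 s; positivity)
    ⟨I 1.9 + μ * G 1.9, fun s _ hs => by
      have hb : ball (0 : E3) s ⊆ ball 0 1.9 := ball_subset_ball hs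
      have hb2 : ball (0 : E3) 1.9 ⊆ ball 0 2 := ball_subset_ball (by norm_num)
      have i1 : I s ≤ I 1.9 := by
        simp only [hI]
        gcongr
        · exact Filter.Eventually.of_forall dn
        · exact int_S hb2 measurableSet_ball (Smooth.cont (dens_smooth h.sol.cmp_smooth))
      have i2 := sn_mono hR0.le hb2 measurableSet_ball h.sol.cv hb
      have i3 := sn_mono hR0.le hb2 measurableSet_ball h.sol.sθ.cont hb
      have i4 := sn_nonneg hR0.le (ball 0 s) v
      have i5 := sn_nonneg hR0.le (ball 0 s) θ
      have i6 : G s ≤ G 1.9 := by simp only [hG]; gcongr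
      gcongr⟩ (fun s t hs hst ht => by
      obtain ⟨j1, j2⟩ := H R X u v pr θ h hX s t hs hst ht
      have l1 : 1 ≤ 1 / (t - s) := by rw [le_div_iff₀ (by linarith)]; linarith
      set l := 1 / (t - s)
      change I s ≤ _ at j1
      change G s ≤ C * I t + _ at j2
      have eN : 1 + sn R (ball 0 t) v ^ 2 + sn R (ball 0 t) θ ^ 2 = 1 + G t := by simp only [hG]; ring
      rw [eN] at j1 j2
      have g0 := G0 t
      have i0 := I0 t
      have Nle : (1 + G t) ^ κ ≤ (1 + 4 * C) * (1 + (I t + μ * G t)) ^ κ := by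
        have e1 : 1 + G t ≤ (1 + 4 * C) * (1 + (I t + μ * G t)) := by
          have : 4 * C * (μ * G t) = G t := by rw [hμ]; field_simp
          have p1 : 0 ≤ 4 * C * I t := by positivity
          have p2 : 0 ≤ μ * G t := by positivity
          linarith
        calc (1 + G t) ^ κ ≤ ((1 + 4 * C) * (1 + (I t + μ * G t))) ^ κ := by gcongr
          _ = (1 + 4 * C) ^ κ * (1 + (I t + μ * G t)) ^ κ :=
              Real.mul_rpow (by positivity) (by positivity)
          _ ≤ _ := by
              gcongr
              exact Real.rpow_le_self_of_one_le (by linarith) κ1.le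
      have y0 : 0 < 1 + (I t + μ * G t) := by positivity
      have yo := young_absorb κ0 κ1 (a := A * l ^ 6) (by positivity) y0
      have e3 : (4 * (A * l ^ 6)) ^ (1 / (1 - κ)) ≤ (4 * A) ^ m * l ^ n := by
        rw [← hm, ← mul_assoc, Real.mul_rpow (by positivity) (by positivity)]
        gcongr
        rw [← Real.rpow_natCast l 6, ← Real.rpow_natCast l n, ← Real.rpow_mul (by positivity)]
        exact Real.rpow_le_rpow_of_exponent_le l1 (by exact_mod_cast hn)
      have ln : 1 ≤ l ^ n := one_le_pow₀ l1
      have e4 : I s + μ * G s ≤ 1 / 4 * I t + A * l ^ 6 * (1 + (I t + μ * G t)) ^ κ := by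
        calc I s + μ * G s ≤ K * l ^ 6 * (1 + G t) ^ κ +
              μ * (C * I t + K * l ^ 6 * (1 + G t) ^ κ) := by gcongr
          _ = 1 / 4 * I t + (K + μ * K) * l ^ 6 * (1 + G t) ^ κ := by
              have : μ * C = 1 / 4 := by rw [hμ]; field_simp
              linear_combination I t * this
          _ ≤ 1 / 4 * I t + (K + μ * K) * l ^ 6 * ((1 + 4 * C) * (1 + (I t + μ * G t)) ^ κ) := by gcongr
          _ = _ := by rw [hA]; ring
      have p2 : 0 ≤ μ * G t := by positivity
      linarith only [e4, yo, e3, ln, p2, i0])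
  have f1 := I0 1.6
  have f2 := G0 1.6
  have f3 : 0 ≤ μ * G 1.6 := by positivity
  have f4 : G 1.6 ≤ 4 * C * C0 := by
    have : G 1.6 = 4 * C * (μ * G 1.6) := by rw [hμ]; field_simp
    rw [this]; gcongr; linarith
  exact ⟨(by linarith : I 1.6 ≤ C0).trans (le_max_left _ _), f4.trans (le_max_right _ _)⟩

/-- The energy inequality between the radii `1.6` and `1.9`. -/
lemma final_step {p q r α β γ M : ℝ} (E : Exps p q r α β γ) (hM : 1 ≤ M) :
    ∃ K > 0, ∀ (R X : ℝ) (u v : E3 → E3) (pr θ : E3 → ℝ), Scal p q r α β γ M R X u pr v θ →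
      R * ∫ x in ball 0 1.6, dens (cmp u v θ) x ≤ K *
        (X ^ 2 + X ^ 3 + V2 ^ 2 * sn R (At 1.9) v ^ 2 + V2 ^ 2 * sn R (At 1.9) θ ^ 2 +
          X * (sn R (At 1.9) v ^ kap q (2 * (p / (p - 1)))) ^ 2 +
          X * (sn R (At 1.9) θ ^ kap r (2 * (p / (p - 1)))) ^ 2 +
          R ^ (2 + ex q β 2 + ex r γ 2) *
            (sn R (At 1.9) v ^ kap q 2 * sn R (At 1.9) θ ^ kap r 2)) := by
  obtain ⟨K, hK, H⟩ := energy_step E hM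
  refine ⟨K * (1 / (1.9 - 1.6)) ^ 6, by norm_num; positivity, fun R X u v pr θ h => ?_⟩
  have hR0 : 0 < R := by linarith [h.R1]
  refine (H R X u v pr θ h 1.6 1.9 le_rfl (by norm_num) le_rfl).trans ?_
  have hs : At 1.9 ⊆ ball 0 2 := At_sub (by norm_num)
  have aux : ∀ {F : Type} [NormedAddCommGroup F] {f : E3 → F}, Continuous f →
      R * nr 2 (At 1.9) f ^ 2 ≤ V2 ^ 2 * sn R (At 1.9) f ^ 2 := by
    intro F _ f hf
    have := nr_exp hs (At_meas 1.9) hf (p := 2) (q := 6) (by norm_num) (by norm_num)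
    have n0 := nr_nonneg 2 (At 1.9) f
    rw [sn_sq hR0.le]
    calc R * nr 2 (At 1.9) f ^ 2 ≤ R * (V2 * nr 6 (At 1.9) f) ^ 2 := by gcongr
      _ = _ := by ring
  have := aux h.sol.cv
  have := aux h.sol.sθ.cont
  gcongr

end TCM

namespace TCM

/-! ### Rescaling -/

open scoped Pointwise in
lemma smul_At {R t : ℝ} (hR : 0 < R) : R • At t = ball (0 : E3) (t * R) \ ball 0 R := by
  rw [At, Set.smul_set_sdiff₀ hR.ne', _root_.smul_ball hR.ne', _root_.smul_ball hR.ne']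
  simp [abs_of_pos hR, mul_comm]

open scoped Pointwise in
lemma smul_ball0 {R t : ℝ} (hR : 0 < R) : R • ball (0 : E3) t = ball (0 : E3) (t * R) := by
  rw [_root_.smul_ball hR.ne']
  simp [abs_of_pos hR, mul_comm]

open scoped Pointwise in
lemma int_scale {R : ℝ} (hR : 0 < R) (S : Set E3) (g : E3 → ℝ) :
    R ^ 3 * ∫ x in S, g (R • x) = ∫ x in R • S, g x := by
  have h := Measure.setIntegral_comp_smul_of_pos (volume : Measure E3) g S hR
  simp only [finrank_euclideanSpace, Fintype.card_fin, smul_eq_mul] at h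
  rw [h]; field_simp

section
variable {F : Type} [NormedAddCommGroup F]

lemma memLp_ball {f : E3 → F} (hf : Continuous f) {S : Set E3} (hS : MeasurableSet S) {ρ : ℝ}
    (h : S ⊆ ball 0 ρ) (p : ℝ≥0∞) : MemLp f p (volume.restrict S) := by
  obtain ⟨C, hC⟩ := (isCompact_closedBall (0 : E3) ρ).exists_bound_of_continuousOn hf.continuousOn
  have : IsFiniteMeasure (volume.restrict S) :=
    ⟨by rw [Measure.restrict_apply_univ]; exact (measure_mono h).trans_lt measure_ball_lt_top⟩
  refine MemLp.of_bound hf.aestronglyMeasurable C ?_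
  filter_upwards [ae_restrict_mem hS] with x hx
  exact hC x (ball_subset_closedBall (h hx))

lemma int_ball {g : E3 → ℝ} (hg : Continuous g) (ρ : ℝ) : IntegrableOn g (ball 0 ρ) :=
  memLp_one_iff_integrable.1 (memLp_ball hg measurableSet_ball subset_rfl 1)

lemma LpS_Ann {f : E3 → F} (hf : Continuous f) {p R : ℝ} (hp : 0 < p) (hR : 0 < R) :
    LpS f p (Ann R) = ENNReal.ofReal (R ^ (3 / p) * nr p (At 2) fun x => f (R • x)) := by
  have hA : Ann R = ball (0 : E3) (2 * R) \ ball 0 R := rfl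
  have hm : MeasurableSet (Ann R) := measurableSet_ball.diff measurableSet_ball
  unfold LpS nr
  rw [(memLp_ball hf hm (ρ := 2 * R) Set.sdiff_subset _).eLpNorm_eq_integral_rpow_norm
    (by simpa using hp) ENNReal.ofReal_ne_top, ENNReal.toReal_ofReal hp.le]
  congr 1
  rw [hA, ← smul_At hR, ← int_scale hR (At 2) (fun x => ‖f x‖ ^ p),
    Real.mul_rpow (by positivity) (integral_nonneg fun x => by positivity), ← one_div,
    ← Real.rpow_natCast R 3, ← Real.rpow_mul hR.le]
  congr 2
  push_cast; ring

open scoped Pointwise in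
lemma sn_scale {R : ℝ} (hR : 0 < R) (S : Set E3) (f : E3 → F) :
    sn R S (fun x => f (R • x)) ^ 6 = ∫ x in R • S, ‖f x‖ ^ 6 := by
  have h6 : ∀ x : ℝ, x ^ (6 : ℕ) = x ^ (6 : ℝ) := fun x => by
    rw [← Real.rpow_natCast]; norm_num
  rw [← int_scale hR S (fun x => ‖f x‖ ^ 6)]
  unfold sn
  rw [mul_pow]
  congr 1
  · rw [← Real.rpow_natCast, ← Real.rpow_mul hR.le, ← Real.rpow_natCast R 3]; norm_num
  · rw [h6, nr_pow _ _ (by norm_num)]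
    simp_rw [h6]

end

lemma pd3_scale (f : E3 → ℝ) (R : ℝ) (j : Fin 3) :
    pd3 j (fun x => f (R • x)) = fun x => R * pd3 j f (R • x) := by
  funext x
  unfold pd3
  rw [fderiv_comp_smul]
  simp

lemma Smooth.scale {f : E3 → ℝ} (hf : Smooth f) (R : ℝ) : Smooth fun x => f (R • x) :=
  hf.comp (contDiff_const_smul R)

lemma lap3_scale {f : E3 → ℝ} (hf : Smooth f) (R : ℝ) (x : E3) :
    lap3 (fun x => f (R • x)) x = R ^ 2 * lap3 f (R • x) := by
  unfold lap3
  rw [Finset.mul_sum]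
  refine Finset.sum_congr rfl fun j _ => ?_
  rw [pd3_scale, pd3_const_mul' j R (Smooth.scale (hf.pd j) R), pd3_scale]
  ring

lemma pd3_sub_const (f : E3 → ℝ) (c : ℝ) (j : Fin 3) : pd3 j (fun x => f x - c) = pd3 j f := by
  funext x
  unfold pd3
  rw [fderiv_sub_const]

lemma lap3_sub_const (f : E3 → ℝ) (c : ℝ) : lap3 (fun x => f x - c) = lap3 f := by
  funext x
  unfold lap3
  simp_rw [pd3_sub_const]

section
variable {u v : E3 → E3} {pr θ : E3 → ℝ}

lemma comp_smooth {u : E3 → E3} (h : ContDiff ℝ (⊤ : ℕ∞) u) (i : Fin 3) : Smooth fun x => u x i :=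
  (contDiff_euclidean.1 h) i

/-- If `(u, π, v, θ)` solves the system then `x ↦ (u, π, v, θ - c)(R x)` solves it with viscosity `1/R`. -/
lemma nuSol_scale (h : IsTCMSolution u pr v θ) {R : ℝ} (hR : 0 < R) (c : ℝ) :
    NuSol (1 / R) (fun x => u (R • x)) (fun x => pr (R • x)) (fun x => v (R • x))
      (fun x => θ (R • x) - c) := by
  have su := comp_smooth h.smooth_u
  have sv := comp_smooth h.smooth_v
  have sθ : Smooth θ := h.smooth_θ
  have hs : Continuous fun x : E3 => R • x := continuous_const_smul R
  have p1 : ∀ j i, pd3 j (fun y => u (R • y) i) = fun x => R * pd3 j (fun y => u y i) (R • x) :=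
    fun j i => pd3_scale (fun y => u y i) R j
  have p2 : ∀ j i, pd3 j (fun y => v (R • y) i) = fun x => R * pd3 j (fun y => v y i) (R • x) :=
    fun j i => pd3_scale (fun y => v y i) R j
  have p3 : ∀ j i, pd3 j (fun y => v (R • y) j * v (R • y) i) =
      fun x => R * pd3 j (fun y => v y j * v y i) (R • x) :=
    fun j i => pd3_scale (fun y => v y j * v y i) R j
  have l1 : ∀ i x, lap3 (fun y => u (R • y) i) x = R ^ 2 * lap3 (fun y => u y i) (R • x) :=
    fun i x => lap3_scale (su i) R x
  have l2 : ∀ i x, lap3 (fun y => v (R • y) i) x = R ^ 2 * lap3 (fun y => v y i) (R • x) :=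
    fun i x => lap3_scale (sv i) R x
  refine ⟨h.smooth_u.continuous.comp hs, h.smooth_v.continuous.comp hs, fun i => (su i).scale R,
    Smooth.scale h.smooth_pr R, fun i => (sv i).scale R,
    ContDiff.sub (Smooth.scale sθ R) contDiff_const, fun x i => ?_, fun x i => ?_, fun x => ?_,
    fun x => ?_⟩
  · have e := h.eq_u (R • x) i
    simp only [p1, p3, l1, pd3_scale, Fin.sum_univ_three] at e ⊢
    field_simp
    linear_combination R * e
  · have e := h.eq_v (R • x) i
    simp only [p1, p2, l2, pd3_scale, pd3_sub_const, Fin.sum_univ_three] at e ⊢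
    field_simp
    linear_combination R * e
  · have e := h.eq_θ (R • x)
    simp only [p2, lap3_scale sθ, lap3_sub_const, pd3_scale, pd3_sub_const,
      Fin.sum_univ_three] at e ⊢
    field_simp
    linear_combination R * e
  · have e := h.div_u (R • x)
    simp only [p1, Fin.sum_univ_three] at e ⊢
    linear_combination R * e

lemma dens_scale (u v : E3 → E3) (θ : E3 → ℝ) {R : ℝ} (hR : 0 < R) (c s : ℝ) :
    R * ∫ x in ball 0 s, dens (cmp (fun x => u (R • x)) (fun x => v (R • x))
      (fun x => θ (R • x) - c)) x = ∫ x in ball 0 (s * R), dens (cmp u v θ) x := by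
  rw [← smul_ball0 hR, ← int_scale hR]
  have : ∀ x, dens (cmp (fun x => u (R • x)) (fun x => v (R • x)) (fun x => θ (R • x) - c)) x =
      R ^ 2 * dens (cmp u v θ) (R • x) := by
    intro x
    unfold dens
    rw [Finset.mul_sum]
    refine Finset.sum_congr rfl fun m _ => ?_
    rw [Finset.mul_sum]
    refine Finset.sum_congr rfl fun k _ => ?_
    have : pd3 k (cmp (fun x => u (R • x)) (fun x => v (R • x)) (fun x => θ (R • x) - c) m) x =
        R * pd3 k (cmp u v θ m) (R • x) := by
      rcases m with i | i | i
      · exact congrFun (pd3_scale (fun y => u y i) R k) x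
      · exact congrFun (pd3_scale (fun y => v y i) R k) x
      · simp only [cmp, pd3_sub_const]
        exact congrFun (pd3_scale θ R k) x
    rw [this]; ring
  simp_rw [this, integral_const_mul]
  ring

/-- Bounds on a growth quantity translate into bounds for the rescaled function. -/
lemma nr_of_le {F : Type} [NormedAddCommGroup F] {f : E3 → F} (hf : Continuous f) {q β R : ℝ}
    (hq : 1 ≤ q) (hR : 1 ≤ R) {M : ℝ≥0∞} (hM : M < ⊤)
    (h : ENNReal.ofReal (R ^ (-β)) * LpS f q (Ann R) ≤ M) :
    nr q (At 2) (fun x => f (R • x)) ≤ M.toReal * R ^ (β - 3 / q) := by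
  have hR0 : 0 < R := by linarith
  rw [LpS_Ann hf (by linarith) hR0, ← ENNReal.ofReal_mul (by positivity)] at h
  have h2 := (ENNReal.ofReal_le_iff_le_toReal hM.ne).1 h
  have e : R ^ (β - 3 / q) * (R ^ (-β) * R ^ (3 / q)) = 1 := by
    rw [← Real.rpow_add hR0, ← Real.rpow_add hR0,
      show β - 3 / q + (-β + 3 / q) = 0 by ring, Real.rpow_zero]
  calc nr q (At 2) (fun x => f (R • x))
      = R ^ (β - 3 / q) * (R ^ (-β) * (R ^ (3 / q) * nr q (At 2) (fun x => f (R • x)))) := by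
        linear_combination -(nr q (At 2) (fun x => f (R • x))) * e
    _ ≤ R ^ (β - 3 / q) * M.toReal := by gcongr
    _ = _ := mul_comm _ _

lemma scal_of (h : IsTCMSolution u pr v θ) {p q r α β γ R : ℝ} (hp : 1 ≤ p) (hq : 1 ≤ q)
    (hr : 1 ≤ r) (hR : 1 ≤ R) {MY MZ : ℝ≥0∞} (hMY : MY < ⊤) (hMZ : MZ < ⊤)
    (hX : Xn u α p R < ⊤) (hY : Yn v β q R ≤ MY) (hZ : Zbarn θ γ r R ≤ MZ) :
    Scal p q r α β γ (1 + MY.toReal + MZ.toReal) R (Xn u α p R).toReal (fun x => u (R • x))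
      (fun x => pr (R • x)) (fun x => v (R • x)) (fun x => θ (R • x) - thetaBar θ R) := by
  have a := ENNReal.toReal_nonneg (a := MY)
  have b := ENNReal.toReal_nonneg (a := MZ)
  have hR0 : 0 < R := by linarith
  refine ⟨hR, ENNReal.toReal_nonneg, nuSol_scale h (by linarith) _, ?_, ?_, ?_⟩
  · exact nr_of_le h.smooth_u.continuous hp hR hX le_rfl
  · refine (nr_of_le h.smooth_v.continuous hq hR hMY hY).trans ?_
    gcongr; linarith
  · refine (nr_of_le (f := fun x => θ x - thetaBar θ R)
      (h.smooth_θ.continuous.sub continuous_const) hr hR hMZ hZ).trans ?_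
    gcongr; linarith

end

end TCM

namespace TCM

/-! ### Passage to the limit -/

lemma ball_int_mono {g : E3 → ℝ} (hg : Continuous g) (h0 : ∀ x, 0 ≤ g x) {a b : ℝ} (h : a ≤ b) :
    ∫ x in ball 0 a, g x ≤ ∫ x in ball 0 b, g x :=
  setIntegral_mono_set (int_ball hg b) (Eventually.of_forall h0)
    (ball_subset_ball h).eventuallyLE

/-- A bound over a sequence of balls exhausting the space holds over every ball. -/
lemma all_balls {g : E3 → ℝ} (hg : Continuous g) (h0 : ∀ x, 0 ≤ g x) {R : ℕ → ℝ}
    (hR : Tendsto R atTop atTop) {B : ℝ} (h : ∀ᶠ j in atTop, ∫ x in ball 0 (1.6 * R j), g x ≤ B)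
    (ρ : ℝ) : ∫ x in ball 0 ρ, g x ≤ B := by
  obtain ⟨j, h1, h2⟩ := (h.and (hR.eventually_ge_atTop (max ρ 0))).exists
  refine (ball_int_mono hg h0 ?_).trans h1
  have := le_max_left ρ 0
  have := le_max_right ρ 0
  linarith

/-- Tails of a convergent integral: the integrals over the receding shells tend to zero. -/
lemma shell_tendsto {g : E3 → ℝ} (hg : Continuous g) (h0 : ∀ x, 0 ≤ g x) {R : ℕ → ℝ}
    (hR : Tendsto R atTop atTop) {B : ℝ} (h : ∀ ρ, ∫ x in ball 0 ρ, g x ≤ B) {a : ℝ} (ha : 1 ≤ a) :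
    Tendsto (fun j => ∫ x in ball 0 (a * R j) \ ball 0 (R j), g x) atTop (nhds 0) := by
  set F : ℝ → ℝ := fun ρ => ∫ x in ball 0 ρ, g x with hF
  have hmono : Monotone F := fun a b hab => ball_int_mono hg h0 hab
  have hlim := tendsto_atTop_ciSup hmono ⟨B, by rintro _ ⟨ρ, rfl⟩; exact h ρ⟩
  have l1 : Tendsto (fun j => F (a * R j) - F (R j)) atTop (nhds ((⨆ i, F i) - ⨆ i, F i)) :=
    (hlim.comp (hR.const_mul_atTop (by linarith))).sub (hlim.comp hR)
  rw [sub_self] at l1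
  refine l1.congr' ?_
  filter_upwards [hR.eventually_ge_atTop 0] with j hj
  rw [setIntegral_sdiff measurableSet_ball (int_ball hg _) (ball_subset_ball (by nlinarith))]

lemma At_vol_pos : 0 < volume.real (At 2) := by
  have hsub : ball (EuclideanSpace.single (0 : Fin 3) (1.5 : ℝ)) 0.4 ⊆ At 2 := by
    intro x hx
    rw [mem_ball, dist_eq_norm] at hx
    have hn : ‖(EuclideanSpace.single (0 : Fin 3) (1.5 : ℝ))‖ = 1.5 := by
      rw [EuclideanSpace.norm_single]; norm_num
    have h1 := norm_sub_norm_le x (EuclideanSpace.single (0 : Fin 3) (1.5 : ℝ))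
    have h2 := norm_sub_norm_le (EuclideanSpace.single (0 : Fin 3) (1.5 : ℝ)) x
    rw [norm_sub_rev] at h2
    rw [hn] at h1 h2
    rw [mem_At]
    norm_num at *
    constructor <;> linarith
  have hfin : volume (At 2) ≠ ⊤ := ((measure_mono (At_sub le_rfl)).trans_lt measure_ball_lt_top).ne
  exact ENNReal.toReal_pos ((measure_ball_pos volume _ (by norm_num)).trans_le (measure_mono hsub)).ne'
    hfin

lemma thetaBar_sub {θ : E3 → ℝ} (hθ : Continuous θ) {R : ℝ} (hR : 0 < R) (c : ℝ) :
    thetaBar θ R - c = (volume.real (At 2))⁻¹ * ∫ x in At 2, (θ (R • x) - c) := by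
  have hv := At_vol_pos
  have e1 : ∫ x in Ann R, θ x = R ^ 3 * ∫ x in At 2, θ (R • x) := by
    rw [int_scale hR, smul_At hR]; rfl
  have e2 : volume.real (Ann R) = R ^ 3 * volume.real (At 2) := by
    have := int_scale hR (At 2) (fun _ => (1 : ℝ))
    rw [smul_At hR] at this
    simp only [integral_const, MeasurableSet.univ, measureReal_restrict_apply, Set.univ_inter,
      smul_eq_mul, mul_one] at this
    exact this.symm
  have hc : Continuous fun x => θ (R • x) := hθ.comp (continuous_const_smul R)
  rw [thetaBar, setAverage_eq, e1, e2, integral_sub (int_S (At_sub le_rfl) (At_meas 2) hc)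
    (int_S (At_sub le_rfl) (At_meas 2) continuous_const)]
  simp only [integral_const, MeasurableSet.univ, measureReal_restrict_apply, Set.univ_inter,
      smul_eq_mul]
  field_simp

/-- Replacing the annular mean by any constant costs only a factor. -/
lemma mean_shift : ∃ C ≥ 0, ∀ (θ : E3 → ℝ) (R c : ℝ), Continuous θ → 0 < R →
    sn R (At 1.9) (fun x => θ (R • x) - thetaBar θ R) ≤ C * sn R (At 2) (fun x => θ (R • x) - c) := by
  have hv := At_vol_pos
  have hV := one_le_V2
  refine ⟨1 + V2 * ((volume.real (At 2))⁻¹ * V2), by positivity, fun θ R c hθ hR => ?_⟩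
  have hc : Continuous fun x => θ (R • x) - c := (hθ.comp (continuous_const_smul R)).sub continuous_const
  have h2 : At 2 ⊆ ball 0 2 := At_sub le_rfl
  have h19 : At 1.9 ⊆ ball 0 2 := At_sub (by norm_num)
  set d := thetaBar θ R - c with hd
  have e : (fun x => θ (R • x) - thetaBar θ R) = fun x => (θ (R • x) - c) + (-d) := by
    funext x; rw [hd]; ring
  have d1 : |d| ≤ (volume.real (At 2))⁻¹ * (V2 * nr 6 (At 2) fun x => θ (R • x) - c) := by
    rw [hd, thetaBar_sub hθ hR, abs_mul, abs_of_pos (by positivity)]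
    gcongr
    have n1 : |∫ x in At 2, (θ (R • x) - c)| ≤ nr 1 (At 2) fun x => θ (R • x) - c := by
      rw [← Real.norm_eq_abs]
      refine (norm_integral_le_integral_norm _).trans (le_of_eq ?_)
      unfold nr; simp
    exact n1.trans (nr_exp h2 (At_meas 2) hc le_rfl (by norm_num))
  have n2 := nr_add h19 (At_meas 1.9) hc (continuous_const (y := -d)) (p := 6) (by norm_num)
  have n3 := nr_const h19 (p := 6) (by norm_num) (-d)
  have n4 := nr_mono_set h2 (At_meas 2) hc (p := 6) (by norm_num) (At_mono (by norm_num : (1.9 : ℝ) ≤ 2))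
  rw [abs_neg] at n3
  unfold sn
  rw [e]
  have : nr 6 (At 1.9) (fun x => (θ (R • x) - c) + (-d)) ≤
      (1 + V2 * ((volume.real (At 2))⁻¹ * V2)) * nr 6 (At 2) fun x => θ (R • x) - c := by
    calc _ ≤ nr 6 (At 2) (fun x => θ (R • x) - c) + V2 * |d| := by linarith
      _ ≤ nr 6 (At 2) (fun x => θ (R • x) - c) +
          V2 * ((volume.real (At 2))⁻¹ * (V2 * nr 6 (At 2) fun x => θ (R • x) - c)) := by gcongr
      _ = _ := by ring
  calc _ ≤ R ^ (1 / 2 : ℝ) * ((1 + V2 * ((volume.real (At 2))⁻¹ * V2)) *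
        nr 6 (At 2) fun x => θ (R • x) - c) := by gcongr
    _ = _ := by ring

lemma shift_six (a b c : ℝ) : (a - c) ^ 6 ≤ 32 * ((a - b) ^ 6 + (b - c) ^ 6) := by
  have := add_pow_le (abs_nonneg (a - b)) (abs_nonneg (b - c)) 6
  have h2 : |a - c| ^ 6 ≤ (|a - b| + |b - c|) ^ 6 := by gcongr; exact abs_sub_le a b c
  have e : ∀ x : ℝ, |x| ^ 6 = x ^ 6 := fun x => Even.pow_abs (by decide) x
  rw [e] at h2
  rw [e, e] at this
  norm_num at this
  linarith

/-- The means occurring in the bounds accumulate at a constant `c` for which `θ - c` is globally in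
`L^6`. -/
lemma exists_c {θ : E3 → ℝ} (hθ : Continuous θ) {R m : ℕ → ℝ} (hR : Tendsto R atTop atTop) {B : ℝ}
    (h : ∀ᶠ j in atTop, ∫ x in ball 0 (1.6 * R j), (θ x - m j) ^ 6 ≤ B) :
    ∃ c B', ∀ ρ, ∫ x in ball 0 ρ, (θ x - c) ^ 6 ≤ B' := by
  have c6 : ∀ c, Continuous fun x => (θ x - c) ^ 6 := fun c => (hθ.sub continuous_const).pow 6
  have n6 : ∀ c x, 0 ≤ (θ x - c) ^ 6 := fun c x => by positivity
  have small : ∀ ρ, ∀ᶠ j in atTop, ∫ x in ball 0 ρ, (θ x - m j) ^ 6 ≤ B := fun ρ => by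
    filter_upwards [h, hR.eventually_ge_atTop (max ρ 0)] with j h1 h2
    refine (ball_int_mono (c6 _) (n6 _) ?_).trans h1
    have := le_max_left ρ 0
    have := le_max_right ρ 0
    linarith
  have shift : ∀ ρ a b, ∫ x in ball 0 ρ, (θ x - a) ^ 6 ≤
      32 * ((∫ x in ball 0 ρ, (θ x - b) ^ 6) + volume.real (ball (0 : E3) ρ) * (b - a) ^ 6) := by
    intro ρ a b
    have i2 : IntegrableOn (fun _ : E3 => (b - a) ^ 6) (ball 0 ρ) := int_ball continuous_const ρ
    have : ∫ x in ball 0 ρ, (θ x - a) ^ 6 ≤ ∫ x in ball 0 ρ, 32 * ((θ x - b) ^ 6 + (b - a) ^ 6) :=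
      integral_mono (int_ball (c6 a) ρ) (((int_ball (c6 b) ρ).add i2).const_mul 32)
        fun x => shift_six _ _ _
    rw [integral_const_mul, integral_add (int_ball (c6 b) ρ) i2] at this
    simpa using this
  have mb : ∃ L, ∀ᶠ j in atTop, |m j| ≤ L := by
    have hv : 0 < volume.real (ball (0 : E3) 1) :=
      ENNReal.toReal_pos (measure_ball_pos volume _ one_pos).ne' measure_ball_lt_top.ne
    set w := volume.real (ball (0 : E3) 1)
    refine ⟨max 1 (32 * ((∫ x in ball 0 1, (θ x - 0) ^ 6) + B) / w), ?_⟩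
    filter_upwards [small 1] with j hj
    by_cases h1 : |m j| ≤ 1
    · exact h1.trans (le_max_left _ _)
    refine le_trans ?_ (le_max_right _ _)
    push Not at h1
    rw [le_div_iff₀ hv]
    have i2 : IntegrableOn (fun _ : E3 => (m j) ^ 6) (ball 0 1) := int_ball continuous_const 1
    have key : ∫ x in ball (0 : E3) 1, (m j) ^ 6 ≤
        ∫ x in ball 0 1, 32 * ((θ x - 0) ^ 6 + (θ x - m j) ^ 6) := by
      refine integral_mono i2 (((int_ball (c6 0) 1).add (int_ball (c6 (m j)) 1)).const_mul 32)
        fun x => ?_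
      have := shift_six 0 (θ x) (m j)
      have e1 : (0 - m j) ^ 6 = m j ^ 6 := by ring
      have e2 : (0 - θ x) ^ 6 = (θ x - 0) ^ 6 := by ring
      rw [e1, e2] at this
      exact this
    rw [integral_const_mul, integral_add (int_ball (c6 0) 1) (int_ball (c6 _) 1)] at key
    simp only [integral_const, MeasurableSet.univ, measureReal_restrict_apply, Set.univ_inter,
      smul_eq_mul] at key
    have e3 : |m j| ≤ m j ^ 6 := by
      rw [← Even.pow_abs (by decide : Even 6) (m j)]
      exact le_self_pow₀ h1.le (by norm_num)
    calc |m j| * w ≤ m j ^ 6 * w := by gcongr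
      _ = w * m j ^ 6 := mul_comm _ _
      _ ≤ _ := by linarith
  obtain ⟨L, hL⟩ := mb
  obtain ⟨c, -, φ, hφ, hc⟩ := tendsto_subseq_of_frequently_bounded (s := closedBall (0 : ℝ) L)
    isBounded_closedBall (x := m)
    (hL.frequently.mono fun j hj => by simpa using hj)
  refine ⟨c, 32 * (B + 0), fun ρ => ?_⟩
  have lim : Tendsto (fun j => 32 * (B + volume.real (ball (0 : E3) ρ) * (m (φ j) - c) ^ 6)) atTop
      (nhds (32 * (B + volume.real (ball (0 : E3) ρ) * (c - c) ^ 6))) :=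
    ((((hc.sub_const c).pow 6).const_mul _).const_add B).const_mul 32
  simp only [sub_self, ne_eq, OfNat.ofNat_ne_zero, not_false_eq_true, zero_pow, mul_zero] at lim
  refine ge_of_tendsto lim ?_
  filter_upwards [hφ.tendsto_atTop.eventually (small ρ)] with j hj
  refine (shift ρ c (m (φ j))).trans ?_
  gcongr

end TCM

namespace TCM

lemma tendsto_of_pow_six {f : ℕ → ℝ} (h0 : ∀ᶠ j in atTop, 0 ≤ f j)
    (h : Tendsto (fun j => f j ^ 6) atTop (nhds 0)) : Tendsto f atTop (nhds 0) := by
  have h2 := h.rpow_const (p := 1 / 6) (Or.inr (by norm_num))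
  rw [Real.zero_rpow (by norm_num)] at h2
  refine h2.congr' ?_
  filter_upwards [h0] with j hj
  rw [← Real.rpow_natCast, ← Real.rpow_mul hj]
  norm_num

/-- The right-hand side of the energy inequality vanishes in the limit when the scaled `L^6` norms
and the growth quantity of `u` do. -/
lemma rhs_tendsto {p q r α β γ : ℝ} (E : Exps p q r α β γ) {R X V W : ℕ → ℝ}
    (hR : Tendsto R atTop atTop) (hX : Tendsto X atTop (nhds 0)) (hV : Tendsto V atTop (nhds 0))
    (hW : Tendsto W atTop (nhds 0)) (K : ℝ) :
    Tendsto (fun j => K * (X j ^ 2 + X j ^ 3 + V2 ^ 2 * V j ^ 2 + V2 ^ 2 * W j ^ 2 +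
      X j * (V j ^ kap q (2 * (p / (p - 1)))) ^ 2 + X j * (W j ^ kap r (2 * (p / (p - 1)))) ^ 2 +
      R j ^ (2 + ex q β 2 + ex r γ 2) * (V j ^ kap q 2 * W j ^ kap r 2))) atTop (nhds 0) := by
  obtain ⟨m1, m2⟩ := two_pconj E.p3
  have q0 : 0 < q := by linarith [E.q1]
  have r0 : 0 < r := by linarith [E.r1]
  have a := (kap_mem (q := q) (m := 2) q0 (by norm_num)).1
  have b := (kap_mem (q := r) (m := 2) r0 (by norm_num)).1
  have c := (kap_mem (q := q) (m := 2 * (p / (p - 1))) q0 (by linarith)).1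
  have d := (kap_mem (q := r) (m := 2 * (p / (p - 1))) r0 (by linarith)).1
  have hcross : Tendsto (fun j => R j ^ (2 + ex q β 2 + ex r γ 2) *
      (V j ^ kap q 2 * W j ^ kap r 2)) atTop (nhds 0) := by
    have l1 := (hV.rpow_const (p := kap q 2) (Or.inr a)).mul (hW.rpow_const (p := kap r 2) (Or.inr b))
    rcases E.cross.lt_or_eq with he | he
    · have l2 : Tendsto (fun j => R j ^ (2 + ex q β 2 + ex r γ 2)) atTop (nhds 0) := by
        have := (tendsto_rpow_neg_atTop (y := -(2 + ex q β 2 + ex r γ 2)) (by linarith)).comp hR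
        rw [neg_neg] at this
        exact this
      simpa using l2.mul l1
    · have hz : (0 : ℝ) ^ kap q 2 * (0 : ℝ) ^ kap r 2 = 0 := by
        by_cases k1 : kap q 2 = 0
        · by_cases k2 : kap r 2 = 0
          · exact absurd he (E.cross_lt k1 k2).ne
          · rw [Real.zero_rpow k2, mul_zero]
        · rw [Real.zero_rpow k1, zero_mul]
      rw [hz] at l1
      simpa [he] using l1
  have := ((((((hX.pow 2).add (hX.pow 3)).add ((hV.pow 2).const_mul (V2 ^ 2))).add
    ((hW.pow 2).const_mul (V2 ^ 2))).add
    (hX.mul ((hV.rpow_const (p := kap q (2 * (p / (p - 1)))) (Or.inr c)).pow 2))).add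
    (hX.mul ((hW.rpow_const (p := kap r (2 * (p / (p - 1)))) (Or.inr d)).pow 2))).add hcross
  have := this.const_mul K
  simpa using this

lemma const_of_dens {a : Fin 3 ⊕ (Fin 3 ⊕ Unit) → E3 → ℝ} (ha : ∀ m, Smooth (a m))
    (h : ∀ x, dens a x = 0) (m) (x : E3) : a m x = a m 0 := by
  refine is_const_of_fderiv_eq_zero (𝕜 := ℝ) (ha m).diff (fun y => ?_) x 0
  have h1 := h y
  unfold dens at h1
  rw [Finset.sum_eq_zero_iff_of_nonneg fun _ _ => Finset.sum_nonneg fun _ _ => sq_nonneg _] at h1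
  have h2 := h1 m (Finset.mem_univ _)
  rw [Finset.sum_eq_zero_iff_of_nonneg fun _ _ => sq_nonneg _] at h2
  ext w
  rw [fderiv_eq_sum]
  simp only [ContinuousLinearMap.zero_apply]
  refine Finset.sum_eq_zero fun j hj => ?_
  rw [pow_eq_zero_iff two_ne_zero |>.1 (h2 j hj), mul_zero]

lemma const_zero_of_bdd {w : E3} {B : ℝ} (h : ∀ ρ, ∫ _ in ball (0 : E3) ρ, ‖w‖ ^ 6 ≤ B) : w = 0 := by
  by_contra hw
  have hw0 : 0 < ‖w‖ ^ 6 := by have := norm_pos_iff.2 hw; positivity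
  have hv : 0 < volume.real (ball (0 : E3) 1) :=
      ENNReal.toReal_pos (measure_ball_pos volume _ one_pos).ne' measure_ball_lt_top.ne
  set k := volume.real (ball (0 : E3) 1) * ‖w‖ ^ 6 with hk
  have hk0 : 0 < k := by positivity
  obtain ⟨n, hn⟩ := exists_nat_gt (max (B / k) 1)
  have n1 : (1 : ℝ) ≤ n := (le_max_right _ _).trans hn.le
  have hB : B < n * k := by
    rw [← div_lt_iff₀ hk0]; exact (le_max_left _ _).trans_lt hn
  have hh := h n
  have e := int_scale (R := n) (by linarith) (ball 0 1) (fun _ => ‖w‖ ^ 6)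
  rw [smul_ball0 (by linarith), one_mul] at e
  rw [← e] at hh
  simp only [integral_const, MeasurableSet.univ, measureReal_restrict_apply, Set.univ_inter,
      smul_eq_mul, ← hk] at hh
  have : (n : ℝ) * k ≤ n ^ 3 * k := by
    gcongr
    exact le_self_pow₀ n1 (by norm_num)
  linarith

/-- The Liouville theorem under the exponent conditions `Exps`. The uniform `L^6` bounds put `v` and
`θ - c` in `L^6(ℝ³)`, so their norms over the receding annuli vanish in the limit; the energy
inequality then forces the Dirichlet integral to be zero. -/
lemma core {u v : E3 → E3} {pr θ : E3 → ℝ} (hsol : IsTCMSolution u pr v θ)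
    {p q r α β γ : ℝ} (E : Exps p q r α β γ) {Rseq : ℕ → ℝ} (htop : Tendsto Rseq atTop atTop)
    (hX : Tendsto (fun j => Xn u α p (Rseq j)) atTop (nhds 0))
    (hY : ∃ M : ℝ≥0∞, M < ⊤ ∧ ∀ j, Yn v β q (Rseq j) ≤ M)
    (hZ : ∃ M : ℝ≥0∞, M < ⊤ ∧ ∀ j, Zbarn θ γ r (Rseq j) ≤ M) :
    (∀ x : E3, u x = 0) ∧ (∀ x : E3, v x = 0) ∧ ∃ c : ℝ, ∀ x : E3, θ x = c := by
  obtain ⟨MY, hMY, hY⟩ := hY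
  obtain ⟨MZ, hMZ, hZ⟩ := hZ
  have cu := hsol.smooth_u.continuous
  have cv := hsol.smooth_v.continuous
  have cθ := hsol.smooth_θ.continuous
  have hM : 1 ≤ 1 + MY.toReal + MZ.toReal := by
    have a := ENNReal.toReal_nonneg (a := MY)
    have b := ENNReal.toReal_nonneg (a := MZ)
    linarith
  have hX' : Tendsto (fun j => (Xn u α p (Rseq j)).toReal) atTop (nhds 0) := by
    have := (ENNReal.tendsto_toReal ENNReal.zero_ne_top).comp hX
    rw [ENNReal.toReal_zero] at this
    exact this
  have hXfin : ∀ᶠ j in atTop, Xn u α p (Rseq j) < ⊤ := hX.eventually (gt_mem_nhds ENNReal.zero_lt_top)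
  have hR1 := htop.eventually_ge_atTop 1
  have hscal : ∀ᶠ j in atTop, Scal p q r α β γ (1 + MY.toReal + MZ.toReal) (Rseq j)
      (Xn u α p (Rseq j)).toReal (fun x => u (Rseq j • x)) (fun x => pr (Rseq j • x))
      (fun x => v (Rseq j • x)) (fun x => θ (Rseq j • x) - thetaBar θ (Rseq j)) := by
    filter_upwards [hR1, hXfin] with j h1 h2
    exact scal_of hsol (by linarith [E.p3]) E.q1 E.r1 h1 hMY hMZ h2 (hY j) (hZ j)
  obtain ⟨C, hC⟩ := unif_bound E hM
  have hunif : ∀ᶠ j in atTop, (∫ x in ball 0 (1.6 * Rseq j), ‖v x‖ ^ 6 ≤ C ^ 3) ∧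
      ∫ x in ball 0 (1.6 * Rseq j), (θ x - thetaBar θ (Rseq j)) ^ 6 ≤ C ^ 3 := by
    filter_upwards [hscal, hR1, hX'.eventually (ge_mem_nhds zero_lt_one)] with j hs h1 hx
    have hR0 : 0 < Rseq j := by linarith
    have h2 := (hC _ _ _ _ _ _ hs hx).2
    have e1 := sn_scale hR0 (ball 0 1.6) v
    have e2 := sn_scale hR0 (ball 0 1.6) (fun x => θ x - thetaBar θ (Rseq j))
    rw [smul_ball0 hR0] at e1 e2
    have e3 : ∀ x : E3, ‖θ x - thetaBar θ (Rseq j)‖ ^ 6 = (θ x - thetaBar θ (Rseq j)) ^ 6 :=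
      fun x => by rw [Real.norm_eq_abs]; exact Even.pow_abs (by decide) _
    simp_rw [e3] at e2
    rw [← e1, ← e2]
    set a := sn (Rseq j) (ball 0 1.6) (fun x => v (Rseq j • x))
    set b := sn (Rseq j) (ball 0 1.6) (fun x => θ (Rseq j • x) - thetaBar θ (Rseq j))
    have a2 : a ^ 2 ≤ C := by linarith [sq_nonneg b]
    have b2 : b ^ 2 ≤ C := by linarith [sq_nonneg a]
    constructor
    · calc a ^ 6 = (a ^ 2) ^ 3 := by ring
        _ ≤ C ^ 3 := by gcongr
    · calc b ^ 6 = (b ^ 2) ^ 3 := by ring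
        _ ≤ C ^ 3 := by gcongr
  have cv6 : Continuous fun x => ‖v x‖ ^ 6 := cv.norm.pow 6
  have vall : ∀ ρ, ∫ x in ball 0 ρ, ‖v x‖ ^ 6 ≤ C ^ 3 :=
    all_balls cv6 (fun x => by positivity) htop (hunif.mono fun j h => h.1)
  obtain ⟨c, B, hc⟩ := exists_c cθ htop (hunif.mono fun j h => h.2)
  have cθ6 : Continuous fun x => (θ x - c) ^ 6 := (cθ.sub continuous_const).pow 6
  -- the scaled `L^6` norms on annuli vanish in the limit
  have hV : Tendsto (fun j => sn (Rseq j) (At 1.9) (fun x => v (Rseq j • x))) atTop (nhds 0) := by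
    refine tendsto_of_pow_six (htop.eventually_ge_atTop 0 |>.mono fun j hj => sn_nonneg hj _ _) ?_
    refine (shell_tendsto cv6 (fun x => by positivity) htop vall (a := 1.9) (by norm_num)).congr' ?_
    filter_upwards [hR1] with j hj
    rw [sn_scale (by linarith), smul_At (by linarith)]
  have hW' : Tendsto (fun j => sn (Rseq j) (At 2) (fun x => θ (Rseq j • x) - c)) atTop (nhds 0) := by
    refine tendsto_of_pow_six (htop.eventually_ge_atTop 0 |>.mono fun j hj => sn_nonneg hj _ _) ?_
    refine (shell_tendsto cθ6 (fun x => by positivity) htop hc (a := 2) (by norm_num)).congr' ?_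
    filter_upwards [hR1] with j hj
    have := sn_scale (by linarith : 0 < Rseq j) (At 2) (fun x => θ x - c)
    rw [smul_At (by linarith)] at this
    rw [this]
    refine integral_congr_ae (Eventually.of_forall fun x => ?_)
    simp only [Real.norm_eq_abs]
    exact (Even.pow_abs (by decide) _).symm
  have hW : Tendsto (fun j => sn (Rseq j) (At 1.9)
      (fun x => θ (Rseq j • x) - thetaBar θ (Rseq j))) atTop (nhds 0) := by
    obtain ⟨C', hC', H⟩ := mean_shift
    have l := hW'.const_mul C'
    rw [mul_zero] at l
    refine tendsto_of_tendsto_of_tendsto_of_le_of_le' tendsto_const_nhds l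
      (htop.eventually_ge_atTop 0 |>.mono fun j hj => sn_nonneg hj _ _) ?_
    filter_upwards [hR1] with j hj
    exact H θ (Rseq j) c cθ (by linarith)
  -- hence the Dirichlet integral vanishes
  obtain ⟨K, hK, HK⟩ := final_step E hM
  have hlim := rhs_tendsto E htop hX' hV hW K
  have hsm : ∀ m, Smooth (cmp u v θ m) := by
    intro m
    rcases m with i | i | i
    · exact comp_smooth hsol.smooth_u i
    · exact comp_smooth hsol.smooth_v i
    · exact hsol.smooth_θ
  have hdc : Continuous (dens (cmp u v θ)) := Smooth.cont (dens_smooth hsm)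
  have hd0 : ∀ ρ, ∫ x in ball 0 ρ, dens (cmp u v θ) x ≤ 0 := by
    intro ρ
    refine ge_of_tendsto hlim ?_
    filter_upwards [hscal, hR1, htop.eventually_ge_atTop ρ] with j hs h1 h2
    refine le_trans ?_ (HK _ _ _ _ _ _ hs)
    rw [dens_scale u v θ (by linarith)]
    exact ball_int_mono hdc (fun x => dens_nonneg _ x) (by linarith)
  have hdens : ∀ x, dens (cmp u v θ) x = 0 := by
    intro x
    have h1 : ∫ y in ball 0 (‖x‖ + 1), dens (cmp u v θ) y = 0 :=
      le_antisymm (hd0 _) (integral_nonneg fun y => dens_nonneg _ y)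
    rw [integral_eq_zero_iff_of_nonneg (fun y => dens_nonneg _ y) (int_ball hdc _)] at h1
    exact Measure.eqOn_open_of_ae_eq h1 isOpen_ball hdc.continuousOn continuousOn_const
      (by simp : x ∈ ball (0 : E3) (‖x‖ + 1))
  have hcst := const_of_dens hsm hdens
  have uc : ∀ x, u x = u 0 := fun x => by ext i; exact hcst (.inl i) x
  have vc : ∀ x, v x = v 0 := fun x => by ext i; exact hcst (.inr (.inl i)) x
  refine ⟨?_, ?_, θ 0, fun x => hcst (.inr (.inr ())) x⟩
  · have hu : ∀ᶠ j in atTop, nr p (At 2) (fun _ => u 0) ≤ (Xn u α p (Rseq j)).toReal := by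
      filter_upwards [hscal] with j hs
      have := hs.hu
      simp_rw [uc (Rseq j • _)] at this
      refine this.trans (mul_le_of_le_one_right hs.X0 (rpow_le_one_of_nonpos' hs.R1 ?_))
      linarith [E.α_le]
    have hp0 : 0 < p := by linarith [E.p3]
    have h0 : nr p (At 2) (fun _ => u 0) = 0 :=
      le_antisymm (ge_of_tendsto hX' hu) (nr_nonneg _ _ _)
    have h1 := nr_pow (At 2) (fun _ : E3 => u 0) hp0
    rw [h0, Real.zero_rpow hp0.ne'] at h1
    simp only [integral_const, MeasurableSet.univ, measureReal_restrict_apply, Set.univ_inter,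
      smul_eq_mul] at h1
    have h2 := (mul_eq_zero.1 h1.symm).resolve_left At_vol_pos.ne'
    have h3 : u 0 = 0 := by
      rw [Real.rpow_eq_zero (norm_nonneg _) hp0.ne'] at h2
      exact norm_eq_zero.1 h2
    exact fun x => (uc x).trans h3
  · have : v 0 = 0 := const_zero_of_bdd (B := C ^ 3) fun ρ => by
      have := vall ρ
      simp_rw [vc] at this
      exact this
    exact fun x => (vc x).trans this

/-- All nine cases reduce to `Exps`: the conditions on `(α, β)`, on `(α, γ)` and on `(β, γ)` enter
separately. -/
lemma exps_of {p q r α β γ : ℝ} (hp : 3 ≤ p) (hq : 1 ≤ q ∧ q ≤ 6) (hr : 1 ≤ r ∧ r ≤ 6)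
    (hα : α ≤ 3 / p - 2 / 3) (hβ : β ≤ 3 / q - 1 / 2) (hγ : γ ≤ 3 / r - 1 / 2)
    (h1 : (q < 2 * (p / (p - 1)) ∧ α + ((4 * p - 6) * q) / ((6 - q) * p) * β ≤ 1) ∨
      (2 * (p / (p - 1)) ≤ q ∧ α + 2 * β ≤ 3 / p + 6 / q - 2))
    (h2 : (r < 2 * (p / (p - 1)) ∧ α + ((4 * p - 6) * r) / ((6 - r) * p) * γ ≤ 1) ∨
      (2 * (p / (p - 1)) ≤ r ∧ α + 2 * γ ≤ 3 / p + 6 / r - 2))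
    (h3 : ((q < 2 ∧ r < 2) ∧ 2 * q / (6 - q) * β + 2 * r / (6 - r) * γ ≤ 1) ∨
      ((q < 2 ∧ 2 ≤ r) ∧ 2 * q / (6 - q) * β + γ ≤ (6 - r) / (2 * r)) ∨
      ((2 ≤ q ∧ r < 2) ∧ β + 2 * r / (6 - r) * γ ≤ (6 - q) / (2 * q)) ∨
      ((2 ≤ q ∧ 2 ≤ r) ∧ β + γ < 3 / q + 3 / r - 2)) : Exps p q r α β γ := by
  obtain ⟨-, m2⟩ := two_pconj hp
  obtain ⟨c1, c2⟩ := cross_any hq.1 hr.1 h3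
  refine ⟨hp, hq.1, hr.1, hα, ex_two hq.1 hβ, ex_two hr.1 hγ, ?_, ?_, c1, c2⟩
  · rcases h1 with ⟨a, b⟩ | ⟨a, b⟩
    · exact ex_p_lt hp hq.1 a (by linarith) b
    · exact ex_p_ge a b
  · rcases h2 with ⟨a, b⟩ | ⟨a, b⟩
    · exact ex_p_lt hp hr.1 a (by linarith) b
    · exact ex_p_ge a b

end TCM

theorem liouville_tcm_thm1
    (u : E3 → E3) (pr : E3 → ℝ) (v : E3 → E3) (θ : E3 → ℝ)
    (hsol : IsTCMSolution u pr v θ)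
    (p q r α β γ : ℝ)
    (hp : 3 ≤ p ∧ p ≤ 9 / 2) (hq : 1 ≤ q ∧ q ≤ 6) (hr : 1 ≤ r ∧ r ≤ 6)
    (hα : 0 ≤ α ∧ α ≤ 3 / p - 2 / 3) (hβ : 0 ≤ β ∧ β ≤ 3 / q - 1 / 2)
    (hγ : 0 ≤ γ ∧ γ ≤ 3 / r - 1 / 2)
    (Rseq : ℕ → ℝ) (hmono : StrictMono Rseq) (htop : Tendsto Rseq atTop atTop)
    (hX : Tendsto (fun j => Xn u α p (Rseq j)) atTop (nhds 0))
    (hY : ∃ M : ℝ≥0∞, M < ⊤ ∧ ∀ j, Yn v β q (Rseq j) ≤ M)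
    (hZ : ∃ M : ℝ≥0∞, M < ⊤ ∧ ∀ j, Zbarn θ γ r (Rseq j) ≤ M)
    (hA : ((1 ≤ q ∧ q < 2) ∧ (1 ≤ r ∧ r < 2) ∧
      α + ((4 * p - 6) * q) / ((6 - q) * p) * β ≤ 1 ∧
      α + ((4 * p - 6) * r) / ((6 - r) * p) * γ ≤ 1 ∧
      2 * q / (6 - q) * β + 2 * r / (6 - r) * γ ≤ 1) ∨
      ((1 ≤ q ∧ q < 2) ∧ (2 ≤ r ∧ r < 2 * (p / (p - 1))) ∧
      α + ((4 * p - 6) * q) / ((6 - q) * p) * β ≤ 1 ∧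
      α + ((4 * p - 6) * r) / ((6 - r) * p) * γ ≤ 1 ∧
      2 * q / (6 - q) * β + γ ≤ (6 - r) / (2 * r)) ∨
      ((1 ≤ q ∧ q < 2) ∧ (2 * (p / (p - 1)) ≤ r ∧ r ≤ 6) ∧
      α + ((4 * p - 6) * q) / ((6 - q) * p) * β ≤ 1 ∧
      α + 2 * γ ≤ 3 / p + 6 / r - 2 ∧
      2 * q / (6 - q) * β + γ ≤ (6 - r) / (2 * r)) ∨
      ((2 ≤ q ∧ q < 2 * (p / (p - 1))) ∧ (1 ≤ r ∧ r < 2) ∧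
      α + ((4 * p - 6) * q) / ((6 - q) * p) * β ≤ 1 ∧
      α + ((4 * p - 6) * r) / ((6 - r) * p) * γ ≤ 1 ∧
      β + 2 * r / (6 - r) * γ ≤ (6 - q) / (2 * q)) ∨
      ((2 ≤ q ∧ q < 2 * (p / (p - 1))) ∧ (2 ≤ r ∧ r < 2 * (p / (p - 1))) ∧
      α + ((4 * p - 6) * q) / ((6 - q) * p) * β ≤ 1 ∧
      α + ((4 * p - 6) * r) / ((6 - r) * p) * γ ≤ 1 ∧
      β + γ < 3 / q + 3 / r - 2) ∨
      ((2 ≤ q ∧ q < 2 * (p / (p - 1))) ∧ (2 * (p / (p - 1)) ≤ r ∧ r ≤ 6) ∧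
      α + ((4 * p - 6) * q) / ((6 - q) * p) * β ≤ 1 ∧
      α + 2 * γ ≤ 3 / p + 6 / r - 2 ∧
      β + γ < 3 / q + 3 / r - 2) ∨
      ((2 * (p / (p - 1)) ≤ q ∧ q ≤ 6) ∧ (1 ≤ r ∧ r < 2) ∧
      α + 2 * β ≤ 3 / p + 6 / q - 2 ∧
      α + ((4 * p - 6) * r) / ((6 - r) * p) * γ ≤ 1 ∧
      β + 2 * r / (6 - r) * γ ≤ (6 - q) / (2 * q)) ∨
      ((2 * (p / (p - 1)) ≤ q ∧ q ≤ 6) ∧ (2 ≤ r ∧ r < 2 * (p / (p - 1))) ∧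
      α + 2 * β ≤ 3 / p + 6 / q - 2 ∧
      α + ((4 * p - 6) * r) / ((6 - r) * p) * γ ≤ 1 ∧
      β + γ < 3 / q + 3 / r - 2) ∨
      ((2 * (p / (p - 1)) ≤ q ∧ q ≤ 6) ∧ (2 * (p / (p - 1)) ≤ r ∧ r ≤ 6) ∧
      α + 2 * β ≤ 3 / p + 6 / q - 2 ∧
      α + 2 * γ ≤ 3 / p + 6 / r - 2 ∧
      β + γ < 3 / q + 3 / r - 2)) :
    (∀ x : E3, u x = 0) ∧ (∀ x : E3, v x = 0) ∧ ∃ c : ℝ, ∀ x : E3, θ x = c := by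
  have m := TCM.two_pconj hp.1
  refine TCM.core hsol (TCM.exps_of hp.1 hq hr hα.2 hβ.2 hγ.2 ?_ ?_ ?_) htop hX hY hZ
  · rcases hA with h | h | h | h | h | h | h | h | h
    · exact Or.inl ⟨by linarith [h.1.2], h.2.2.1⟩
    · exact Or.inl ⟨by linarith [h.1.2], h.2.2.1⟩
    · exact Or.inl ⟨by linarith [h.1.2], h.2.2.1⟩
    · exact Or.inl ⟨h.1.2, h.2.2.1⟩
    · exact Or.inl ⟨h.1.2, h.2.2.1⟩
    · exact Or.inl ⟨h.1.2, h.2.2.1⟩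
    · exact Or.inr ⟨h.1.1, h.2.2.1⟩
    · exact Or.inr ⟨h.1.1, h.2.2.1⟩
    · exact Or.inr ⟨h.1.1, h.2.2.1⟩
  · rcases hA with h | h | h | h | h | h | h | h | h
    · exact Or.inl ⟨by linarith [h.2.1.2], h.2.2.2.1⟩
    · exact Or.inl ⟨h.2.1.2, h.2.2.2.1⟩
    · exact Or.inr ⟨h.2.1.1, h.2.2.2.1⟩
    · exact Or.inl ⟨by linarith [h.2.1.2], h.2.2.2.1⟩
    · exact Or.inl ⟨h.2.1.2, h.2.2.2.1⟩
    · exact Or.inr ⟨h.2.1.1, h.2.2.2.1⟩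
    · exact Or.inl ⟨by linarith [h.2.1.2], h.2.2.2.1⟩
    · exact Or.inl ⟨h.2.1.2, h.2.2.2.1⟩
    · exact Or.inr ⟨h.2.1.1, h.2.2.2.1⟩
  · rcases hA with h | h | h | h | h | h | h | h | h
    · exact Or.inl ⟨⟨h.1.2, h.2.1.2⟩, h.2.2.2.2⟩
    · exact Or.inr (Or.inl ⟨⟨h.1.2, h.2.1.1⟩, h.2.2.2.2⟩)
    · exact Or.inr (Or.inl ⟨⟨h.1.2, m.1.trans h.2.1.1⟩, h.2.2.2.2⟩)
    · exact Or.inr (Or.inr (Or.inl ⟨⟨h.1.1, h.2.1.2⟩, h.2.2.2.2⟩))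
    · exact Or.inr (Or.inr (Or.inr ⟨⟨h.1.1, h.2.1.1⟩, h.2.2.2.2⟩))
    · exact Or.inr (Or.inr (Or.inr ⟨⟨h.1.1, m.1.trans h.2.1.1⟩, h.2.2.2.2⟩))
    · exact Or.inr (Or.inr (Or.inl ⟨⟨m.1.trans h.1.1, h.2.1.2⟩, h.2.2.2.2⟩))
    · exact Or.inr (Or.inr (Or.inr ⟨⟨m.1.trans h.1.1, h.2.1.1⟩, h.2.2.2.2⟩))
    · exact Or.inr (Or.inr (Or.inr ⟨⟨m.1.trans h.1.1, m.1.trans h.2.1.1⟩, h.2.2.2.2⟩))
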